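/- arXiv:2210.10411 — 8 statements merged into one kernel-verified Lean document; each statement's English description precedes it below -/
import Mathlib

section
/- Let d ≥ 1, let A be a real d×d matrix, and let n ∈ ℝ^d with ‖n‖ = 1. Then the function t ↦ det(I + tA)·‖((I + tA)⁻¹)ᵀ n‖, which is defined for all t in a neighborhood of 0 (where I + tA is invertible), has derivative at t = 0 equal to trace(A) − ⟨A n, n⟩. -/
open MeasureTheory RealInnerProductSpace Matrix

/-!
For a curve `M` of invertible matrices, put `w = M⁻ᵀ n`. Jacobi's formula gives
`(det M)' = det M * tr (M' M⁻¹)`, and differentiating the inverse gives `w' = -(M' M⁻¹)ᵀ w`, so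
`‖w‖' = -⟪M' M⁻¹ w, w⟫ / ‖w‖`. The product rule yields the logarithmic derivative
`tr (M' M⁻¹) - ⟪M' M⁻¹ w, w⟫ / ‖w‖ ^ 2` of `det M * ‖w‖`, which is then evaluated along
`M = 1 + t A` at `t = 0`, where `w = n`.
-/

theorem hasDerivAt_norm_comp {E : Type*} [NormedAddCommGroup E] [InnerProductSpace ℝ E]
    {f : ℝ → E} {f' : E} {x : ℝ} (hf : HasDerivAt f f' x) (hx : f x ≠ 0) :
    HasDerivAt (fun t => ‖f t‖) (⟪f x, f'⟫ / ‖f x‖) x := by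
  have hsqrt := hf.norm_sq.sqrt (by positivity)
  simp only [Real.sqrt_sq (norm_nonneg _)] at hsqrt
  rwa [mul_div_mul_left _ _ two_ne_zero] at hsqrt

theorem hasDerivAt_ringInverse_comp {𝕜 R : Type*} [NontriviallyNormedField 𝕜] [NormedRing R]
    [HasSummableGeomSeries R] [NormedAlgebra 𝕜 R] {f : 𝕜 → R} {f' : R} {x : 𝕜}
    (hf : HasDerivAt f f' x) (hx : IsUnit (f x)) :
    HasDerivAt (fun t => Ring.inverse (f t))
      (-(Ring.inverse (f x) * f' * Ring.inverse (f x))) x := by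
  obtain ⟨u, hu⟩ := hx
  simpa [← hu, Function.comp_def] using
    (hasFDerivAt_ringInverse (𝕜 := 𝕜) u).comp_hasDerivAt_of_eq x hf hu

theorem hasDerivAt_matrix_iff {𝕜 m n : Type*} [NontriviallyNormedField 𝕜] [Finite m] [Finite n]
    {M : 𝕜 → Matrix m n 𝕜} {M' : Matrix m n 𝕜} {x : 𝕜} :
    HasDerivAt M M' x ↔ ∀ i j, HasDerivAt (fun t => M t i j) (M' i j) x := by
  have := Fintype.ofFinite m
  have := Fintype.ofFinite n
  exact hasDerivAt_pi.trans (forall_congr' fun _ => hasDerivAt_pi)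

section Matrix

variable {ι : Type*} [Fintype ι] [DecidableEq ι]

theorem sum_det_updateRow_eq_trace_mul_adjugate {R : Type*} [CommRing R] (A B : Matrix ι ι R) :
    ∑ i, (A.updateRow i (B i)).det = (B * A.adjugate).trace := by
  simp only [trace, diag, ← cramer_transpose_apply, cramer_eq_adjugate_mulVec,
    ← adjugate_transpose, mulVec_transpose, mul_apply_eq_vecMul]

-- The topology of this norm is definitionally the entrywise topology used in the statements.
attribute [local instance] Matrix.linftyOpNormedRing Matrix.linftyOpNormedAlgebra

section Derivatives

variable {𝕜 : Type*} [NontriviallyNormedField 𝕜] {M : 𝕜 → Matrix ι ι 𝕜} {M' : Matrix ι ι 𝕜} {x : 𝕜}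

theorem hasDerivAt_matrix_det (hM : HasDerivAt M M' x) :
    HasDerivAt (fun t => (M t).det) (M' * (M x).adjugate).trace x := by
  let detRows : ContinuousMultilinearMap 𝕜 (fun _ : ι => ι → 𝕜) 𝕜 :=
    ⟨(detRowAlternating : (ι → 𝕜) [⋀^ι]→ₗ[𝕜] 𝕜).toMultilinearMap, continuous_id.matrix_det⟩
  rw [← sum_det_updateRow_eq_trace_mul_adjugate]
  exact ((detRows.hasFDerivAt (M x)).comp_hasDerivAt x hM).congr_deriv
    (detRows.linearDeriv_apply _ _)

theorem hasDerivAt_matrix_det_of_isUnit (hM : HasDerivAt M M' x) (hx : IsUnit (M x)) :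
    HasDerivAt (fun t => (M t).det) ((M x).det * (M' * (M x)⁻¹).trace) x := by
  have hadj : (M x).adjugate = (M x).det • (M x)⁻¹ := by
    rw [inv_def, smul_smul, Ring.mul_inverse_cancel _ ((isUnit_iff_isUnit_det _).1 hx), one_smul]
  simpa [hadj] using hasDerivAt_matrix_det hM

theorem hasDerivAt_matrix_inv [CompleteSpace 𝕜] (hM : HasDerivAt M M' x) (hx : IsUnit (M x)) :
    HasDerivAt (fun t => (M t)⁻¹) (-((M x)⁻¹ * M' * (M x)⁻¹)) x := by
  have : @CompleteSpace (Matrix ι ι 𝕜) PseudoMetricSpace.toUniformSpace :=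
    FiniteDimensional.complete 𝕜 _
  simp only [nonsing_inv_eq_ringInverse]
  exact hasDerivAt_ringInverse_comp hM hx

end Derivatives

theorem inner_toEuclideanLin_transpose (A : Matrix ι ι ℝ) (v w : EuclideanSpace ℝ ι) :
    ⟪v, toEuclideanLin Aᵀ w⟫ = ⟪toEuclideanLin A v, w⟫ := by
  rw [← conjTranspose_eq_transpose_of_trivial, toEuclideanLin_conjTranspose_eq_adjoint,
    LinearMap.adjoint_inner_right]

/-- The vector `M⁻ᵀ n`, which is normal to the image under `M` of the hyperplane with normal `n`.
It is not normalised, and is `0` by convention when `M` is singular. -/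
noncomputable def pushNormal (M : Matrix ι ι ℝ) (n : EuclideanSpace ℝ ι) : EuclideanSpace ℝ ι :=
  toEuclideanLin M⁻¹ᵀ n

/-- The factor `det M * ‖M⁻ᵀ n‖` by which an invertible `M` scales area on the hyperplane with unit
normal `n` (Nanson's formula), signed by the orientation behaviour of `M`. -/
noncomputable def surfaceJacobian (M : Matrix ι ι ℝ) (n : EuclideanSpace ℝ ι) : ℝ :=
  M.det * ‖pushNormal M n‖

theorem pushNormal_one (n : EuclideanSpace ℝ ι) : pushNormal 1 n = n := by
  simp [pushNormal]

theorem surfaceJacobian_one (n : EuclideanSpace ℝ ι) :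
    surfaceJacobian (1 : Matrix ι ι ℝ) n = ‖n‖ := by
  simp [surfaceJacobian, pushNormal_one]

theorem toEuclideanLin_transpose_pushNormal {M : Matrix ι ι ℝ} (hM : IsUnit M)
    (n : EuclideanSpace ℝ ι) : toEuclideanLin Mᵀ (pushNormal M n) = n := by
  have hinv : Mᵀ * M⁻¹ᵀ = 1 := by
    rw [← transpose_mul, nonsing_inv_mul _ ((isUnit_iff_isUnit_det _).1 hM), transpose_one]
  simp [pushNormal, toLpLin_apply, mulVec_mulVec, hinv]

theorem pushNormal_ne_zero {M : Matrix ι ι ℝ} (hM : IsUnit M) {n : EuclideanSpace ℝ ι}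
    (hn : n ≠ 0) : pushNormal M n ≠ 0 := by
  intro hzero
  apply hn
  rw [← toEuclideanLin_transpose_pushNormal hM n, hzero, map_zero]

variable {M : ℝ → Matrix ι ι ℝ} {M' : Matrix ι ι ℝ} {x : ℝ}

theorem hasDerivAt_pushNormal (hM : HasDerivAt M M' x) (hx : IsUnit (M x))
    (n : EuclideanSpace ℝ ι) :
    HasDerivAt (fun t => pushNormal (M t) n)
      (-toEuclideanLin (M' * (M x)⁻¹)ᵀ (pushNormal (M x) n)) x := by
  let L : Matrix ι ι ℝ →ₗ[ℝ] EuclideanSpace ℝ ι :=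
    LinearMap.applyₗ n ∘ₗ toEuclideanLin.toLinearMap ∘ₗ (transposeLinearEquiv ι ι ℝ ℝ).toLinearMap
  have hL : HasDerivAt (fun t => L (M t)⁻¹) (L (-((M x)⁻¹ * M' * (M x)⁻¹))) x :=
    L.toContinuousLinearMap.hasFDerivAt.comp_hasDerivAt x (hasDerivAt_matrix_inv hM hx)
  refine hL.congr_deriv ?_
  simp [L, pushNormal, toLpLin_apply, mulVec_mulVec, Matrix.mul_assoc]

theorem stmt_0_general (hM : HasDerivAt M M' x) (hx : IsUnit (M x))
    {n : EuclideanSpace ℝ ι} (hn : n ≠ 0) :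
    HasDerivAt (fun t => surfaceJacobian (M t) n)
      (surfaceJacobian (M x) n * ((M' * (M x)⁻¹).trace -
        ⟪toEuclideanLin (M' * (M x)⁻¹) (pushNormal (M x) n), pushNormal (M x) n⟫ /
          ‖pushNormal (M x) n‖ ^ 2)) x := by
  have hw : pushNormal (M x) n ≠ 0 := pushNormal_ne_zero hx hn
  have hnorm := hasDerivAt_norm_comp (hasDerivAt_pushNormal hM hx n) hw
  rw [inner_neg_right, inner_toEuclideanLin_transpose] at hnorm
  refine ((hasDerivAt_matrix_det_of_isUnit hM hx).mul hnorm).congr_deriv ?_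
  have hw' : ‖pushNormal (M x) n‖ ≠ 0 := norm_ne_zero_iff.2 hw
  rw [surfaceJacobian]
  field_simp
  ring

end Matrix

/-- The derivative at `t = 0` of `t ↦ det(I + tA) * ‖((I + tA)⁻¹)ᵀ n‖` for a unit
vector `n` equals `trace A - ⟨A n, n⟩` (formula (4.5) of the paper). -/
theorem stmt_0 (d : ℕ) (hd : 1 ≤ d) (A : Matrix (Fin d) (Fin d) ℝ)
    (n : EuclideanSpace ℝ (Fin d)) (hn : ‖n‖ = 1) :
    HasDerivAt
      (fun t : ℝ =>
        (1 + t • A).det *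
          ‖(EuclideanSpace.equiv (Fin d) ℝ).symm
              (((1 + t • A)⁻¹)ᵀ.mulVec (EuclideanSpace.equiv (Fin d) ℝ n))‖)
      (A.trace -
        ⟪(EuclideanSpace.equiv (Fin d) ℝ).symm
            (A.mulVec (EuclideanSpace.equiv (Fin d) ℝ n)), n⟫)
      0 := by
  have hline : HasDerivAt (fun t : ℝ => 1 + t • A) A 0 := hasDerivAt_matrix_iff.2 fun i j => by
    simpa using ((hasDerivAt_id (0 : ℝ)).mul_const (A i j)).const_add ((1 : Matrix _ _ ℝ) i j)
  have hn0 : n ≠ 0 := norm_ne_zero_iff.1 (hn ▸ one_ne_zero)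
  have hderiv := stmt_0_general hline (by simp) hn0
  simp only [zero_smul, add_zero, inv_one, mul_one, surfaceJacobian_one, pushNormal_one, hn,
    one_pow, div_one, one_mul] at hderiv
  exact hderiv
end

section
/- Let Ω ⊂ ℝ^d be a bounded measurable set, let V : ℝ^d → ℝ^d be continuously differentiable with bounded derivative (hence Lipschitz), and let f : ℝ^d → ℝ be continuously differentiable and bounded with bounded gradient. For t ∈ ℝ define T_t : ℝ^d → ℝ^d by T_t(x) = x + t·V(x). Then the function t ↦ ∫_{T_t(Ω)} f(x) dx (integral with respect to Lebesgue measure over the image T_t(Ω)) has derivative at t = 0 equal to ∫_Ω ( ⟨V(x), ∇f(x)⟩ + f(x)·div V(x) ) dx, where div V(x) denotes the trace of the Jacobian matrix of V at x. -/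
open MeasureTheory RealInnerProductSpace

/-!
For small `t` the map `T_t = id + tV` is injective on the compact set `closure Ω` and its Jacobian
determinant is positive there, so the change of variables formula moves the integral back to `Ω`,
with integrand `det (id + t DV) • f ∘ T_t`. This is a `C¹` function of `t` and of the `1`-jet
`(x, V x, DV x)`, and the jet depends continuously on `x`; differentiation under the integral sign
is therefore justified by compactness alone. At `t = 0` the determinant contributes
`div V` and the composition contributes `Df(V)`.
-/

open Set
open scoped Topology NNReal

section Determinant

variable {𝕜 E : Type*} [NontriviallyNormedField 𝕜] [NormedAddCommGroup E] [NormedSpace 𝕜 E]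

theorem hasDerivAt_det_id_add_smul [FiniteDimensional 𝕜 E] (A : E →L[𝕜] E) :
    HasDerivAt (fun t : 𝕜 => (ContinuousLinearMap.id 𝕜 E + t • A).det)
      (LinearMap.trace 𝕜 E A.toLinearMap) 0 := by
  let b := Module.finBasis 𝕜 E
  let M := LinearMap.toMatrix b b A.toLinearMap
  let p : Polynomial 𝕜 := (1 + (Polynomial.X : Polynomial 𝕜) • M.map Polynomial.C).det
  have det_eq_eval (t : 𝕜) : (ContinuousLinearMap.id 𝕜 E + t • A).det = p.eval t := by
    have matrix_eq : LinearMap.toMatrix b b (ContinuousLinearMap.id 𝕜 E + t • A).toLinearMap =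
        (Polynomial.evalRingHom t).mapMatrix
          (1 + (Polynomial.X : Polynomial 𝕜) • M.map Polynomial.C) := by
      ext i j
      simp [M, Matrix.one_apply, apply_ite, mul_comm t]
    rw [ContinuousLinearMap.det, ← LinearMap.det_toMatrix b, matrix_eq, ← RingHom.map_det,
      Polynomial.coe_evalRingHom]
  have trace_eq : LinearMap.trace 𝕜 E A.toLinearMap = p.derivative.eval 0 := by
    rw [LinearMap.trace_eq_matrix_trace 𝕜 b, Matrix.derivative_det_one_add_X_smul]
  simpa only [det_eq_eval, trace_eq] using p.hasDerivAt 0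

theorem contDiff_continuousLinearMap_det [CompleteSpace 𝕜] [FiniteDimensional 𝕜 E]
    {n : WithTop ℕ∞} : ContDiff 𝕜 n (fun A : E →L[𝕜] E => A.det) := by
  let b := Module.finBasis 𝕜 E
  have contDiff_entry (i j) : ContDiff 𝕜 n
      (fun A : E →L[𝕜] E => LinearMap.toMatrix b b A.toLinearMap i j) := by
    simp only [LinearMap.toMatrix_apply]
    exact (LinearMap.toContinuousLinearMap (b.coord i)).contDiff.comp
      (contDiff_id.clm_apply contDiff_const)
  simp only [ContinuousLinearMap.det, ← LinearMap.det_toMatrix b, Matrix.det_apply']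
  exact ContDiff.sum fun σ _ => contDiff_const.mul (contDiff_prod fun i _ => contDiff_entry _ _)

end Determinant

section ParametricIntegral

variable {𝕜 X P F : Type*} [RCLike 𝕜] [NormedAddCommGroup P] [NormedSpace 𝕜 P]
  [NormedAddCommGroup F] [NormedSpace ℝ F] [NormedSpace 𝕜 F]
  [TopologicalSpace X] [T2Space X] [MeasurableSpace X] [OpensMeasurableSpace X]
  [SecondCountableTopologyEither X F] {μ : Measure X} [IsFiniteMeasureOnCompacts μ]

theorem hasDerivAt_setIntegral_of_continuous_deriv {φ φ' : 𝕜 → X → F} {s K : Set X}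
    (hs : MeasurableSet s) (hK : IsCompact K) (hsK : s ⊆ K) (hφ : ∀ t, Continuous (φ t))
    (hφ' : Continuous φ'.uncurry) (hderiv : ∀ t x, HasDerivAt (φ · x) (φ' t x) t) (t₀ : 𝕜) :
    HasDerivAt (fun t => ∫ x in s, φ t x ∂μ) (∫ x in s, φ' t₀ x ∂μ) t₀ := by
  obtain ⟨I, hI, hIt₀⟩ := exists_compact_mem_nhds t₀
  obtain ⟨C, hC⟩ := (hI.prod hK).exists_bound_of_continuousOn hφ'.continuousOn
  have integrable_φ : IntegrableOn (φ t₀) s μ :=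
    ((hφ t₀).continuousOn.integrableOn_compact hK).mono_set hsK
  have φ'_le_C : ∀ᵐ x ∂μ.restrict s, ∀ t ∈ I, ‖φ' t x‖ ≤ C :=
    ae_restrict_of_forall_mem hs fun x hx t ht => hC (t, x) ⟨ht, hsK hx⟩
  have μs_ne_top : μ s ≠ ⊤ := measure_ne_top_of_subset hsK hK.measure_ne_top
  exact (hasDerivAt_integral_of_dominated_loc_of_deriv_le hIt₀
    (.of_forall fun t => (hφ t).aestronglyMeasurable) integrable_φ
    (hφ'.comp (Continuous.prodMk_right t₀)).aestronglyMeasurable φ'_le_C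
    (integrableOn_const μs_ne_top) (.of_forall fun x t _ => hderiv t x)).2

theorem hasDerivAt_setIntegral_of_contDiff {G : 𝕜 × P → F} (hG : ContDiff 𝕜 1 G)
    {g : X → P} (hg : Continuous g) {s K : Set X} (hs : MeasurableSet s) (hK : IsCompact K)
    (hsK : s ⊆ K) (t₀ : 𝕜) :
    HasDerivAt (fun t => ∫ x in s, G (t, g x) ∂μ)
      (∫ x in s, deriv (fun t => G (t, g x)) t₀ ∂μ) t₀ := by
  have hderiv (t : 𝕜) (x : X) :
      HasDerivAt (fun t => G (t, g x)) (fderiv 𝕜 G (t, g x) (1, 0)) t :=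
    ((hG.differentiable one_ne_zero) (t, g x)).hasFDerivAt.comp_hasDerivAt t
      ((hasDerivAt_id t).prodMk (hasDerivAt_const t (g x)))
  have continuous_jet : Continuous fun p : 𝕜 × X => (p.1, g p.2) := by fun_prop
  simp only [(hderiv t₀ _).deriv]
  exact hasDerivAt_setIntegral_of_continuous_deriv hs hK hsK
    (fun t => hG.continuous.comp (by fun_prop))
    (((hG.continuous_fderiv one_ne_zero).comp continuous_jet).clm_apply continuous_const) hderiv t₀

end ParametricIntegral

theorem injOn_id_add_of_lipschitzOnWith {E : Type*} [NormedAddCommGroup E] {W : E → E} {s : Set E}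
    {K : ℝ≥0} (hW : LipschitzOnWith K W s) (hK : K < 1) : InjOn (fun x => x + W x) s :=
  have antilipschitz :=
    (AntilipschitzWith.subtype_coe s).add_lipschitzWith hW.to_restrict (by simpa using hK)
  injOn_iff_injective.2 antilipschitz.injective

section Perturbation

variable {E F : Type*} [NormedAddCommGroup E] [NormedSpace ℝ E]
  [NormedAddCommGroup F] [NormedSpace ℝ F]

/-- The perturbation of identity `T_t = id + tV` generated by the velocity field `V`. -/
def perturbation (V : E → E) (t : ℝ) : E → E := fun x => x + t • V x

/-- The divergence of a vector field, as the basis-free trace of its derivative; it is `0` at points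
where the field is not differentiable. -/
noncomputable def divergence (V : E → E) (x : E) : ℝ :=
  LinearMap.trace ℝ E (fderiv ℝ V x).toLinearMap

/-- The integrand `det (id + tA) • f (x + tv)` of `∫_{T_t(Ω)} f` after the change of variables,
as a function of the time `t` and the `1`-jet `(x, v, A) = (x, V x, DV x)` of the velocity field.
Treating the jet as an independent variable makes it as smooth as `f`, although `DV` is only
continuous. -/
noncomputable def pulledBackIntegrand (f : E → F) (p : ℝ × E × E × (E →L[ℝ] E)) : F :=
  (ContinuousLinearMap.id ℝ E + p.1 • p.2.2.2).det • f (p.2.1 + p.1 • p.2.2.1)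

theorem hasFDerivAt_perturbation {V : E → E} {x : E} (hV : DifferentiableAt ℝ V x) (t : ℝ) :
    HasFDerivAt (perturbation V t) (ContinuousLinearMap.id ℝ E + t • fderiv ℝ V x) x :=
  (hasFDerivAt_id x).add (hV.hasFDerivAt.const_smul t)

theorem eventually_injOn_perturbation {V : E → E} {K : Set E} (hK : IsCompact K)
    (hV : LocallyLipschitzOn K V) : ∀ᶠ t in 𝓝 0, InjOn (perturbation V t) K := by
  obtain ⟨L, hL⟩ := hV.exists_lipschitzOnWith_of_compact hK
  have small : ∀ᶠ t : ℝ in 𝓝 0, ‖t‖₊ * L < 1 :=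
    (by fun_prop : Continuous fun t : ℝ => ‖t‖₊ * L).continuousAt.eventually_lt_const (by simp)
  filter_upwards [small] with t ht
  exact injOn_id_add_of_lipschitzOnWith ((lipschitzWith_smul t).comp_lipschitzOnWith hL) ht

theorem eventually_forall_mem_det_id_add_smul_pos {X : Type*} [TopologicalSpace X] {K : Set X}
    (hK : IsCompact K) {A : X → E →L[ℝ] E} (hA : Continuous A) :
    ∀ᶠ t : ℝ in 𝓝 0, ∀ x ∈ K, 0 < (ContinuousLinearMap.id ℝ E + t • A x).det := by
  have det_continuous :
      Continuous fun p : ℝ × X => (ContinuousLinearMap.id ℝ E + p.1 • A p.2).det :=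
    ContinuousLinearMap.continuous_det.comp (by fun_prop)
  exact hK.eventually_forall_of_forall_eventually fun x _ =>
    det_continuous.continuousAt.eventually_const_lt (by simp [ContinuousLinearMap.det])

variable [FiniteDimensional ℝ E]

theorem contDiff_pulledBackIntegrand {n : WithTop ℕ∞} {f : E → F} (hf : ContDiff ℝ n f) :
    ContDiff ℝ n (pulledBackIntegrand f) :=
  (contDiff_continuousLinearMap_det.comp (by fun_prop)).smul (hf.comp (by fun_prop))

theorem hasDerivAt_pulledBackIntegrand {f : E → F} {x : E} (hf : DifferentiableAt ℝ f x)
    (v : E) (A : E →L[ℝ] E) :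
    HasDerivAt (fun t => pulledBackIntegrand f (t, x, v, A))
      (fderiv ℝ f x v + LinearMap.trace ℝ E A.toLinearMap • f x) 0 := by
  have hline : HasDerivAt (fun t : ℝ => f (x + t • v)) (fderiv ℝ f x v) 0 :=
    hf.hasFDerivAt.hasLineDerivAt v
  simpa [pulledBackIntegrand, ContinuousLinearMap.det]
    using (hasDerivAt_det_id_add_smul A).fun_smul hline

variable [MeasurableSpace E] [BorelSpace E] (μ : Measure E) [μ.IsAddHaarMeasure]
  {Ω : Set E} {V : E → E}

theorem eventually_setIntegral_perturbation_image_eq (hΩm : MeasurableSet Ω)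
    (hΩb : Bornology.IsBounded Ω) (hV : ContDiff ℝ 1 V) (f : E → F) :
    ∀ᶠ t in 𝓝 0, ∫ x in perturbation V t '' Ω, f x ∂μ =
      ∫ x in Ω, pulledBackIntegrand f (t, x, V x, fderiv ℝ V x) ∂μ := by
  have hΩc : IsCompact (closure Ω) := hΩb.isCompact_closure
  filter_upwards [eventually_injOn_perturbation hΩc hV.locallyLipschitz.locallyLipschitzOn,
    eventually_forall_mem_det_id_add_smul_pos hΩc (hV.continuous_fderiv one_ne_zero)]
    with t hinj hdet
  rw [integral_image_eq_integral_abs_det_fderiv_smul μ hΩm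
    (fun x _ => (hasFDerivAt_perturbation (hV.differentiable one_ne_zero x) t).hasFDerivWithinAt)
    (hinj.mono subset_closure)]
  refine setIntegral_congr_fun hΩm fun x hx => ?_
  simp only [abs_of_pos (hdet x (subset_closure hx)), pulledBackIntegrand, perturbation]

theorem stmt_1_general [CompleteSpace F] (hΩm : MeasurableSet Ω) (hΩb : Bornology.IsBounded Ω)
    (hV : ContDiff ℝ 1 V) {f : E → F} (hf : ContDiff ℝ 1 f) :
    HasDerivAt (fun t => ∫ x in perturbation V t '' Ω, f x ∂μ)
      (∫ x in Ω, (fderiv ℝ f x (V x) + divergence V x • f x) ∂μ) 0 := by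
  have continuous_jet : Continuous fun x => (x, V x, fderiv ℝ V x) :=
    continuous_id.prodMk (hV.continuous.prodMk (hV.continuous_fderiv one_ne_zero))
  have hderiv := hasDerivAt_setIntegral_of_contDiff (μ := μ) (contDiff_pulledBackIntegrand hf)
    continuous_jet hΩm hΩb.isCompact_closure subset_closure 0
  simp only [(hasDerivAt_pulledBackIntegrand (hf.differentiable one_ne_zero _) _ _).deriv] at hderiv
  exact hderiv.congr_of_eventuallyEq (eventually_setIntegral_perturbation_image_eq μ hΩm hΩb hV f)

end Perturbation

/-- Formula (4.6a) for a fixed integrand: the derivative at `t = 0` of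
`t ↦ ∫_{T_t(Ω)} f`, where `T_t = id + tV`, equals `∫_Ω (⟨V, ∇f⟩ + f · div V)`. -/
theorem stmt_1 (d : ℕ) (Ω : Set (EuclideanSpace ℝ (Fin d)))
    (hΩm : MeasurableSet Ω) (hΩb : Bornology.IsBounded Ω)
    (V : EuclideanSpace ℝ (Fin d) → EuclideanSpace ℝ (Fin d))
    (hV : ContDiff ℝ 1 V) (CV : ℝ) (hVb : ∀ x, ‖fderiv ℝ V x‖ ≤ CV)
    (f : EuclideanSpace ℝ (Fin d) → ℝ) (hf : ContDiff ℝ 1 f)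
    (Cf : ℝ) (hfb : ∀ x, |f x| ≤ Cf)
    (Cg : ℝ) (hgb : ∀ x, ‖gradient f x‖ ≤ Cg) :
    HasDerivAt (fun t : ℝ => ∫ x in (fun x => x + t • V x) '' Ω, f x)
      (∫ x in Ω,
        (⟪V x, gradient f x⟫ +
          f x * LinearMap.trace ℝ (EuclideanSpace ℝ (Fin d)) (fderiv ℝ V x).toLinearMap))
      0 := by
  simp only [inner_gradient_right, conj_trivial, mul_comm (f _)]
  exact stmt_1_general volume hΩm hΩb hV hf
end

section
/- Let L > 0 and let γ : ℝ → ℝ³ be twice continuously differentiable, L-periodic, injective on [0,L), with γ′(s) ≠ 0 for all s, and set Γ = γ([0,L)). Let Ω ⊆ ℝ³ be an open set containing Γ and let f : ℝ³ → ℝ be continuous and integrable on Ω. For r > 0 let Γ_r = { x ∈ ℝ³ : dist(x,Γ) ≤ r }. Then, as r → 0⁺, ( ∫_{Ω \ Γ_r} f dx − ∫_Ω f dx ) / (π r²) converges to −∫₀ᴸ f(γ(s)) ‖γ′(s)‖ ds. -/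
open MeasureTheory Topology Filter

/-!
Let `K` be an arc, `Kᵣ` its closed `r`-neighbourhood and `ω(r)` the volume of the `r`-ball of
codimension one (`π r²` in space). For `r → 0⁺` the integral of `f` over `Kᵣ` is `ω(r)` times the
line integral of `f`, up to `o(ω(r))`; no tubular coordinates are needed to see this.

*Upper bound.* Moving an `r`-ball by a vector `v` uncovers at most the volume `ω(r) ‖v‖`, so a chain
of balls following the curve shows `vol Kᵣ ≤ o(ω(r)) + ω(r) · length`.

*Lower bound.* Slicing orthogonally to a chord shows that a connected set containing `x` and `y` has
an `r`-neighbourhood of volume at least `ω(r) ‖x - y‖`. The lower limit of `(∫_{Kᵣ} g) / ω(r)`, for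
`g ≥ 0`, is superadditive on disjoint arcs. As a function of the endpoint of an initial arc it is
therefore monotone, with derivative at least `g(γ(s)) ‖γ'(s)‖` almost everywhere, and a monotone
function increases by at least the integral of its derivative.

Applying the lower bound to `g` and to `M - g`, where `M` bounds `g` near the curve, and the upper
bound to their sum, forces equality.
-/

open Metric Module Set
open scoped ENNReal

/-- The volume of a closed ball of radius `r` in `n`-dimensional Euclidean space; for `n = 2` this
is the path parameter `π r²` of the dilation. -/
noncomputable def ballVolume (n : ℕ) (r : ℝ) : ℝ≥0∞ :=
  volume (closedBall (0 : EuclideanSpace ℝ (Fin n)) r)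

theorem ballVolume_two {r : ℝ} (hr : 0 ≤ r) :
    ballVolume 2 r = ENNReal.ofReal (Real.pi * r ^ 2) := by
  rw [ballVolume, EuclideanSpace.volume_closedBall_fin_two, ENNReal.ofReal_mul Real.pi_nonneg,
    ENNReal.ofReal_pow hr, mul_comm]

theorem ballVolume_eq_mul (n : ℕ) {r : ℝ} (hr : 0 ≤ r) :
    ballVolume n r = ENNReal.ofReal (r ^ n) * ballVolume n 1 := by
  simpa [ballVolume] using Measure.addHaar_closedBall' volume (0 : EuclideanSpace ℝ (Fin n)) hr

theorem ballVolume_ne_top (n : ℕ) (r : ℝ) : ballVolume n r ≠ ∞ :=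
  measure_closedBall_lt_top.ne

theorem ballVolume_ne_zero (n : ℕ) {r : ℝ} (hr : 0 < r) : ballVolume n r ≠ 0 :=
  (measure_closedBall_pos volume _ hr).ne'

theorem tendsto_ballVolume (n : ℕ) {r : ℝ} (hr : 0 < r) :
    Tendsto (ballVolume n) (𝓝 r) (𝓝 (ballVolume n r)) := by
  rw [ballVolume_eq_mul n hr.le]
  refine Tendsto.congr' ?_ (ENNReal.Tendsto.mul_const
    (ENNReal.tendsto_ofReal ((continuous_pow n).tendsto r)) (.inr (ballVolume_ne_top n 1)))
  filter_upwards [lt_mem_nhds hr] with s hs using (ballVolume_eq_mul n hs.le).symm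

theorem tendsto_ballVolume_succ_div_ballVolume (n : ℕ) :
    Tendsto (fun r ↦ ballVolume (n + 1) r / ballVolume n r) (𝓝[>] 0) (𝓝 0) := by
  have hlin : Tendsto (fun r ↦ ENNReal.ofReal r * (ballVolume (n + 1) 1 / ballVolume n 1))
      (𝓝[>] 0) (𝓝 0) := by
    have hfin : ballVolume (n + 1) 1 / ballVolume n 1 ≠ ∞ :=
      ENNReal.div_ne_top (ballVolume_ne_top _ 1) (ballVolume_ne_zero n one_pos)
    simpa using ENNReal.Tendsto.mul_const
      ((ENNReal.continuous_ofReal.tendsto 0).mono_left nhdsWithin_le_nhds) (.inr hfin)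
  refine hlin.congr' ?_
  filter_upwards [self_mem_nhdsWithin] with r (hr : 0 < r)
  rw [ballVolume_eq_mul (n + 1) hr.le, ballVolume_eq_mul n hr.le, pow_succ,
    ENNReal.ofReal_mul (by positivity), mul_assoc, ENNReal.mul_div_mul_left _ _
      (by simp [hr]) ENNReal.ofReal_ne_top, mul_div_assoc]

/-! ### Volume of the tube around an arc -/

theorem volume_setOf_sub_sq_le_and_lt_sq_le {d : ℝ} (hd : 0 ≤ d) (c : ℝ) :
    volume {t : ℝ | (t - d) ^ 2 ≤ c ∧ c < t ^ 2} ≤ ENNReal.ofReal d := by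
  have hsub : {t : ℝ | (t - d) ^ 2 ≤ c ∧ c < t ^ 2} ⊆ Ioc (√c) (√c + d) := by
    rintro t ⟨hle, hlt⟩
    have hc := Real.abs_le_sqrt hle
    have ht := Real.sqrt_lt_sqrt ((sq_nonneg _).trans hle) hlt
    rw [Real.sqrt_sq_eq_abs] at ht
    rw [abs_le] at hc
    rcases lt_abs.1 ht with ht | ht
    · exact ⟨ht, by linarith⟩
    · linarith
  calc volume {t : ℝ | (t - d) ^ 2 ≤ c ∧ c < t ^ 2}
      ≤ volume (Ioc (√c) (√c + d)) := measure_mono hsub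
    _ = ENNReal.ofReal d := by rw [Real.volume_Ioc, add_sub_cancel_left]

theorem exists_monotone_image_Icc_subset_biUnion_closedBall {X : Type*} [PseudoMetricSpace X]
    {γ : ℝ → X} {a b δ : ℝ} (hab : a ≤ b) (hγ : ContinuousOn γ (Icc a b)) (hδ : 0 < δ) :
    ∃ (N : ℕ) (u : ℕ → ℝ), Monotone u ∧ (∀ i, u i ∈ Icc a b) ∧
      γ '' Icc a b ⊆ ⋃ i ∈ Finset.range (N + 1), closedBall (γ (u i)) δ := by
  obtain ⟨u, hua, hu, ⟨N, hN⟩, hosc⟩ := exists_monotone_Icc_subset_open_cover_Icc hab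
    (c := fun y : X ↦ (fun s : Icc a b ↦ γ s) ⁻¹' ball y (δ / 2))
    (fun y ↦ isOpen_ball.preimage hγ.domRestrict)
    (fun s _ ↦ mem_iUnion.2 ⟨γ s, mem_ball_self (half_pos hδ)⟩)
  refine ⟨N, fun i ↦ u i, hu, fun i ↦ (u i).2, ?_⟩
  rintro _ ⟨s, hs, rfl⟩
  have hex : ∃ i, s ≤ u i := ⟨N, by simpa only [hN N le_rfl] using hs.2⟩
  have hle : Nat.find hex ≤ N := Nat.find_min' hex (by simpa only [hN N le_rfl] using hs.2)
  refine mem_iUnion₂.2 ⟨Nat.find hex, Finset.mem_range_succ_iff.2 hle, ?_⟩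
  rcases hi : Nat.find hex with _ | i
  · have hsa : s = u 0 := (hi ▸ Nat.find_spec hex).antisymm (by simpa only [hua] using hs.1)
    rw [hsa]
    exact mem_closedBall_self hδ.le
  · have hlt : u i < s := not_le.1 (Nat.find_min hex (by simp [hi]))
    have hle' : s ≤ u (i + 1) := hi ▸ Nat.find_spec hex
    obtain ⟨y, hy⟩ := hosc i
    have hs' : dist (γ s) y < δ / 2 := @hy ⟨s, hs⟩ ⟨hlt.le, hle'⟩
    have hu' : dist (γ (u (i + 1))) y < δ / 2 := hy ⟨hu i.le_succ, le_rfl⟩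
    exact mem_closedBall.2 ((dist_triangle_right _ _ y).trans (by linarith))

section Tube

variable {E : Type*} [NormedAddCommGroup E] [InnerProductSpace ℝ E] [FiniteDimensional ℝ E]
  {n : ℕ}

theorem exists_linearIsometryEquiv_apply_eq (hE : finrank ℝ E = n + 1) (v : E) :
    ∃ Φ : E ≃ₗᵢ[ℝ] WithLp 2 (ℝ × EuclideanSpace ℝ (Fin n)), Φ v = WithLp.toLp 2 (‖v‖, 0) := by
  have hdim : finrank ℝ E = finrank ℝ (WithLp 2 (ℝ × EuclideanSpace ℝ (Fin n))) := by
    rw [LinearEquiv.finrank_eq (WithLp.linearEquiv 2 ℝ (ℝ × EuclideanSpace ℝ (Fin n)))]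
    simp [hE, add_comm]
  let Ψ := (stdOrthonormalBasis ℝ E).equiv
    (stdOrthonormalBasis ℝ (WithLp 2 (ℝ × EuclideanSpace ℝ (Fin n)))) (finCongr hdim)
  have hnorm : ‖Ψ v‖ = ‖WithLp.toLp 2 (‖v‖, (0 : EuclideanSpace ℝ (Fin n)))‖ := by
    simp
  exact ⟨Ψ.trans (Submodule.reflection _), Submodule.reflection_sub hnorm⟩

variable [MeasurableSpace E] [BorelSpace E]

theorem volume_closedBall_eq_ballVolume (hE : finrank ℝ E = n) (x : E) (r : ℝ) :
    volume (closedBall x r) = ballVolume n r := by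
  let Φ := (stdOrthonormalBasis ℝ E).repr.trans
    (LinearIsometryEquiv.piLpCongrLeft 2 ℝ ℝ (finCongr hE))
  rw [Measure.addHaar_closedBall_center, ballVolume,
    ← Φ.measurePreserving.measure_preimage measurableSet_closedBall.nullMeasurableSet]
  simp

theorem exists_measurePreserving_coordinates (hE : finrank ℝ E = n + 1) (y z : E) :
    ∃ τ : ℝ × EuclideanSpace ℝ (Fin n) ≃ₜ E, MeasurePreserving τ ∧
      (∀ p q, dist (τ p) (τ q) ^ 2 = (p.1 - q.1) ^ 2 + dist p.2 q.2 ^ 2) ∧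
      τ 0 = y ∧ τ (dist y z, 0) = z := by
  obtain ⟨Φ, hΦ⟩ := exists_linearIsometryEquiv_apply_eq hE (z - y)
  let τ := ((WithLp.homeomorphProd 2 ℝ (EuclideanSpace ℝ (Fin n))).symm.trans
    Φ.symm.toHomeomorph).trans (Homeomorph.addLeft y)
  have hτ : ∀ p, τ p = y + Φ.symm (WithLp.toLp 2 p) := fun p ↦ rfl
  refine ⟨τ, ?_, fun p q ↦ ?_, ?_, ?_⟩
  · exact (measurePreserving_add_left volume y).comp
      (Φ.symm.measurePreserving.comp (WithLp.volume_preserving_toLp _ _))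
  · rw [hτ, hτ, dist_add_left, LinearIsometryEquiv.dist_map, WithLp.prod_dist_eq_of_L2,
      Real.sq_sqrt (by positivity), Real.dist_eq, sq_abs,
      WithLp.toLp_fst, WithLp.toLp_fst, WithLp.toLp_snd, WithLp.toLp_snd]
  · simp [hτ]
  · rw [hτ, dist_comm, dist_eq_norm, ← hΦ, LinearIsometryEquiv.symm_apply_apply,
      add_sub_cancel]

theorem ballVolume_mul_edist_le_volume_cthickening (hE : finrank ℝ E = n + 1) {K : Set E}
    (hK : IsPreconnected K) {x y : E} (hx : x ∈ K) (hy : y ∈ K) (r : ℝ) :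
    ballVolume n r * edist x y ≤ volume (cthickening r K) := by
  obtain ⟨τ, hτ, hdist, hτx, hτy⟩ := exists_measurePreserving_coordinates hE x y
  have hx' : (τ.symm x).1 = 0 := by rw [τ.symm_apply_eq.2 hτx.symm, Prod.fst_zero]
  have hy' : (τ.symm y).1 = dist x y := by rw [τ.symm_apply_eq.2 hτy.symm]
  have hslice : ∀ t ∈ Icc 0 (dist x y),
      ballVolume n r ≤ volume (Prod.mk t ⁻¹' (τ ⁻¹' cthickening r K)) := by
    intro t ht
    obtain ⟨z, hz, rfl⟩ : t ∈ (fun z ↦ (τ.symm z).1) '' K :=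
      hK.intermediate_value hx hy (by fun_prop) (by rwa [hx', hy'])
    rw [← volume_closedBall_eq_ballVolume finrank_euclideanSpace_fin (τ.symm z).2 r]
    refine measure_mono fun w hw ↦ mem_cthickening_of_dist_le _ z r K hz (le_of_eq_of_le ?_ hw)
    rw [← sq_eq_sq₀ dist_nonneg dist_nonneg, ← τ.apply_symm_apply z, hdist]
    simp
  calc ballVolume n r * edist x y
      = ∫⁻ _ in Icc 0 (dist x y), ballVolume n r := by
        rw [setLIntegral_const, Real.volume_Icc, sub_zero, edist_dist]
    _ ≤ ∫⁻ t in Icc 0 (dist x y), volume (Prod.mk t ⁻¹' (τ ⁻¹' cthickening r K)) :=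
        setLIntegral_mono' measurableSet_Icc hslice
    _ ≤ ∫⁻ t, volume (Prod.mk t ⁻¹' (τ ⁻¹' cthickening r K)) := setLIntegral_le_lintegral _ _
    _ = volume (cthickening r K) := by
        have hmeas := isClosed_cthickening.measurableSet (s := cthickening r K)
        rw [← hτ.measure_preimage hmeas.nullMeasurableSet, Measure.volume_eq_prod,
          Measure.prod_apply (hτ.measurable hmeas)]

-- On a line parallel to `z - y`, the two balls cut out intervals of the same length, one the
-- translate of the other by `dist y z`.
theorem volume_closedBall_diff_closedBall_le (hE : finrank ℝ E = n + 1) (y z : E) (r : ℝ) :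
    volume (closedBall z r \ closedBall y r) ≤ ballVolume n r * edist y z := by
  rcases lt_or_ge r 0 with hr | hr
  · simp [closedBall_eq_empty.2 hr]
  obtain ⟨τ, hτ, hdist, hτy, hτz⟩ := exists_measurePreserving_coordinates hE y z
  have hy : ∀ t w, dist (τ (t, w)) y ^ 2 = t ^ 2 + ‖w‖ ^ 2 := fun t w ↦ by simp [← hτy, hdist]
  have hz : ∀ t w, dist (τ (t, w)) z ^ 2 = (t - dist y z) ^ 2 + ‖w‖ ^ 2 := fun t w ↦ by
    nth_rw 1 [← hτz, hdist, dist_zero_right]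
  have hslice : ∀ w, volume ((fun t ↦ (t, w)) ⁻¹' (τ ⁻¹' (closedBall z r \ closedBall y r))) ≤
      (closedBall 0 r).indicator (fun _ ↦ edist y z) w := by
    intro w
    have hset : (fun t ↦ (t, w)) ⁻¹' (τ ⁻¹' (closedBall z r \ closedBall y r)) =
        {t | (t - dist y z) ^ 2 ≤ r ^ 2 - ‖w‖ ^ 2 ∧ r ^ 2 - ‖w‖ ^ 2 < t ^ 2} := by
      ext t
      simp [← sq_le_sq₀ dist_nonneg hr, hy, hz, le_sub_iff_add_le, sub_lt_iff_lt_add]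
    rw [hset]
    by_cases hw : ‖w‖ ≤ r
    · rw [indicator_of_mem (by simpa using hw), edist_dist]
      exact volume_setOf_sub_sq_le_and_lt_sq_le dist_nonneg _
    · have hneg : r ^ 2 - ‖w‖ ^ 2 < 0 := by nlinarith
      have hempty : {t | (t - dist y z) ^ 2 ≤ r ^ 2 - ‖w‖ ^ 2 ∧ r ^ 2 - ‖w‖ ^ 2 < t ^ 2} = ∅ :=
        eq_empty_of_forall_notMem fun t ht ↦ (ht.1.trans_lt hneg).not_ge (sq_nonneg _)
      simp [hempty]
  calc volume (closedBall z r \ closedBall y r)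
      = ∫⁻ w, volume ((fun t ↦ (t, w)) ⁻¹' (τ ⁻¹' (closedBall z r \ closedBall y r))) := by
        have hmeas : MeasurableSet (closedBall z r \ closedBall y r) :=
          measurableSet_closedBall.diff measurableSet_closedBall
        rw [← hτ.measure_preimage hmeas.nullMeasurableSet, Measure.volume_eq_prod,
          Measure.prod_apply_symm (hτ.measurable hmeas)]
    _ ≤ ∫⁻ w, (closedBall (0 : EuclideanSpace ℝ (Fin n)) r).indicator
          (fun _ ↦ edist y z) w := lintegral_mono hslice
    _ = ballVolume n r * edist y z := by
        rw [lintegral_indicator_const measurableSet_closedBall, mul_comm, ballVolume]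

theorem volume_biUnion_closedBall_le (hE : finrank ℝ E = n + 1) (x : ℕ → E) (r : ℝ) (N : ℕ) :
    volume (⋃ i ∈ Finset.range (N + 1), closedBall (x i) r) ≤
      ballVolume (n + 1) r + ballVolume n r * ∑ i ∈ Finset.range N, edist (x i) (x (i + 1)) := by
  induction N with
  | zero => simp [volume_closedBall_eq_ballVolume hE]
  | succ N ih =>
    set U := ⋃ i ∈ Finset.range (N + 1), closedBall (x i) r
    have hN : closedBall (x N) r ⊆ U :=
      subset_biUnion_of_mem (u := fun i ↦ closedBall (x i) r) (Finset.self_mem_range_succ N)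
    have hU : ⋃ i ∈ Finset.range (N + 1 + 1), closedBall (x i) r =
        (closedBall (x (N + 1)) r \ U) ∪ U := by
      rw [Finset.range_add_one, Finset.set_biUnion_insert, sdiff_union_self]
    calc volume (⋃ i ∈ Finset.range (N + 1 + 1), closedBall (x i) r)
        ≤ volume (closedBall (x (N + 1)) r \ U) + volume U := hU ▸ measure_union_le _ _
      _ ≤ ballVolume n r * edist (x N) (x (N + 1)) +
          (ballVolume (n + 1) r + ballVolume n r * ∑ i ∈ Finset.range N, edist (x i) (x (i + 1))) :=
        add_le_add ((measure_mono (sdiff_subset_sdiff_right hN)).trans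
          (volume_closedBall_diff_closedBall_le hE _ _ r)) ih
      _ = _ := by rw [Finset.sum_range_succ]; ring

theorem volume_cthickening_image_Icc_le (hE : finrank ℝ E = n + 1) {γ : ℝ → E} {a b : ℝ}
    (hab : a ≤ b) (hγ : ContinuousOn γ (Icc a b)) {r : ℝ} (hr : 0 < r) :
    volume (cthickening r (γ '' Icc a b)) ≤
      ballVolume (n + 1) r + ballVolume n r * eVariationOn γ (Icc a b) := by
  have happrox : ∀ δ > 0, volume (cthickening r (γ '' Icc a b)) ≤
      ballVolume (n + 1) (r + δ) + ballVolume n (r + δ) * eVariationOn γ (Icc a b) := by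
    intro δ hδ
    obtain ⟨N, u, hu, hmem, hcover⟩ :=
      exists_monotone_image_Icc_subset_biUnion_closedBall hab hγ hδ
    have hsub : cthickening r (γ '' Icc a b) ⊆
        ⋃ i ∈ Finset.range (N + 1), closedBall (γ (u i)) (r + δ) := by
      rw [(isCompact_Icc.image_of_continuousOn hγ).cthickening_eq_biUnion_closedBall hr.le]
      refine iUnion₂_subset fun y hy z hz ↦ ?_
      obtain ⟨i, hi, hyi⟩ := mem_iUnion₂.1 (hcover hy)
      exact mem_iUnion₂.2 ⟨i, hi, (dist_triangle z y _).trans (add_le_add hz hyi)⟩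
    calc volume (cthickening r (γ '' Icc a b))
        ≤ volume (⋃ i ∈ Finset.range (N + 1), closedBall (γ (u i)) (r + δ)) := measure_mono hsub
      _ ≤ ballVolume (n + 1) (r + δ) +
          ballVolume n (r + δ) * ∑ i ∈ Finset.range N, edist (γ (u i)) (γ (u (i + 1))) :=
        volume_biUnion_closedBall_le hE _ _ N
      _ ≤ ballVolume (n + 1) (r + δ) + ballVolume n (r + δ) * eVariationOn γ (Icc a b) := by
        gcongr
        simpa only [edist_comm] using eVariationOn.sum_le (f := γ) (n := N) hu hmem
  have hadd : Tendsto (fun δ ↦ r + δ) (𝓝[>] 0) (𝓝 r) :=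
    tendsto_nhdsWithin_of_tendsto_nhds (by simpa using (continuous_const_add r).tendsto 0)
  have hlim := ((tendsto_ballVolume (n + 1) hr).comp hadd).add
    (ENNReal.Tendsto.mul_const (b := eVariationOn γ (Icc a b)) ((tendsto_ballVolume n hr).comp hadd)
      (.inl (ballVolume_ne_zero n hr)))
  exact ge_of_tendsto hlim (eventually_mem_nhdsWithin.mono happrox)

end Tube

/-! ### Length of a curve as the integral of its speed -/

theorem lintegral_enorm_deriv_le_of_monotoneOn {a b : ℝ} {G : ℝ → ℝ} (hab : a ≤ b)
    (hG : MonotoneOn G (Icc a b)) :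
    ∫⁻ s in Icc a b, ‖deriv G s‖ₑ ≤ ENNReal.ofReal (G b - G a) := by
  obtain ⟨H, hlim, hmeas, hle⟩ := hG.exists_tendsto_deriv_liminf_lintegral_enorm_le hab
  exact (lintegral_enorm_le_liminf_of_tendsto hlim (fun i ↦ (hmeas i).aemeasurable.enorm)).trans hle

section Speed

variable {F : Type*} [NormedAddCommGroup F] [NormedSpace ℝ F] {γ : ℝ → F} {a b : ℝ}

theorem mul_norm_deriv_le_deriv {G : ℝ → ℝ} {c u : ℝ} (hγ : DifferentiableAt ℝ γ u)
    (hG : DifferentiableAt ℝ G u) (h : ∀ᶠ v in 𝓝[>] u, c * ‖γ v - γ u‖ ≤ G v - G u) :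
    c * ‖deriv γ u‖ ≤ deriv G u := by
  refine le_of_tendsto_of_tendsto
    ((hγ.hasDerivAt.tendsto_slope.mono_left (nhdsGT_le_nhdsNE u)).norm.const_mul c)
    (hG.hasDerivAt.tendsto_slope.mono_left (nhdsGT_le_nhdsNE u)) ?_
  filter_upwards [h, self_mem_nhdsWithin] with v hv (huv : u < v)
  have hpos : 0 < v - u := sub_pos.2 huv
  rw [slope_def_module, slope_def_field, norm_smul, norm_inv, Real.norm_of_nonneg hpos.le,
    mul_left_comm, inv_mul_eq_div]
  gcongr

theorem absolutelyContinuousOnInterval_clm_comp (φ : F →L[ℝ] ℝ)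
    (hγ : AbsolutelyContinuousOnInterval γ a b) :
    AbsolutelyContinuousOnInterval (fun s ↦ φ (γ s)) a b := by
  refine squeeze_zero (fun _ ↦ Finset.sum_nonneg fun _ _ ↦ dist_nonneg) (fun I ↦ ?_)
    (by simpa only [mul_zero] using Tendsto.const_mul ‖φ‖ hγ)
  rw [Finset.mul_sum]
  exact Finset.sum_le_sum fun i _ ↦ φ.dist_le_opNorm _ _

variable [FiniteDimensional ℝ F]

theorem lintegral_enorm_deriv_le_eVariationOn (hab : a ≤ b)
    (hγ : BoundedVariationOn γ (Icc a b)) :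
    ∫⁻ s in Icc a b, ‖deriv γ s‖ₑ ≤ eVariationOn γ (Icc a b) := by
  have hloc := hγ.locallyBoundedVariationOn
  have ha : a ∈ Icc a b := left_mem_Icc.2 hab
  let V := variationOnFromTo γ (Icc a b) a
  have hV : MonotoneOn V (Icc a b) := variationOnFromTo.monotoneOn hloc ha
  have hspeed : ∀ᵐ s, s ∈ Ioo a b → ‖deriv γ s‖ₑ ≤ ‖deriv V s‖ₑ := by
    filter_upwards [hV.ae_differentiableWithinAt_of_mem, hloc.ae_differentiableWithinAt_of_mem]
      with s hVs hγs hs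
    have hs' := Ioo_subset_Icc_self hs
    have hnhds := Icc_mem_nhds hs.1 hs.2
    have hincr : ∀ᶠ t in 𝓝[>] s, 1 * ‖γ t - γ s‖ ≤ V t - V s := by
      filter_upwards [Ioo_mem_nhdsGT hs.2] with t ht
      have ht' : t ∈ Icc a b := ⟨hs.1.le.trans ht.1.le, ht.2.le⟩
      have hVst : V t - V s = (eVariationOn γ (Icc a b ∩ Icc s t)).toReal := by
        rw [← variationOnFromTo.eq_of_le _ _ ht.1.le, sub_eq_iff_eq_add',
          variationOnFromTo.add hloc ha hs' ht']
      rw [one_mul, ← dist_eq_norm, hVst, dist_edist]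
      exact ENNReal.toReal_mono (hloc s t hs' ht')
        (eVariationOn.edist_le _ ⟨ht', ht.1.le, le_rfl⟩ ⟨hs', le_rfl, ht.1.le⟩)
    rw [enorm_le_iff_norm_le]
    simpa only [one_mul] using (mul_norm_deriv_le_deriv ((hγs hs').differentiableAt hnhds)
      ((hVs hs').differentiableAt hnhds) hincr).trans (Real.le_norm_self _)
  calc ∫⁻ s in Icc a b, ‖deriv γ s‖ₑ
      = ∫⁻ s in Ioo a b, ‖deriv γ s‖ₑ := setLIntegral_congr Ioo_ae_eq_Icc.symm
    _ ≤ ∫⁻ s in Ioo a b, ‖deriv V s‖ₑ := setLIntegral_mono_ae' measurableSet_Ioo hspeed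
    _ ≤ ∫⁻ s in Icc a b, ‖deriv V s‖ₑ := lintegral_mono_set Ioo_subset_Icc_self
    _ ≤ ENNReal.ofReal (V b - V a) := lintegral_enorm_deriv_le_of_monotoneOn hab hV
    _ = eVariationOn γ (Icc a b) := by
        simp only [V]
        rw [variationOnFromTo.self, sub_zero, variationOnFromTo.eq_of_le γ _ hab, inter_self,
          ENNReal.ofReal_toReal hγ]

theorem enorm_sub_le_lintegral_enorm_deriv (hab : a ≤ b)
    (hγ : AbsolutelyContinuousOnInterval γ a b) :
    ‖γ b - γ a‖ₑ ≤ ∫⁻ s in Ioc a b, ‖deriv γ s‖ₑ := by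
  obtain ⟨φ, hφ, hφγ⟩ := exists_dual_vector'' ℝ (γ b - γ a)
  have hderiv : ∀ᵐ s, s ∈ Ioc a b → ‖deriv (fun s ↦ φ (γ s)) s‖ₑ ≤ ‖deriv γ s‖ₑ := by
    filter_upwards [hγ.boundedVariationOn.ae_differentiableAt_of_mem_uIcc] with s hs hsab
    have hγs := hs (Ioc_subset_Icc_self.trans Icc_subset_uIcc hsab)
    have hφγs : HasDerivAt (fun s ↦ φ (γ s)) (φ (deriv γ s)) s :=
      φ.hasFDerivAt.comp_hasDerivAt s hγs.hasDerivAt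
    rw [hφγs.deriv, enorm_le_iff_norm_le]
    exact (φ.le_of_opNorm_le hφ _).trans_eq (one_mul _)
  calc ‖γ b - γ a‖ₑ = ‖φ (γ b) - φ (γ a)‖ₑ := by
        rw [← map_sub, hφγ, RCLike.ofReal_real_eq_id, id, enorm_norm]
    _ = ‖∫ s in Ioc a b, deriv (fun s ↦ φ (γ s)) s‖ₑ := by
        rw [← intervalIntegral.integral_of_le hab,
          (absolutelyContinuousOnInterval_clm_comp φ hγ).integral_deriv_eq_sub]
    _ ≤ ∫⁻ s in Ioc a b, ‖deriv (fun s ↦ φ (γ s)) s‖ₑ := enorm_integral_le_lintegral_enorm _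
    _ ≤ ∫⁻ s in Ioc a b, ‖deriv γ s‖ₑ := setLIntegral_mono_ae' measurableSet_Ioc hderiv

theorem eVariationOn_Icc_le_lintegral_enorm_deriv
    (hγ : AbsolutelyContinuousOnInterval γ a b) :
    eVariationOn γ (Icc a b) ≤ ∫⁻ s in Icc a b, ‖deriv γ s‖ₑ := by
  refine iSup_le fun ⟨N, u, hu, hmem⟩ ↦ ?_
  have hsub : ∀ i, uIcc (u i) (u (i + 1)) ⊆ uIcc a b := fun i ↦
    uIcc_subset_uIcc (Icc_subset_uIcc (hmem i)) (Icc_subset_uIcc (hmem (i + 1)))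
  have hdisj : Pairwise (Function.onFun Disjoint fun i ↦ Ioc (u i) (u (i + 1))) :=
    hu.pairwise_disjoint_on_Ioc_succ
  calc ∑ i ∈ Finset.range N, edist (γ (u (i + 1))) (γ (u i))
      ≤ ∑ i ∈ Finset.range N, ∫⁻ s in Ioc (u i) (u (i + 1)), ‖deriv γ s‖ₑ :=
        Finset.sum_le_sum fun i _ ↦ edist_eq_enorm_sub (γ (u (i + 1))) _ ▸
          enorm_sub_le_lintegral_enorm_deriv (hu i.le_succ) (hγ.mono (hsub i))
    _ = ∫⁻ s in ⋃ i ∈ Finset.range N, Ioc (u i) (u (i + 1)), ‖deriv γ s‖ₑ :=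
        (lintegral_biUnion_finset (fun _ _ _ _ hij ↦ hdisj hij)
          (fun _ _ ↦ measurableSet_Ioc) _).symm
    _ ≤ ∫⁻ s in Icc a b, ‖deriv γ s‖ₑ :=
        lintegral_mono_set <| iUnion₂_subset fun i _ ↦
          Ioc_subset_Icc_self.trans (Icc_subset_Icc (hmem i).1 (hmem (i + 1)).2)

theorem integrableOn_mul_norm_deriv {f : F → ℝ} (hab : a ≤ b)
    (hγ : AbsolutelyContinuousOnInterval γ a b) (hf : ContinuousOn f (γ '' Icc a b)) :
    IntegrableOn (fun s ↦ f (γ s) * ‖deriv γ s‖) (Icc a b) := by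
  have hγc : ContinuousOn γ (Icc a b) := hγ.continuousOn.mono Icc_subset_uIcc
  have hγbv : BoundedVariationOn γ (Icc a b) := hγ.boundedVariationOn.mono Icc_subset_uIcc
  have hderiv : IntegrableOn (deriv γ) (Icc a b) :=
    ⟨(stronglyMeasurable_deriv γ).aestronglyMeasurable,
      (lintegral_enorm_deriv_le_eVariationOn hab hγbv).trans_lt hγbv.lt_top⟩
  exact IntegrableOn.continuousOn_mul (hf.comp hγc (mapsTo_image γ _)) hderiv.norm isCompact_Icc

end Speed

/-! ### Weighted Minkowski content of an arc -/

theorem liminf_add_liminf_le_liminf_add {ι : Type*} (l : Filter ι) (u v : ι → ℝ≥0∞) :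
    liminf u l + liminf v l ≤ liminf (fun i ↦ u i + v i) l := by
  rw [liminf_eq_iSup_iInf (u := u), liminf_eq_iSup_iInf (u := v)]
  refine ENNReal.biSup_add_biSup_le' ⟨univ, univ_mem⟩ ⟨univ, univ_mem⟩ fun s hs t ht ↦ ?_
  refine le_liminf_of_le (by isBoundedDefault) ?_
  filter_upwards [hs, ht] with i his hit
  exact add_le_add (iInf₂_le i his) (iInf₂_le i hit)

theorem limsup_add_liminf_le_limsup_add {ι : Type*} (l : Filter ι) [l.NeBot] (u v : ι → ℝ≥0∞) :
    limsup u l + liminf v l ≤ limsup (fun i ↦ u i + v i) l := by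
  rw [limsup_eq_iInf_iSup (u := fun i ↦ u i + v i), liminf_eq_iSup_iInf,
    ENNReal.add_biSup' ⟨univ, univ_mem⟩]
  refine le_iInf₂ fun s hs ↦ iSup₂_le fun t ht ↦ ?_
  have hst := inter_mem hs ht
  calc limsup u l + ⨅ i ∈ t, v i
      ≤ (⨆ i ∈ s ∩ t, u i) + ⨅ i ∈ t, v i := by
        gcongr
        rw [limsup_eq_iInf_iSup]
        exact iInf₂_le _ hst
    _ ≤ ⨆ i ∈ s, u i + v i := by
        rw [ENNReal.biSup_add' (Filter.nonempty_of_mem hst)]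
        exact iSup₂_le fun i hi ↦
          (add_le_add_right (iInf₂_le i hi.2) _).trans (le_iSup₂_of_le i hi.1 le_rfl)

theorem tendsto_of_le_liminf_of_limsup_add_le {ι : Type*} {l : Filter ι} [l.NeBot]
    {u v : ι → ℝ≥0∞} {a b : ℝ≥0∞} (hb : b ≠ ∞) (hu : a ≤ liminf u l) (hv : b ≤ liminf v l)
    (huv : limsup (fun i ↦ u i + v i) l ≤ a + b) : Tendsto u l (𝓝 a) := by
  refine tendsto_of_le_liminf_of_limsup_le hu ((ENNReal.add_le_add_iff_right hb).1 ?_)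
  calc limsup u l + b ≤ limsup u l + liminf v l := by gcongr
    _ ≤ limsup (fun i ↦ u i + v i) l := limsup_add_liminf_le_limsup_add l u v
    _ ≤ a + b := huv

section Content

variable {E : Type*} [NormedAddCommGroup E] [InnerProductSpace ℝ E] [FiniteDimensional ℝ E]
  [MeasurableSpace E] [BorelSpace E] {n : ℕ} {γ : ℝ → E} {a b : ℝ} {g : E → ℝ≥0∞}

/-- The lower one-dimensional Minkowski content of `K` weighted by the density `g`, in an ambient
space of dimension `n + 1`: the integral of `g` over the closed `r`-neighbourhood of `K` is
normalised by the volume of an `r`-ball in the `n` directions normal to a curve. -/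
noncomputable def lowerMinkowskiContent (n : ℕ) (g : E → ℝ≥0∞) (K : Set E) : ℝ≥0∞ :=
  liminf (fun r ↦ (∫⁻ x in cthickening r K, g x) / ballVolume n r) (𝓝[>] 0)

theorem lowerMinkowskiContent_mono (n : ℕ) (g : E → ℝ≥0∞) {K₁ K₂ : Set E} (h : K₁ ⊆ K₂) :
    lowerMinkowskiContent n g K₁ ≤ lowerMinkowskiContent n g K₂ :=
  liminf_le_liminf (.of_forall fun r ↦
    ENNReal.div_le_div_right (lintegral_mono_set (cthickening_subset_of_subset r h)) _)

theorem lowerMinkowskiContent_add_le_union (n : ℕ) (g : E → ℝ≥0∞) {K₁ K₂ : Set E}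
    (hK₁ : IsCompact K₁) (hK₂ : IsClosed K₂) (h : Disjoint K₁ K₂) :
    lowerMinkowskiContent n g K₁ + lowerMinkowskiContent n g K₂ ≤
      lowerMinkowskiContent n g (K₁ ∪ K₂) := by
  refine (liminf_add_liminf_le_liminf_add _ _ _).trans (liminf_le_liminf ?_)
  obtain ⟨δ, hδ, hdisj⟩ := h.exists_cthickenings hK₁ hK₂
  filter_upwards [Ioc_mem_nhdsGT hδ] with r hr
  have hdisj' := hdisj.mono (cthickening_mono hr.2 K₁) (cthickening_mono hr.2 K₂)
  rw [cthickening_union, lintegral_union isClosed_cthickening.measurableSet hdisj',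
    ENNReal.add_div]

theorem mul_edist_le_lowerMinkowskiContent (hE : finrank ℝ E = n + 1) {K : Set E}
    (hK : IsCompact K) (hKc : IsPreconnected K) {c : ℝ≥0∞} (hg : ∀ᶠ x in 𝓝ˢ K, c ≤ g x)
    {x y : E} (hx : x ∈ K) (hy : y ∈ K) :
    c * edist x y ≤ lowerMinkowskiContent n g K := by
  obtain ⟨U, hU, hKU, hgU⟩ := eventually_nhdsSet_iff_exists.1 hg
  obtain ⟨δ, hδ, hδU⟩ := hK.exists_cthickening_subset_open hU hKU
  refine le_liminf_of_le (by isBoundedDefault) ?_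
  filter_upwards [Ioc_mem_nhdsGT hδ] with r hr
  rw [ENNReal.le_div_iff_mul_le (.inl (ballVolume_ne_zero n hr.1)) (.inl (ballVolume_ne_top n r))]
  calc c * edist x y * ballVolume n r
      = c * (ballVolume n r * edist x y) := by ring
    _ ≤ c * volume (cthickening r K) := by
        gcongr
        exact ballVolume_mul_edist_le_volume_cthickening hE hKc hx hy r
    _ = ∫⁻ _ in cthickening r K, c := (setLIntegral_const _ _).symm
    _ ≤ ∫⁻ x in cthickening r K, g x :=
        setLIntegral_mono' isClosed_cthickening.measurableSet fun z hz ↦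
          hgU z (hδU (cthickening_mono hr.2 K hz))

theorem lowerMinkowskiContent_image_Icc_add_le (n : ℕ) (g : E → ℝ≥0∞)
    (hγ : ContinuousOn γ (Icc a b)) (hinj : InjOn γ (Ico a b)) {u w v : ℝ} (hau : a ≤ u)
    (huw : u < w) (hwv : w ≤ v) (hvb : v < b) :
    lowerMinkowskiContent n g (γ '' Icc a u) + lowerMinkowskiContent n g (γ '' Icc w v) ≤
      lowerMinkowskiContent n g (γ '' Icc a v) := by
  have hcompact : ∀ {p q}, a ≤ p → q ≤ b → IsCompact (γ '' Icc p q) := fun hp hq ↦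
    isCompact_Icc.image_of_continuousOn (hγ.mono (Icc_subset_Icc hp hq))
  have haw : a ≤ w := hau.trans huw.le
  have huv : u ≤ v := huw.le.trans hwv
  have hdisj : Disjoint (γ '' Icc a u) (γ '' Icc w v) := by
    refine disjoint_image_image fun s hs t ht hst ↦ (hs.2.trans_lt (huw.trans_le ht.1)).ne ?_
    exact hinj ⟨hs.1, (hs.2.trans huv).trans_lt hvb⟩ ⟨haw.trans ht.1, ht.2.trans_lt hvb⟩ hst
  refine (lowerMinkowskiContent_add_le_union n g (hcompact le_rfl (huv.trans hvb.le))
    (hcompact haw hvb.le).isClosed hdisj).trans (lowerMinkowskiContent_mono n g ?_)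
  exact union_subset (image_mono (Icc_subset_Icc_right huv)) (image_mono (Icc_subset_Icc_left haw))

theorem lowerMinkowskiContent_image_Icc_add_mul_edist_le (hE : finrank ℝ E = n + 1)
    (hγ : ContinuousOn γ (Icc a b)) (hinj : InjOn γ (Ico a b)) {u v : ℝ} (hau : a ≤ u)
    (huv : u < v) (hvb : v < b) {c : ℝ≥0∞} (hc : c ≠ ∞)
    (hg : ∀ s ∈ Ioc u v, ∀ᶠ x in 𝓝 (γ s), c ≤ g x) :
    lowerMinkowskiContent n g (γ '' Icc a u) + c * edist (γ u) (γ v) ≤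
      lowerMinkowskiContent n g (γ '' Icc a v) := by
  have hsubarc : ∀ w ∈ Ioo u v, lowerMinkowskiContent n g (γ '' Icc a u) +
      c * edist (γ w) (γ v) ≤ lowerMinkowskiContent n g (γ '' Icc a v) := by
    intro w hw
    have hcont : ContinuousOn γ (Icc w v) :=
      hγ.mono (Icc_subset_Icc (hau.trans hw.1.le) hvb.le)
    have hgw : ∀ᶠ x in 𝓝ˢ (γ '' Icc w v), c ≤ g x := by
      rw [eventually_nhdsSet_iff_forall, forall_mem_image]
      exact fun s hs ↦ hg s ⟨hw.1.trans_le hs.1, hs.2⟩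
    have hlocal := mul_edist_le_lowerMinkowskiContent hE (isCompact_Icc.image_of_continuousOn hcont)
      (isPreconnected_Icc.image γ hcont) hgw
      (mem_image_of_mem γ (left_mem_Icc.2 hw.2.le)) (mem_image_of_mem γ (right_mem_Icc.2 hw.2.le))
    exact (add_le_add_right hlocal _).trans
      (lowerMinkowskiContent_image_Icc_add_le n g hγ hinj hau hw.1 hw.2.le hvb)
  have hγu : Tendsto γ (𝓝[>] u) (𝓝 (γ u)) :=
    (hγ u ⟨hau, (huv.trans hvb).le⟩).mono_of_mem_nhdsWithin
      (mem_of_superset (Ioo_mem_nhdsGT (huv.trans hvb)) fun s hs ↦ ⟨hau.trans hs.1.le, hs.2.le⟩)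
  have hlim : Tendsto (fun w ↦ lowerMinkowskiContent n g (γ '' Icc a u) + c * edist (γ w) (γ v))
      (𝓝[>] u) (𝓝 (lowerMinkowskiContent n g (γ '' Icc a u) + c * edist (γ u) (γ v))) :=
    tendsto_const_nhds.add
      (ENNReal.Tendsto.const_mul (hγu.edist tendsto_const_nhds) (.inr hc))
  exact le_of_tendsto hlim (mem_of_superset (Ioo_mem_nhdsGT huv) hsubarc)

theorem monotone_lowerMinkowskiContent_image_Icc (n : ℕ) (g : E → ℝ≥0∞) (γ : ℝ → E) (a : ℝ) :
    Monotone fun t ↦ lowerMinkowskiContent n g (γ '' Icc a t) := fun _ _ hst ↦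
  lowerMinkowskiContent_mono n g (image_mono (Icc_subset_Icc_right hst))

theorem mul_enorm_deriv_le_deriv_lowerMinkowskiContent (hE : finrank ℝ E = n + 1)
    (hγ : ContinuousOn γ (Icc a b)) (hinj : InjOn γ (Ico a b))
    (hfin : lowerMinkowskiContent n g (γ '' Icc a b) ≠ ∞) {u : ℝ} (hu : u ∈ Ico a b)
    (hg : LowerSemicontinuousAt g (γ u)) (hγu : DifferentiableAt ℝ γ u)
    (hGu : DifferentiableAt ℝ (fun t ↦ (lowerMinkowskiContent n g (γ '' Icc a t)).toReal) u) :
    g (γ u) * ‖deriv γ u‖ₑ ≤ ENNReal.ofReal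
      (deriv (fun t ↦ (lowerMinkowskiContent n g (γ '' Icc a t)).toReal) u) := by
  set G := fun t ↦ (lowerMinkowskiContent n g (γ '' Icc a t)).toReal
  have hfin' : ∀ t ≤ b, lowerMinkowskiContent n g (γ '' Icc a t) ≠ ∞ := fun t ht ↦
    ne_top_of_le_ne_top hfin (monotone_lowerMinkowskiContent_image_Icc n g γ a ht)
  refine ENNReal.mul_le_of_forall_lt fun c hc d hd ↦ (mul_le_mul_right hd.le c).trans ?_
  have hc_top : c ≠ ∞ := hc.ne_top
  obtain ⟨w, huw, hw⟩ : ∃ w ∈ Ioi u, Ioo u w ⊆ {s | ∀ᶠ x in 𝓝 (γ s), c ≤ g x} :=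
    mem_nhdsGT_iff_exists_Ioo_subset.1 <| hγu.continuousAt.continuousWithinAt
      (eventually_eventually_nhds.2 ((hg c hc).mono fun _ ↦ le_of_lt))
  have hincr : ∀ᶠ v in 𝓝[>] u, c.toReal * ‖γ v - γ u‖ ≤ G v - G u := by
    filter_upwards [Ioo_mem_nhdsGT huw, Ioo_mem_nhdsGT hu.2] with v hvw hvb
    rw [le_sub_iff_add_le', ← dist_eq_norm, dist_comm, dist_edist, ← ENNReal.toReal_mul,
      ← ENNReal.toReal_add (hfin' u hu.2.le) (ENNReal.mul_ne_top hc_top (edist_ne_top _ _))]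
    exact ENNReal.toReal_mono (hfin' v hvb.2.le) <|
      lowerMinkowskiContent_image_Icc_add_mul_edist_le hE hγ hinj hu.1 hvb.1 hvb.2 hc_top
        fun s hs ↦ hw ⟨hs.1, hs.2.trans_lt hvw.2⟩
  calc c * ‖deriv γ u‖ₑ = ENNReal.ofReal (c.toReal * ‖deriv γ u‖) := by
        rw [ENNReal.ofReal_mul ENNReal.toReal_nonneg, ENNReal.ofReal_toReal hc_top, ofReal_norm]
    _ ≤ ENNReal.ofReal (deriv G u) :=
        ENNReal.ofReal_le_ofReal (mul_norm_deriv_le_deriv hγu hGu hincr)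

theorem lintegral_mul_enorm_deriv_le_lowerMinkowskiContent (hE : finrank ℝ E = n + 1) (hab : a ≤ b)
    (hγ : ContinuousOn γ (Icc a b)) (hγbv : BoundedVariationOn γ (Icc a b))
    (hinj : InjOn γ (Ico a b)) (hg : ∀ s ∈ Icc a b, LowerSemicontinuousAt g (γ s)) :
    ∫⁻ s in Icc a b, g (γ s) * ‖deriv γ s‖ₑ ≤ lowerMinkowskiContent n g (γ '' Icc a b) := by
  by_cases hfin : lowerMinkowskiContent n g (γ '' Icc a b) = ∞
  · exact hfin ▸ le_top
  set G := fun t ↦ (lowerMinkowskiContent n g (γ '' Icc a t)).toReal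
  have hGmono : MonotoneOn G (Icc a b) := fun s _ t ht hst ↦
    ENNReal.toReal_mono
      (ne_top_of_le_ne_top hfin (monotone_lowerMinkowskiContent_image_Icc n g γ a ht.2))
      (monotone_lowerMinkowskiContent_image_Icc n g γ a hst)
  have hderiv : ∀ᵐ s, s ∈ Ioo a b → g (γ s) * ‖deriv γ s‖ₑ ≤ ‖deriv G s‖ₑ := by
    filter_upwards [hGmono.ae_differentiableWithinAt_of_mem,
      hγbv.locallyBoundedVariationOn.ae_differentiableWithinAt_of_mem] with s hGs hγs hs
    have hs' := Ioo_subset_Icc_self hs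
    have hnhds := Icc_mem_nhds hs.1 hs.2
    exact (mul_enorm_deriv_le_deriv_lowerMinkowskiContent hE hγ hinj hfin
      (Ioo_subset_Ico_self hs) (hg s hs') ((hγs hs').differentiableAt hnhds)
      ((hGs hs').differentiableAt hnhds)).trans (Real.ofReal_le_enorm _)
  calc ∫⁻ s in Icc a b, g (γ s) * ‖deriv γ s‖ₑ
      = ∫⁻ s in Ioo a b, g (γ s) * ‖deriv γ s‖ₑ := setLIntegral_congr Ioo_ae_eq_Icc.symm
    _ ≤ ∫⁻ s in Ioo a b, ‖deriv G s‖ₑ := setLIntegral_mono_ae' measurableSet_Ioo hderiv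
    _ ≤ ∫⁻ s in Icc a b, ‖deriv G s‖ₑ := lintegral_mono_set Ioo_subset_Icc_self
    _ ≤ ENNReal.ofReal (G b - G a) := lintegral_enorm_deriv_le_of_monotoneOn hab hGmono
    _ ≤ ENNReal.ofReal (G b) := ENNReal.ofReal_le_ofReal (sub_le_self _ ENNReal.toReal_nonneg)
    _ = lowerMinkowskiContent n g (γ '' Icc a b) := ENNReal.ofReal_toReal hfin

theorem limsup_volume_cthickening_div_ballVolume_le (hE : finrank ℝ E = n + 1) (hab : a ≤ b)
    (hγ : ContinuousOn γ (Icc a b)) :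
    limsup (fun r ↦ volume (cthickening r (γ '' Icc a b)) / ballVolume n r) (𝓝[>] 0) ≤
      eVariationOn γ (Icc a b) := by
  have hlim : Tendsto (fun r ↦ ballVolume (n + 1) r / ballVolume n r + eVariationOn γ (Icc a b))
      (𝓝[>] 0) (𝓝 (eVariationOn γ (Icc a b))) := by
    simpa only [zero_add] using
      (tendsto_ballVolume_succ_div_ballVolume n).add_const (eVariationOn γ (Icc a b))
  rw [← hlim.limsup_eq]
  refine limsup_le_limsup ?_
  filter_upwards [self_mem_nhdsWithin] with r (hr : 0 < r)
  refine (ENNReal.div_le_div_right (volume_cthickening_image_Icc_le hE hab hγ hr) _).trans_eq ?_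
  rw [ENNReal.add_div, mul_comm,
    ENNReal.mul_div_cancel_right (ballVolume_ne_zero n hr) (ballVolume_ne_top n r)]

theorem limsup_lintegral_const_cthickening_div_ballVolume_le (hE : finrank ℝ E = n + 1)
    (hab : a ≤ b) (hγ : AbsolutelyContinuousOnInterval γ a b) {M : ℝ≥0∞} (hM : M ≠ ∞) :
    limsup (fun r ↦ (∫⁻ _ in cthickening r (γ '' Icc a b), M) / ballVolume n r) (𝓝[>] 0) ≤
      ∫⁻ s in Icc a b, M * ‖deriv γ s‖ₑ := by
  simp only [setLIntegral_const, mul_div_assoc]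
  rw [ENNReal.limsup_const_mul_of_ne_top hM, lintegral_const_mul' _ _ hM]
  gcongr
  exact (limsup_volume_cthickening_div_ballVolume_le hE hab
    (hγ.continuousOn.mono Icc_subset_uIcc)).trans (eVariationOn_Icc_le_lintegral_enorm_deriv hγ)

theorem limsup_lintegral_add_lintegral_sub_div_ballVolume_le (n : ℕ) {K : Set E}
    (hK : IsCompact K) {M : ℝ≥0∞} (hgM : ∀ᶠ x in 𝓝ˢ K, g x ≤ M) :
    limsup (fun r ↦ (∫⁻ x in cthickening r K, g x) / ballVolume n r +
        (∫⁻ x in cthickening r K, M - g x) / ballVolume n r) (𝓝[>] 0) ≤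
      limsup (fun r ↦ (∫⁻ _ in cthickening r K, M) / ballVolume n r) (𝓝[>] 0) := by
  obtain ⟨U, hU, hKU, hgU⟩ := eventually_nhdsSet_iff_exists.1 hgM
  obtain ⟨δ, hδ, hδU⟩ := hK.exists_cthickening_subset_open hU hKU
  refine limsup_le_limsup ?_
  filter_upwards [Ioc_mem_nhdsGT hδ] with r hr
  rw [← ENNReal.add_div]
  refine ENNReal.div_le_div_right ((le_lintegral_add _ _).trans ?_) _
  exact setLIntegral_mono' isClosed_cthickening.measurableSet fun x hx ↦
    (add_tsub_cancel_of_le (hgU x (hδU (cthickening_mono hr.2 _ hx)))).le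

theorem tendsto_lintegral_cthickening_div_ballVolume (hE : finrank ℝ E = n + 1) (hab : a ≤ b)
    (hγ : AbsolutelyContinuousOnInterval γ a b) (hinj : InjOn γ (Ico a b)) {M : ℝ≥0∞} (hM : M ≠ ∞)
    (hgM : ∀ᶠ x in 𝓝ˢ (γ '' Icc a b), g x ≤ M) (hg : ∀ s ∈ Icc a b, ContinuousAt g (γ s)) :
    Tendsto (fun r ↦ (∫⁻ x in cthickening r (γ '' Icc a b), g x) / ballVolume n r) (𝓝[>] 0)
      (𝓝 (∫⁻ s in Icc a b, g (γ s) * ‖deriv γ s‖ₑ)) := by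
  have hγc : ContinuousOn γ (Icc a b) := hγ.continuousOn.mono Icc_subset_uIcc
  have hγbv : BoundedVariationOn γ (Icc a b) := hγ.boundedVariationOn.mono Icc_subset_uIcc
  have hgM' : ∀ s ∈ Icc a b, g (γ s) ≤ M := fun s hs ↦
    (eventually_nhdsSet_iff_forall.1 hgM _ (mem_image_of_mem γ hs)).self_of_nhds
  have hgs : ∀ s ∈ Icc a b, ContinuousAt (fun x ↦ M - g x) (γ s) := fun s hs ↦
    ENNReal.Tendsto.sub tendsto_const_nhds (hg s hs) (.inl hM)
  have hlength : ∫⁻ s in Icc a b, M * ‖deriv γ s‖ₑ ≠ ∞ := by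
    rw [lintegral_const_mul' _ _ hM]
    exact ENNReal.mul_ne_top hM
      (ne_top_of_le_ne_top hγbv (lintegral_enorm_deriv_le_eVariationOn hab hγbv))
  have hcompl_ne_top : ∫⁻ s in Icc a b, (M - g (γ s)) * ‖deriv γ s‖ₑ ≠ ∞ :=
    ne_top_of_le_ne_top hlength (lintegral_mono fun s ↦ by gcongr; exact tsub_le_self)
  refine tendsto_of_le_liminf_of_limsup_add_le hcompl_ne_top
    (lintegral_mul_enorm_deriv_le_lowerMinkowskiContent hE hab hγc hγbv hinj
      fun s hs ↦ (hg s hs).lowerSemicontinuousAt)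
    (lintegral_mul_enorm_deriv_le_lowerMinkowskiContent hE hab hγc hγbv hinj
      fun s hs ↦ (hgs s hs).lowerSemicontinuousAt) ?_
  calc limsup (fun r ↦ (∫⁻ x in cthickening r (γ '' Icc a b), g x) / ballVolume n r +
          (∫⁻ x in cthickening r (γ '' Icc a b), M - g x) / ballVolume n r) (𝓝[>] 0)
      ≤ limsup (fun r ↦ (∫⁻ _ in cthickening r (γ '' Icc a b), M) / ballVolume n r) (𝓝[>] 0) :=
        limsup_lintegral_add_lintegral_sub_div_ballVolume_le n
          (isCompact_Icc.image_of_continuousOn hγc) hgM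
    _ ≤ ∫⁻ s in Icc a b, M * ‖deriv γ s‖ₑ :=
        limsup_lintegral_const_cthickening_div_ballVolume_le hE hab hγ hM
    _ = ∫⁻ s in Icc a b, (g (γ s) * ‖deriv γ s‖ₑ + (M - g (γ s)) * ‖deriv γ s‖ₑ) :=
        setLIntegral_congr_fun measurableSet_Icc fun s hs ↦ by
          rw [← add_mul, add_tsub_cancel_of_le (hgM' s hs)]
    _ = _ := by
        have hgγ : ContinuousOn (fun s ↦ g (γ s)) (Icc a b) := fun s hs ↦
          (hg s hs).comp_continuousWithinAt (hγc s hs)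
        exact lintegral_add_left' ((hgγ.aemeasurable measurableSet_Icc).mul
          (measurable_deriv γ).enorm.aemeasurable) _

/-! ### Removing a tube from a domain of integration -/

variable {Ω : Set E} {f : E → ℝ}

theorem tendsto_toReal_lintegral_ofReal_cthickening_div_ballVolume (hE : finrank ℝ E = n + 1)
    (hab : a ≤ b) (hγ : AbsolutelyContinuousOnInterval γ a b) (hinj : InjOn γ (Ico a b))
    (hΩ : IsOpen Ω) (hΓΩ : γ '' Icc a b ⊆ Ω) (hf : ContinuousOn f Ω) :
    Tendsto (fun r ↦ (∫⁻ x in cthickening r (γ '' Icc a b), ENNReal.ofReal (f x)).toReal /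
        (ballVolume n r).toReal) (𝓝[>] 0)
      (𝓝 (∫⁻ s in Icc a b, ENNReal.ofReal (f (γ s) * ‖deriv γ s‖)).toReal) := by
  have hΓ : IsCompact (γ '' Icc a b) :=
    isCompact_Icc.image_of_continuousOn (hγ.continuousOn.mono Icc_subset_uIcc)
  obtain ⟨δ, hδ, hδΩ⟩ := hΓ.exists_cthickening_subset_open hΩ hΓΩ
  obtain ⟨C, hC⟩ := hΓ.cthickening.exists_bound_of_continuousOn (hf.mono hδΩ)
  have hbound : ∀ᶠ x in 𝓝ˢ (γ '' Icc a b), ENNReal.ofReal (f x) ≤ ENNReal.ofReal C :=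
    mem_of_superset (cthickening_mem_nhdsSet _ hδ) fun x hx ↦
      ENNReal.ofReal_le_ofReal ((le_abs_self _).trans (hC x hx))
  have hcont : ∀ s ∈ Icc a b, ContinuousAt (fun x ↦ ENNReal.ofReal (f x)) (γ s) := fun s hs ↦
    ENNReal.continuous_ofReal.continuousAt.comp
      (hf.continuousAt (hΩ.mem_nhds (hΓΩ (mem_image_of_mem γ hs))))
  have hlim := tendsto_lintegral_cthickening_div_ballVolume hE hab hγ hinj ENNReal.ofReal_ne_top
    hbound hcont
  simp only [← ofReal_norm, ← ENNReal.ofReal_mul' (norm_nonneg _)] at hlim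
  have hfin := (integrableOn_mul_norm_deriv hab hγ (hf.mono hΓΩ)).lintegral_lt_top.ne
  simpa only [Function.comp_def, ENNReal.toReal_div] using (ENNReal.tendsto_toReal hfin).comp hlim

theorem tendsto_setIntegral_cthickening_div_ballVolume (hE : finrank ℝ E = n + 1)
    (hab : a ≤ b) (hγ : AbsolutelyContinuousOnInterval γ a b) (hinj : InjOn γ (Ico a b))
    (hΩ : IsOpen Ω) (hΓΩ : γ '' Icc a b ⊆ Ω) (hf : ContinuousOn f Ω) :
    Tendsto (fun r ↦ (∫ x in cthickening r (γ '' Icc a b), f x) / (ballVolume n r).toReal)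
      (𝓝[>] 0) (𝓝 (∫ s in Icc a b, f (γ s) * ‖deriv γ s‖)) := by
  have hΓ : IsCompact (γ '' Icc a b) :=
    isCompact_Icc.image_of_continuousOn (hγ.continuousOn.mono Icc_subset_uIcc)
  obtain ⟨δ, hδ, hδΩ⟩ := hΓ.exists_cthickening_subset_open hΩ hΓΩ
  have hpos := tendsto_toReal_lintegral_ofReal_cthickening_div_ballVolume hE hab hγ hinj hΩ hΓΩ hf
  have hneg :=
    tendsto_toReal_lintegral_ofReal_cthickening_div_ballVolume hE hab hγ hinj hΩ hΓΩ hf.neg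
  simp only [Pi.neg_apply, neg_mul] at hneg
  rw [integral_eq_lintegral_pos_part_sub_lintegral_neg_part
    (integrableOn_mul_norm_deriv hab hγ (hf.mono hΓΩ))]
  refine (hpos.sub hneg).congr' ?_
  filter_upwards [Ioc_mem_nhdsGT hδ] with r hr
  have hint : IntegrableOn f (cthickening r (γ '' Icc a b)) :=
    (hf.mono ((cthickening_mono hr.2 _).trans hδΩ)).integrableOn_compact hΓ.cthickening
  rw [integral_eq_lintegral_pos_part_sub_lintegral_neg_part hint, sub_div]

theorem tendsto_setIntegral_diff_cthickening_sub_div_ballVolume (hE : finrank ℝ E = n + 1)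
    (hab : a ≤ b) (hγ : AbsolutelyContinuousOnInterval γ a b) (hinj : InjOn γ (Ico a b))
    (hΩ : IsOpen Ω) (hΓΩ : γ '' Icc a b ⊆ Ω) (hf : ContinuousOn f Ω) (hfi : IntegrableOn f Ω) :
    Tendsto (fun r ↦ ((∫ x in Ω \ cthickening r (γ '' Icc a b), f x) - ∫ x in Ω, f x) /
        (ballVolume n r).toReal) (𝓝[>] 0) (𝓝 (-∫ s in a..b, f (γ s) * ‖deriv γ s‖)) := by
  have hΓ : IsCompact (γ '' Icc a b) :=
    isCompact_Icc.image_of_continuousOn (hγ.continuousOn.mono Icc_subset_uIcc)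
  obtain ⟨δ, hδ, hδΩ⟩ := hΓ.exists_cthickening_subset_open hΩ hΓΩ
  rw [intervalIntegral.integral_of_le hab, ← integral_Icc_eq_integral_Ioc]
  refine (tendsto_setIntegral_cthickening_div_ballVolume hE hab hγ hinj hΩ hΓΩ hf).neg.congr' ?_
  filter_upwards [Ioc_mem_nhdsGT hδ] with r hr
  have hsub : cthickening r (γ '' Icc a b) ⊆ Ω := (cthickening_mono hr.2 _).trans hδΩ
  rw [setIntegral_sdiff isClosed_cthickening.measurableSet hfi hsub, sub_sub_cancel_left, neg_div]

end Content

theorem setOf_infDist_le_eq_cthickening {X : Type*} [PseudoMetricSpace X] {s : Set X}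
    (hs : s.Nonempty) {r : ℝ} (hr : 0 ≤ r) : {x | infDist x s ≤ r} = cthickening r s := by
  ext x
  rw [mem_cthickening_iff, mem_ofPred_eq, infDist,
    ENNReal.le_ofReal_iff_toReal_le (infEDist_ne_top hs) hr]

theorem setOf_infDist_image_Ico_le_eq_cthickening_image_Icc {X : Type*} [PseudoMetricSpace X]
    {γ : ℝ → X} {a b r : ℝ} (hab : a < b) (hγ : ContinuousOn γ (Icc a b)) (hr : 0 ≤ r) :
    {x | infDist x (γ '' Ico a b) ≤ r} = cthickening r (γ '' Icc a b) := by
  have hsub : γ '' Icc a b ⊆ closure (γ '' Ico a b) := by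
    rw [← closure_Ico hab.ne] at hγ ⊢
    exact hγ.image_closure
  rw [setOf_infDist_le_eq_cthickening ((nonempty_Ico.2 hab).image γ) hr]
  refine (cthickening_subset_of_subset r (image_mono Ico_subset_Icc_self)).antisymm ?_
  rw [← cthickening_closure (s := γ '' Ico a b)]
  exact cthickening_subset_of_subset r hsub

theorem stmt_5_general {E : Type*} [NormedAddCommGroup E] [InnerProductSpace ℝ E]
    [FiniteDimensional ℝ E] [MeasurableSpace E] [BorelSpace E] {n : ℕ}
    (hE : finrank ℝ E = n + 1) {a b : ℝ} (hab : a < b) {γ : ℝ → E}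
    (hγ : AbsolutelyContinuousOnInterval γ a b) (hinj : InjOn γ (Ico a b))
    {Ω : Set E} (hΩ : IsOpen Ω) (hΓΩ : γ '' Icc a b ⊆ Ω) {f : E → ℝ} (hf : ContinuousOn f Ω)
    (hfi : IntegrableOn f Ω) :
    Tendsto
      (fun r ↦ ((∫ x in Ω \ {x | infDist x (γ '' Ico a b) ≤ r}, f x) - ∫ x in Ω, f x) /
        (ballVolume n r).toReal)
      (𝓝[>] 0) (𝓝 (-∫ s in a..b, f (γ s) * ‖deriv γ s‖)) := by
  refine (tendsto_setIntegral_diff_cthickening_sub_div_ballVolume hE hab.le hγ hinj hΩ hΓΩ hf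
    hfi).congr' ?_
  filter_upwards [self_mem_nhdsWithin] with r (hr : 0 < r)
  rw [setOf_infDist_image_Ico_le_eq_cthickening_image_Icc hab
    (hγ.continuousOn.mono Icc_subset_uIcc) hr.le]

/-- Formula (5.3): the directional semiderivative of `J₁(Ω) = ∫_Ω f` with respect to the
Delfour dilation of a closed `C²` curve `γ`, with path parameter `t = π r²`, equals
minus the line integral of `f` along `γ`. -/
theorem stmt_5 (L : ℝ) (hL : 0 < L) (γ : ℝ → EuclideanSpace ℝ (Fin 3))
    (hγ : ContDiff ℝ 2 γ) (hper : Function.Periodic γ L)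
    (hinj : Set.InjOn γ (Set.Ico 0 L)) (hγ' : ∀ s, deriv γ s ≠ 0)
    (Ω : Set (EuclideanSpace ℝ (Fin 3))) (hΩ : IsOpen Ω)
    (hΓΩ : γ '' Set.Ico 0 L ⊆ Ω)
    (f : EuclideanSpace ℝ (Fin 3) → ℝ) (hf : Continuous f)
    (hfi : IntegrableOn f Ω) :
    Tendsto
      (fun r : ℝ =>
        ((∫ x in Ω \ {x | Metric.infDist x (γ '' Set.Ico 0 L) ≤ r}, f x) -
            ∫ x in Ω, f x) / (Real.pi * r ^ 2))
      (𝓝[>] 0)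
      (𝓝 (-∫ s in (0:ℝ)..L, f (γ s) * ‖deriv γ s‖)) := by
  have hγac : AbsolutelyContinuousOnInterval γ 0 L :=
    (hγ.of_le one_le_two).contDiffOn.absolutelyContinuousOnInterval
  have hΓΩ' : γ '' Icc 0 L ⊆ Ω := by
    rintro _ ⟨s, -, rfl⟩
    obtain ⟨t, ht, hst⟩ := hper.exists_mem_Ico₀ hL s
    exact hΓΩ (hst ▸ mem_image_of_mem γ ht)
  refine (stmt_5_general finrank_euclideanSpace_fin hL hγac hinj hΩ hΓΩ' hf.continuousOn
    hfi).congr' ?_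
  filter_upwards [self_mem_nhdsWithin] with r (hr : 0 < r)
  rw [ballVolume_two hr.le, ENNReal.toReal_ofReal (by positivity)]
end

section
/- Let a, b ∈ ℝ^d with a ≠ 0, let c, e ∈ ℝ, and define the affine functions φ(x) = ⟨a,x⟩ + c and w(x) = ⟨b,x⟩ + e. Let f : ℝ^d → ℝ be continuously differentiable with compact support. Then the function t ↦ ∫_{{x : φ(x) + t w(x) = 0}} f dH^{d−1} (integral over the hyperplane {φ + tw = 0}, defined for all t small enough that a + t b ≠ 0) has derivative at t = 0 equal to −∫_{{x : φ(x) = 0}} ⟨∇f(x), a/‖a‖⟩ · ( w(x)/‖a‖ ) dH^{d−1}(x). -/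
open MeasureTheory RealInnerProductSpace

/-!
For `t` near `0` the hyperplane `{φ + t w = 0}` is the image of `{φ = 0}` under an isometry `Φ t`:
reflect, about a point of `{φ = 0}`, in the hyperplane orthogonal to the bisector of the two
normals, then translate along `a`. Isometries preserve Hausdorff measure, so the surface integral
equals `∫ f (Φ t x)` over the fixed hyperplane `{φ = 0}` and no surface Jacobian appears. On that
hyperplane `Φ 0` is the identity and the reflection tilts the hyperplane with purely normal
velocity: `∂ₜ Φ 0 x = -(w x / ‖a‖) n` for `n = a / ‖a‖`. Differentiating under the integral sign
gives the formula.
-/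

open Filter Function Metric Module Set Topology

section DifferentiationUnderIntegral

variable {X F : Type*} [NormedAddCommGroup X] [NormedSpace ℝ X] [NormedAddCommGroup F]
  [NormedSpace ℝ F] {K S : Set X} {g : ℝ → X → F} {t₀ : ℝ}

lemma exists_closedBall_forall_contDiffAt (hK : IsCompact K)
    (hg : ∀ x ∈ K, ContDiffAt ℝ 1 (uncurry g) (t₀, x)) :
    ∃ δ > 0, ∀ q ∈ closedBall t₀ δ ×ˢ K, ContDiffAt ℝ 1 (uncurry g) q := by
  have hopen : IsOpen {q | ContDiffAt ℝ 1 (uncurry g) q} :=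
    isOpen_iff_mem_nhds.2 fun q (hq : ContDiffAt ℝ 1 (uncurry g) q) => hq.eventually (by simp)
  obtain ⟨U, V, hU, -, htU, hKV, hUV⟩ :=
    generalized_tube_lemma (isCompact_singleton (x := t₀)) hK hopen (by
      rintro ⟨t, x⟩ ⟨rfl, hx⟩
      exact hg x hx)
  obtain ⟨δ, hδ, hball⟩ := nhds_basis_closedBall.mem_iff.1 (hU.mem_nhds (htU rfl))
  exact ⟨δ, hδ, fun q hq => hUV ⟨hball hq.1, hKV hq.2⟩⟩

variable [MeasurableSpace X] [BorelSpace X] {μ : Measure X}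

lemma hasDerivAt_setIntegral_of_contDiffAt (hK : IsCompact K) (hμK : μ K ≠ ⊤)
    (hg : ∀ x ∈ K, ContDiffAt ℝ 1 (uncurry g) (t₀, x)) :
    HasDerivAt (fun t => ∫ x in K, g t x ∂μ) (∫ x in K, deriv (g · x) t₀ ∂μ) t₀ := by
  obtain ⟨δ, hδ, hsmooth⟩ := exists_closedBall_forall_contDiffAt hK hg
  have hderiv : ∀ t ∈ closedBall t₀ δ, ∀ x ∈ K,
      HasDerivAt (g · x) (fderiv ℝ (uncurry g) (t, x) (1, 0)) t := fun t ht x hx =>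
    ((hsmooth (t, x) ⟨ht, hx⟩).differentiableAt one_ne_zero).hasFDerivAt.comp_hasDerivAt
      (f := fun t => (t, x)) t ((hasDerivAt_id t).prodMk (hasDerivAt_const t x))
  have hcont : ContinuousOn (uncurry g) (closedBall t₀ δ ×ˢ K) := fun q hq =>
    (hsmooth q hq).continuousAt.continuousWithinAt
  have hcont' : ContinuousOn (fun q => fderiv ℝ (uncurry g) q (1, 0)) (closedBall t₀ δ ×ˢ K) :=
    fun q hq => (((hsmooth q hq).fderiv_right (m := 0) (by simp)).continuousAt.clm_apply
      continuousAt_const).continuousWithinAt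
  have hslice : ∀ t ∈ closedBall t₀ δ, MapsTo (fun x => (t, x)) K (closedBall t₀ δ ×ˢ K) :=
    fun t ht x hx => ⟨ht, hx⟩
  have hmeas : ∀ t ∈ closedBall t₀ δ, AEStronglyMeasurable (g t) (μ.restrict K) := fun t ht =>
    (hcont.comp (by fun_prop) (hslice t ht)).aestronglyMeasurable_of_isCompact hK hK.measurableSet
  have ht₀ : t₀ ∈ closedBall t₀ δ := mem_closedBall_self hδ.le
  obtain ⟨B, hB⟩ := ((isCompact_closedBall t₀ δ).prod hK).exists_bound_of_continuousOn hcont'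
  have hinterchange := (hasDerivAt_integral_of_dominated_loc_of_deriv_le (bound := fun _ => B)
    (F' := fun t x => fderiv ℝ (uncurry g) (t, x) (1, 0)) (closedBall_mem_nhds t₀ hδ)
    (eventually_of_mem (closedBall_mem_nhds t₀ hδ) hmeas)
    ((hcont.comp (by fun_prop) (hslice t₀ ht₀)).integrableOn_of_subset_isCompact hK
      hK.measurableSet subset_rfl hμK)
    ((hcont'.comp (by fun_prop) (hslice t₀ ht₀)).aestronglyMeasurable_of_isCompact hK
      hK.measurableSet)
    (ae_restrict_of_forall_mem hK.measurableSet fun x hx t ht => hB _ ⟨ht, hx⟩)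
    (integrableOn_const hμK)
    (ae_restrict_of_forall_mem hK.measurableSet fun x hx t ht => hderiv t ht x hx)).2
  rwa [setIntegral_congr_fun hK.measurableSet fun x hx => (hderiv t₀ ht₀ x hx).deriv]

lemma hasDerivAt_setIntegral_of_eventually_eq_zero_off_compact (hS : IsClosed S)
    (hK : IsCompact K) (hμ : μ (S ∩ K) ≠ ⊤)
    (hg : ∀ x ∈ S ∩ K, ContDiffAt ℝ 1 (uncurry g) (t₀, x))
    (hgK : ∀ᶠ t in 𝓝 t₀, ∀ x ∉ K, g t x = 0) :
    HasDerivAt (fun t => ∫ x in S, g t x ∂μ) (∫ x in S, deriv (g · x) t₀ ∂μ) t₀ := by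
  have hrestrict : ∀ h : X → F, (∀ x ∉ K, h x = 0) → ∫ x in S, h x ∂μ = ∫ x in S ∩ K, h x ∂μ :=
    fun h hh => setIntegral_eq_of_subset_of_forall_sdiff_eq_zero hS.measurableSet inter_subset_left
      fun x hx => hh x fun hxK => hx.2 ⟨hx.1, hxK⟩
  have hderiv : ∀ x ∉ K, deriv (g · x) t₀ = 0 := fun x hx => by
    have hzero : (g · x) =ᶠ[𝓝 t₀] fun _ => 0 := hgK.mono fun t ht => ht x hx
    rw [hzero.deriv_eq, deriv_const]
  rw [hrestrict _ hderiv]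
  exact (hasDerivAt_setIntegral_of_contDiffAt (hK.inter_left hS) hμ hg).congr_of_eventuallyEq
    (hgK.mono fun t ht => hrestrict _ ht)

end DifferentiationUnderIntegral

section HausdorffMeasure

lemma hausdorffMeasure_range_inter_lt_top {V X : Type*} [NormedAddCommGroup V] [NormedSpace ℝ V]
    [FiniteDimensional ℝ V] [EMetricSpace X] [MeasurableSpace X] [BorelSpace X]
    {ι : V → X} (hι : Isometry ι) {K : Set X} (hK : IsCompact K) :
    μH[finrank ℝ V] (range ι ∩ K) < ⊤ := by
  borelize V
  have := FiniteDimensional.complete ℝ V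
  rw [inter_comm, ← hι.hausdorffMeasure_preimage (Or.inl (Nat.cast_nonneg _))]
  exact (hι.isClosedEmbedding.isCompact_preimage hK).measure_lt_top

lemma exists_isCompact_eventually_comp_isometry_eq_zero {T X Y F : Type*} [TopologicalSpace T]
    [PseudoMetricSpace X] [ProperSpace X] [PseudoMetricSpace Y] [Zero F] {Φ : T → X → Y} {t₀ : T}
    {x₀ : X} (hΦ : ∀ t, Isometry (Φ t)) (hcont : ContinuousAt (fun t => Φ t x₀) t₀) {f : Y → F}
    (hfs : HasCompactSupport f) :
    ∃ K, IsCompact K ∧ ∀ᶠ t in 𝓝 t₀, ∀ x ∉ K, f (Φ t x) = 0 := by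
  obtain ⟨R, hR⟩ := hfs.isCompact.isBounded.subset_closedBall (Φ t₀ x₀)
  refine ⟨closedBall x₀ (R + 1), isCompact_closedBall _ _, ?_⟩
  filter_upwards [hcont.eventually (ball_mem_nhds _ one_pos)] with t ht x hx
  refine image_eq_zero_of_notMem_tsupport fun hmem => hx ?_
  calc dist x x₀ = dist (Φ t x) (Φ t x₀) := ((hΦ t).dist_eq x x₀).symm
    _ ≤ dist (Φ t x) (Φ t₀ x₀) + dist (Φ t x₀) (Φ t₀ x₀) := dist_triangle_right _ _ _
    _ ≤ R + 1 := add_le_add (hR hmem) (mem_ball.1 ht).le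

variable {E F : Type*} [NormedAddCommGroup E] [NormedSpace ℝ E] [ProperSpace E]
  [MeasurableSpace E] [BorelSpace E] [NormedAddCommGroup F] [NormedSpace ℝ F]

theorem hasDerivAt_setIntegral_hausdorffMeasure_image {Φ : ℝ → E ≃ᵢ E} {t₀ s : ℝ} {S : Set E}
    (hS : IsClosed S) (hSfin : ∀ K, IsCompact K → μH[s] (S ∩ K) ≠ ⊤)
    (hΦ : ∀ x, ContDiffAt ℝ 1 (fun q : ℝ × E => Φ q.1 q.2) (t₀, x))
    {f : E → F} (hf : ContDiff ℝ 1 f) (hfs : HasCompactSupport f) :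
    HasDerivAt (fun t => ∫ x in Φ t '' S, f x ∂μH[s])
      (∫ x in S, fderiv ℝ f (Φ t₀ x) (deriv (fun t => Φ t x) t₀) ∂μH[s]) t₀ := by
  have hpath : ∀ x, ContDiffAt ℝ 1 (fun t => Φ t x) t₀ := fun x =>
    (hΦ x).comp t₀ (contDiffAt_id.prodMk contDiffAt_const)
  have hchain : ∀ x, deriv (fun t => f (Φ t x)) t₀ =
      fderiv ℝ f (Φ t₀ x) (deriv (fun t => Φ t x) t₀) := fun x =>
    fderiv_comp_deriv t₀ (hf.differentiable one_ne_zero _)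
      ((hpath x).differentiableAt one_ne_zero)
  obtain ⟨K, hK, hfK⟩ := exists_isCompact_eventually_comp_isometry_eq_zero
    (fun t => (Φ t).isometry) (hpath 0).continuousAt hfs
  simp_rw [((Φ _).measurePreserving_hausdorffMeasure s).setIntegral_image_emb
    (Φ _).toHomeomorph.measurableEmbedding, ← hchain]
  exact hasDerivAt_setIntegral_of_eventually_eq_zero_off_compact hS hK (hSfin K hK)
    (fun x _ => hf.contDiffAt.comp _ (hΦ x)) hfK

end HausdorffMeasure

section Hyperplane

variable {E : Type*} [NormedAddCommGroup E] [InnerProductSpace ℝ E]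

/-- The affine hyperplane `⟪v, x⟫ + k = 0` (the whole space or empty if `v = 0`). -/
def hyperplane (v : E) (k : ℝ) : Set E := {x | ⟪v, x⟫ + k = 0}

lemma isClosed_hyperplane (v : E) (k : ℝ) : IsClosed (hyperplane v k) :=
  isClosed_eq (by fun_prop) continuous_const

lemma mem_hyperplane_iff_inner_sub {a p x : E} {k : ℝ} (hp : p ∈ hyperplane a k) :
    x ∈ hyperplane a k ↔ ⟪a, x - p⟫ = 0 := by
  have hp' : ⟪a, p⟫ + k = 0 := hp
  rw [inner_sub_right, hyperplane, mem_ofPred_eq]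
  constructor <;> intro h <;> linarith

lemma hyperplane_nonempty {a : E} (ha : a ≠ 0) (k : ℝ) : (hyperplane a k).Nonempty := by
  refine ⟨-(k / ‖a‖ ^ 2) • a, ?_⟩
  have ha' : ‖a‖ ≠ 0 := norm_ne_zero_iff.2 ha
  rw [hyperplane, mem_ofPred_eq, inner_smul_right, real_inner_self_eq_norm_sq]
  field_simp
  ring

lemma hyperplane_eq_range_add_orthogonal {a p : E} {k : ℝ} (hp : p ∈ hyperplane a k) :
    hyperplane a k = range fun v : (ℝ ∙ a)ᗮ => p + (v : E) := by
  ext x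
  rw [mem_hyperplane_iff_inner_sub hp, ← Submodule.mem_orthogonal_singleton_iff_inner_right]
  constructor
  · exact fun hx => ⟨⟨x - p, hx⟩, add_sub_cancel p x⟩
  · rintro ⟨v, rfl⟩
    simp

lemma hausdorffMeasure_hyperplane_inter_lt_top [FiniteDimensional ℝ E] [MeasurableSpace E]
    [BorelSpace E] {a : E} (ha : a ≠ 0) (k : ℝ) {K : Set E} (hK : IsCompact K) :
    μH[(finrank ℝ E : ℝ) - 1] (hyperplane a k ∩ K) < ⊤ := by
  obtain ⟨p, hp⟩ := hyperplane_nonempty ha k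
  have hrank : (finrank ℝ E : ℝ) - 1 = finrank ℝ (ℝ ∙ a)ᗮ := by
    rw [← (ℝ ∙ a).finrank_add_finrank_orthogonal, finrank_span_singleton ha]
    push_cast
    ring
  rw [hrank, hyperplane_eq_range_add_orthogonal hp]
  exact hausdorffMeasure_range_inter_lt_top
    ((IsometryEquiv.addLeft p).isometry.comp isometry_subtype_coe) hK

/-- The reflection in the hyperplane orthogonal to the bisector of `a` and `v`. It maps `a` to a
negative multiple of `v`, hence `aᗮ` onto `vᗮ`, and fixes `aᗮ` pointwise when `v = a`. -/
noncomputable def bisectorReflection (a v : E) : E ≃ₗᵢ[ℝ] E :=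
  (ℝ ∙ (‖v‖ • a + ‖a‖ • v))ᗮ.reflection

lemma bisectorReflection_apply (a v y : E) :
    bisectorReflection a v y = y - (2 * ⟪‖v‖ • a + ‖a‖ • v, y⟫ / ‖‖v‖ • a + ‖a‖ • v‖ ^ 2) •
      (‖v‖ • a + ‖a‖ • v) := by
  rw [bisectorReflection, Submodule.reflection_orthogonal_apply,
    Submodule.reflection_singleton_apply]
  simp only [RCLike.ofReal_real_eq_id, id_eq]
  module

lemma bisectorReflection_norm_smul (a v : E) :
    bisectorReflection a v (‖v‖ • a) = -(‖a‖ • v) := by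
  have hnorm : ‖‖v‖ • a‖ = ‖-(‖a‖ • v)‖ := by simp [norm_smul, mul_comm]
  simpa [bisectorReflection] using Submodule.reflection_sub hnorm

lemma norm_mul_inner_bisectorReflection (a v y : E) :
    ‖a‖ * ⟪v, bisectorReflection a v y⟫ = -(‖v‖ * ⟪a, y⟫) := by
  rw [← real_inner_smul_left, ← real_inner_smul_left,
    ← (bisectorReflection a v).inner_map_map (‖v‖ • a), bisectorReflection_norm_smul,
    inner_neg_left, neg_neg]

/-- The isometry that reflects about `p` by `bisectorReflection a v` and then translates along `a`
so as to move `p` onto `hyperplane v k`. For `⟪v, a⟫ ≠ 0` it carries the hyperplane through `p`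
orthogonal to `a` onto `hyperplane v k`. -/
noncomputable def hyperplaneIsometry (a p v : E) (k : ℝ) : E ≃ᵢ E :=
  (IsometryEquiv.subRight p).trans <| (bisectorReflection a v).toIsometryEquiv.trans <|
    IsometryEquiv.addLeft (p - ((⟪v, p⟫ + k) / ⟪v, a⟫) • a)

lemma hyperplaneIsometry_apply (a p v x : E) (k : ℝ) :
    hyperplaneIsometry a p v k x =
      p - ((⟪v, p⟫ + k) / ⟪v, a⟫) • a + bisectorReflection a v (x - p) := rfl

lemma hyperplaneIsometry_image_hyperplane {a p v : E} {k k₀ : ℝ} (hva : ⟪v, a⟫ ≠ 0)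
    (hp : p ∈ hyperplane a k₀) :
    hyperplaneIsometry a p v k '' hyperplane a k₀ = hyperplane v k := by
  have ha : ‖a‖ ≠ 0 := norm_ne_zero_iff.2 fun h => hva (by simp [h])
  have hv : ‖v‖ ≠ 0 := norm_ne_zero_iff.2 fun h => hva (by simp [h])
  suffices hpre : hyperplaneIsometry a p v k ⁻¹' hyperplane v k = hyperplane a k₀ by
    rw [← hpre, image_preimage_eq _ (hyperplaneIsometry a p v k).surjective]
  ext x
  have hinner : ⟪v, hyperplaneIsometry a p v k x⟫ + k = ⟪v, bisectorReflection a v (x - p)⟫ := by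
    rw [hyperplaneIsometry_apply, inner_add_right, inner_sub_right, inner_smul_right,
      div_mul_cancel₀ _ hva]
    ring
  rw [mem_hyperplane_iff_inner_sub hp, mem_preimage, hyperplane, mem_ofPred_eq, hinner,
    ← mul_eq_zero_iff_left ha, norm_mul_inner_bisectorReflection, neg_eq_zero,
    mul_eq_zero_iff_left hv]

lemma hyperplaneIsometry_apply_self {a p x : E} {k : ℝ} (hp : p ∈ hyperplane a k)
    (hx : x ∈ hyperplane a k) : hyperplaneIsometry a p a k x = x := by
  have hp' : ⟪a, p⟫ + k = 0 := hp
  simp [hyperplaneIsometry_apply, bisectorReflection_apply, hp', inner_add_left,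
    real_inner_smul_left, (mem_hyperplane_iff_inner_sub hp).1 hx]

end Hyperplane

section MovingHyperplane

variable {E : Type*} [NormedAddCommGroup E] [InnerProductSpace ℝ E]
  {α : ℝ → E} {γ : ℝ → ℝ} {t₀ : ℝ}

lemma contDiffAt_hyperplaneIsometry (hα : ContDiffAt ℝ 1 α t₀) (hγ : ContDiffAt ℝ 1 γ t₀)
    (hne : α t₀ ≠ 0) (p x : E) :
    ContDiffAt ℝ 1 (fun q : ℝ × E => hyperplaneIsometry (α t₀) p (α q.1) (γ q.1) q.2)
      (t₀, x) := by
  have hα' : ContDiffAt ℝ 1 (fun q : ℝ × E => α q.1) (t₀, x) := hα.comp _ contDiffAt_fst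
  have hγ' : ContDiffAt ℝ 1 (fun q : ℝ × E => γ q.1) (t₀, x) := hγ.comp _ contDiffAt_fst
  have hnorm : ContDiffAt ℝ 1 (fun q : ℝ × E => ‖α q.1‖) (t₀, x) := hα'.norm ℝ hne
  have hbisector : ContDiffAt ℝ 1
      (fun q : ℝ × E => ‖α q.1‖ • α t₀ + ‖α t₀‖ • α q.1) (t₀, x) :=
    (hnorm.smul contDiffAt_const).add (hα'.const_smul ‖α t₀‖)
  have hbisector_ne : ‖‖α t₀‖ • α t₀ + ‖α t₀‖ • α t₀‖ ^ 2 ≠ 0 := by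
    simp [← two_smul ℝ, hne]
  have hsub : ContDiffAt ℝ 1 (fun q : ℝ × E => q.2 - p) (t₀, x) :=
    contDiffAt_snd.sub contDiffAt_const
  simp only [hyperplaneIsometry_apply, bisectorReflection_apply]
  refine (contDiffAt_const.sub (ContDiffAt.smul (ContDiffAt.div ?_ ?_ ?_) contDiffAt_const)).add
    (hsub.sub (ContDiffAt.smul (ContDiffAt.div ?_ (hbisector.norm_sq ℝ) hbisector_ne) hbisector))
  · exact (hα'.inner ℝ contDiffAt_const).add hγ'
  · exact hα'.inner ℝ contDiffAt_const
  · simpa using hne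
  · exact contDiffAt_const.mul (hbisector.inner ℝ hsub)

-- Continuity of `w` suffices, so the velocity below never involves the derivative of `‖α t‖`.
lemma hasDerivAt_smul_of_eq_zero {F : Type*} [NormedAddCommGroup F] [NormedSpace ℝ F]
    {g : ℝ → ℝ} {g' t₀ : ℝ} {w : ℝ → F} (hg : HasDerivAt g g' t₀) (hg₀ : g t₀ = 0)
    (hw : ContinuousAt w t₀) : HasDerivAt (fun t => g t • w t) (g' • w t₀) t₀ := by
  rw [hasDerivAt_iff_tendsto_slope] at hg ⊢
  refine (hg.smul (hw.tendsto.mono_left nhdsWithin_le_nhds)).congr fun t => ?_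
  simp [slope, hg₀, smul_smul]

lemma hasDerivAt_bisectorReflection {y α' : E} (hα : HasDerivAt α α' t₀) (hne : α t₀ ≠ 0)
    (hy : ⟪α t₀, y⟫ = 0) :
    HasDerivAt (fun t => bisectorReflection (α t₀) (α t) y)
      (-(⟪α', y⟫ / ‖α t₀‖ ^ 2) • α t₀) t₀ := by
  set a := α t₀ with ha
  have hnorm : ‖a‖ ≠ 0 := norm_ne_zero_iff.2 hne
  have hαc : ContinuousAt α t₀ := hα.continuousAt
  have hinner : HasDerivAt (fun t => ⟪α t, y⟫) ⟪α', y⟫ t₀ := by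
    simpa using hα.inner ℝ (hasDerivAt_const t₀ y)
  have hfactored : ∀ t, bisectorReflection a (α t) y = y - ⟪α t, y⟫ •
      (2 * ‖a‖ / ‖‖α t‖ • a + ‖a‖ • α t‖ ^ 2) • (‖α t‖ • a + ‖a‖ • α t) := fun t => by
    rw [bisectorReflection_apply, inner_add_left, real_inner_smul_left, real_inner_smul_left, hy]
    module
  have hcont : ContinuousAt (fun t => (2 * ‖a‖ / ‖‖α t‖ • a + ‖a‖ • α t‖ ^ 2) •
      (‖α t‖ • a + ‖a‖ • α t)) t₀ := by
    refine ContinuousAt.smul (ContinuousAt.div (by fun_prop) (by fun_prop) ?_) (by fun_prop)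
    simp [← ha, ← two_smul ℝ, hne]
  simp only [hfactored]
  refine ((hasDerivAt_smul_of_eq_zero hinner hy hcont).const_sub y).congr_deriv ?_
  rw [← ha, ← two_smul ℝ, norm_smul, norm_smul]
  simp only [Real.norm_ofNat, norm_norm, smul_smul, ← neg_smul]
  congr 1
  field_simp

lemma hasDerivAt_hyperplaneIsometry {p x α' : E} {γ' : ℝ} (hα : HasDerivAt α α' t₀)
    (hγ : HasDerivAt γ γ' t₀) (hne : α t₀ ≠ 0) (hp : p ∈ hyperplane (α t₀) (γ t₀))
    (hx : x ∈ hyperplane (α t₀) (γ t₀)) :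
    HasDerivAt (fun t => hyperplaneIsometry (α t₀) p (α t) (γ t) x)
      (-((⟪α', x⟫ + γ') / ‖α t₀‖ ^ 2) • α t₀) t₀ := by
  have hinner : ∀ y, HasDerivAt (fun t => ⟪α t, y⟫) ⟪α', y⟫ t₀ := fun y => by
    simpa using hα.inner ℝ (hasDerivAt_const t₀ y)
  have htranslation : HasDerivAt (fun t => (⟪α t, p⟫ + γ t) • ⟪α t, α t₀⟫⁻¹ • α t₀)
      ((⟪α', p⟫ + γ') • ⟪α t₀, α t₀⟫⁻¹ • α t₀) t₀ :=
    hasDerivAt_smul_of_eq_zero ((hinner p).add hγ) hp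
      (((hinner (α t₀)).continuousAt.inv₀ (inner_self_ne_zero.2 hne)).smul continuousAt_const)
  have hrotation := hasDerivAt_bisectorReflection hα hne ((mem_hyperplane_iff_inner_sub hp).1 hx)
  simp only [hyperplaneIsometry_apply, div_eq_mul_inv, mul_smul]
  refine ((htranslation.const_sub p).add hrotation).congr_deriv ?_
  rw [real_inner_self_eq_norm_sq, inner_sub_right]
  module

theorem hasDerivAt_setIntegral_hyperplane [FiniteDimensional ℝ E] [MeasurableSpace E]
    [BorelSpace E] {F : Type*} [NormedAddCommGroup F] [NormedSpace ℝ F]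
    (hα : ContDiffAt ℝ 1 α t₀) (hγ : ContDiffAt ℝ 1 γ t₀) (hne : α t₀ ≠ 0)
    {f : E → F} (hf : ContDiff ℝ 1 f) (hfs : HasCompactSupport f) :
    HasDerivAt (fun t => ∫ x in hyperplane (α t) (γ t), f x ∂μH[(finrank ℝ E : ℝ) - 1])
      (-∫ x in hyperplane (α t₀) (γ t₀), ((⟪deriv α t₀, x⟫ + deriv γ t₀) / ‖α t₀‖) •
        fderiv ℝ f x (‖α t₀‖⁻¹ • α t₀) ∂μH[(finrank ℝ E : ℝ) - 1]) t₀ := by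
  obtain ⟨p, hp⟩ := hyperplane_nonempty hne (γ t₀)
  have himage : ∀ᶠ t in 𝓝 t₀, hyperplane (α t) (γ t) =
      hyperplaneIsometry (α t₀) p (α t) (γ t) '' hyperplane (α t₀) (γ t₀) := by
    have hcont : ContinuousAt (fun t => ⟪α t, α t₀⟫) t₀ :=
      hα.continuousAt.inner continuousAt_const
    filter_upwards [hcont.eventually_ne (inner_self_ne_zero.2 hne)] with t ht
    exact (hyperplaneIsometry_image_hyperplane ht hp).symm
  have hvelocity : ∀ x ∈ hyperplane (α t₀) (γ t₀),
      fderiv ℝ f (hyperplaneIsometry (α t₀) p (α t₀) (γ t₀) x)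
        (deriv (fun t => hyperplaneIsometry (α t₀) p (α t) (γ t) x) t₀) =
      -(((⟪deriv α t₀, x⟫ + deriv γ t₀) / ‖α t₀‖) •
        fderiv ℝ f x (‖α t₀‖⁻¹ • α t₀)) := fun x hx => by
    rw [hyperplaneIsometry_apply_self hp hx, (hasDerivAt_hyperplaneIsometry
      (hα.differentiableAt one_ne_zero).hasDerivAt (hγ.differentiableAt one_ne_zero).hasDerivAt
      hne hp hx).deriv, ← map_smul, ← map_neg]
    congr 1
    module
  have hmain := hasDerivAt_setIntegral_hausdorffMeasure_image
    (Φ := fun t => hyperplaneIsometry (α t₀) p (α t) (γ t)) (isClosed_hyperplane (α t₀) (γ t₀))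
    (fun K hK => (hausdorffMeasure_hyperplane_inter_lt_top hne (γ t₀) hK).ne)
    (contDiffAt_hyperplaneIsometry hα hγ hne p) hf hfs
  rw [setIntegral_congr_fun (isClosed_hyperplane _ _).measurableSet hvelocity,
    integral_neg] at hmain
  exact hmain.congr_of_eventuallyEq (himage.mono fun t ht => by simp only [ht])

end MovingHyperplane

theorem stmt_10_general {E F : Type*} [NormedAddCommGroup E] [InnerProductSpace ℝ E]
    [FiniteDimensional ℝ E] [MeasurableSpace E] [BorelSpace E] [NormedAddCommGroup F]
    [NormedSpace ℝ F] [CompleteSpace F] {a : E} (ha : a ≠ 0) (b : E) (c e : ℝ) {f : E → F}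
    (hf : ContDiff ℝ 1 f) (hfs : HasCompactSupport f) :
    HasDerivAt
      (fun t : ℝ => ∫ x in {x | (⟪a, x⟫ + c) + t * (⟪b, x⟫ + e) = 0}, f x
        ∂μH[(finrank ℝ E : ℝ) - 1])
      (-∫ x in {x | ⟪a, x⟫ + c = 0}, ((⟪b, x⟫ + e) / ‖a‖) • fderiv ℝ f x (‖a‖⁻¹ • a)
        ∂μH[(finrank ℝ E : ℝ) - 1]) 0 := by
  have hα : HasDerivAt (fun t : ℝ => a + t • b) b 0 := by
    simpa using ((hasDerivAt_id (0 : ℝ)).smul_const b).const_add a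
  have hγ : HasDerivAt (fun t : ℝ => c + t * e) e 0 := by
    simpa using ((hasDerivAt_id (0 : ℝ)).mul_const e).const_add c
  have hlevel : ∀ t : ℝ, {x | (⟪a, x⟫ + c) + t * (⟪b, x⟫ + e) = 0} =
      hyperplane (a + t • b) (c + t * e) := fun t => by
    ext x
    simp only [hyperplane, mem_ofPred_eq, inner_add_left, real_inner_smul_left]
    ring_nf
  have hmoving := hasDerivAt_setIntegral_hyperplane (α := fun t => a + t • b)
    (γ := fun t => c + t * e) (t₀ := 0) (by fun_prop) (by fun_prop) (by simpa using ha) hf hfs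
  have hlevel₀ : {x | ⟪a, x⟫ + c = 0} = hyperplane a c := rfl
  simpa only [← hlevel, hlevel₀, hα.deriv, hγ.deriv, zero_smul, zero_mul, add_zero] using hmoving

/-- Hyperplane instance of Theorem 5.2/6.11: for the level-set perturbation
`φ_t = φ + t w` with affine `φ(x) = ⟨a,x⟩ + c`, `w(x) = ⟨b,x⟩ + e`, `a ≠ 0`, the
derivative at `t = 0` of `t ↦ ∫_{{φ_t = 0}} f dH^{d-1}` is
`-∫_{{φ = 0}} ⟨∇f, a/‖a‖⟩ · w/‖a‖ dH^{d-1}`. -/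
theorem stmt_10 (d : ℕ) (a b : EuclideanSpace ℝ (Fin d)) (ha : a ≠ 0) (c e : ℝ)
    (f : EuclideanSpace ℝ (Fin d) → ℝ) (hf : ContDiff ℝ 1 f)
    (hfs : HasCompactSupport f) :
    HasDerivAt
      (fun t : ℝ =>
        ∫ x in {x | (⟪a, x⟫ + c) + t * (⟪b, x⟫ + e) = 0}, f x ∂(μH[(d : ℝ) - 1]))
      (-∫ x in {x | ⟪a, x⟫ + c = 0},
          ⟪gradient f x, ‖a‖⁻¹ • a⟫ * ((⟪b, x⟫ + e) / ‖a‖) ∂(μH[(d : ℝ) - 1]))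
      0 := by
  simpa only [finrank_euclideanSpace_fin, smul_eq_mul, inner_gradient_left, mul_comm] using
    stmt_10_general ha b c e hf hfs
end

section
/- Let U ⊆ ℝ² be open, let X : U → ℝ² be continuously differentiable, and let φ, w : ℝ² → ℝ be continuously differentiable. Assume that φ(X(u,τ)) + τ·w(X(u,τ)) = 0 for all (u,τ) ∈ U, and that ∇φ(X(u,τ)) + τ·∇w(X(u,τ)) ≠ 0 for all (u,τ) ∈ U. Then for every (u,τ) ∈ U: |det DX(u,τ)| = |w(X(u,τ))| · ‖∂_u X(u,τ)‖ / ‖∇φ(X(u,τ)) + τ·∇w(X(u,τ))‖, where DX(u,τ) is the 2×2 Jacobian matrix with columns ∂_u X(u,τ) and ∂_τ X(u,τ). -/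
open MeasureTheory RealInnerProductSpace

/-!
Differentiating the constraint `φ ∘ X + τ · (w ∘ X) = c` in a direction `v` shows that
`g = ∇φ + τ ∇w` satisfies `⟪g, ∂ᵥX⟫ = -(∂ᵥτ) w`: thus `g` is orthogonal to `∂ᵤX`, and its inner
product with the derivative of `X` in `τ` is `-w`. In an oriented plane, the area spanned by these
two derivatives is therefore, up to sign, `‖∂ᵤX‖` times the component `-w / ‖g‖` of the second one
along the unit normal `g / ‖g‖`.
-/

open Module
open scoped Topology EuclideanSpace

section OrientedPlane

variable {V : Type*} [NormedAddCommGroup V] [InnerProductSpace ℝ V] [Fact (finrank ℝ V = 2)]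

theorem abs_areaForm_mul_norm_of_inner_eq_zero (o : Orientation ℝ V (Fin 2)) {g a : V}
    (hga : ⟪g, a⟫ = 0) (b : V) : |o.areaForm a b| * ‖g‖ = |⟪g, b⟫| * ‖a‖ := by
  rcases eq_or_ne g 0 with rfl | hg
  · simp
  · refine mul_right_cancel₀ (norm_ne_zero_iff.mpr hg) ?_
    have harea : ‖g‖ ^ 2 * o.areaForm a b = -(o.areaForm g a * ⟪g, b⟫) := by
      simpa [hga] using (o.inner_mul_areaForm_sub g a b).symm
    calc |o.areaForm a b| * ‖g‖ * ‖g‖ = |‖g‖ ^ 2 * o.areaForm a b| := by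
          rw [abs_mul, abs_sq]; ring
      _ = |o.areaForm g a| * |⟪g, b⟫| := by rw [harea, abs_neg, abs_mul]
      _ = |⟪g, b⟫| * ‖a‖ * ‖g‖ := by rw [o.abs_areaForm_of_orthogonal hga]; ring

theorem abs_areaForm_eq_abs_det_repr (o : Orientation ℝ V (Fin 2))
    (e : OrthonormalBasis (Fin 2) ℝ V) (a b : V) :
    |o.areaForm a b| = |Matrix.det !![e.repr a 0, e.repr b 0; e.repr a 1, e.repr b 1]| := by
  rw [o.areaForm_to_volumeForm, o.volumeForm_robust' e, Basis.det_apply, Matrix.det_fin_two,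
    Matrix.det_fin_two_of]
  simp [Basis.toMatrix_apply]

end OrientedPlane

theorem inner_gradient_add_smul_of_eventually_eq_const {E V : Type*}
    [NormedAddCommGroup E] [NormedSpace ℝ E]
    [NormedAddCommGroup V] [InnerProductSpace ℝ V] [CompleteSpace V]
    {X : E → V} {τ : E → ℝ} {φ w : V → ℝ} {X' : E →L[ℝ] V} {τ' : E →L[ℝ] ℝ} {gφ gw : V}
    {p : E} {c : ℝ} (hX : HasFDerivAt X X' p) (hτ : HasFDerivAt τ τ' p)
    (hφ : HasGradientAt φ gφ (X p)) (hw : HasGradientAt w gw (X p))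
    (hc : ∀ᶠ q in 𝓝 p, φ (X q) + τ q * w (X q) = c) (v : E) :
    ⟪gφ + τ p • gw, X' v⟫ = -(τ' v * w (X p)) := by
  have hderiv := (hφ.hasFDerivAt.comp p hX).add (hτ.mul (hw.hasFDerivAt.comp p hX))
  have hzero := hderiv.unique ((hasFDerivAt_const c p).congr_of_eventuallyEq hc)
  have hv : ⟪gφ, X' v⟫ + (τ p * ⟪gw, X' v⟫ + w (X p) * τ' v) = 0 := by
    simpa using DFunLike.congr_fun hzero v
  rw [inner_add_left, real_inner_smul_left]
  linarith

theorem stmt_11_general {E V : Type*} [NormedAddCommGroup E] [NormedSpace ℝ E]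
    [NormedAddCommGroup V] [InnerProductSpace ℝ V] [CompleteSpace V] [Fact (finrank ℝ V = 2)]
    (o : Orientation ℝ V (Fin 2)) {X : E × ℝ → V} {φ w : V → ℝ} {p : E × ℝ} {c : ℝ}
    (hX : DifferentiableAt ℝ X p) (hφ : DifferentiableAt ℝ φ (X p))
    (hw : DifferentiableAt ℝ w (X p)) (hc : ∀ᶠ q in 𝓝 p, φ (X q) + q.2 * w (X q) = c)
    (hnz : gradient φ (X p) + p.2 • gradient w (X p) ≠ 0) (u : E) :
    |o.areaForm (fderiv ℝ X p (u, 0)) (fderiv ℝ X p (0, 1))| =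
      |w (X p)| * ‖fderiv ℝ X p (u, 0)‖ / ‖gradient φ (X p) + p.2 • gradient w (X p)‖ := by
  have hinner := inner_gradient_add_smul_of_eventually_eq_const hX.hasFDerivAt hasFDerivAt_snd
    hφ.hasGradientAt hw.hasGradientAt hc
  have htangent : ⟪gradient φ (X p) + p.2 • gradient w (X p), fderiv ℝ X p (u, 0)⟫ = 0 := by
    simpa using hinner (u, 0)
  have hnormal :
      ⟪gradient φ (X p) + p.2 • gradient w (X p), fderiv ℝ X p (0, 1)⟫ = -w (X p) := by
    simpa using hinner (0, 1)
  rw [eq_div_iff (norm_ne_zero_iff.mpr hnz),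
    abs_areaForm_mul_norm_of_inner_eq_zero o htangent, hnormal, abs_neg]

/-- Two-dimensional Jacobian identity (6.19): for a `C¹` parameterization `X(u,τ)` of the
level sets `{φ + τw = 0}`, the Jacobian determinant of `X` satisfies
`|det DX| = |w∘X| ‖∂ᵤX‖ / ‖∇φ∘X + τ ∇w∘X‖`. -/
theorem stmt_11 (U : Set (ℝ × ℝ)) (hU : IsOpen U)
    (X : ℝ × ℝ → EuclideanSpace ℝ (Fin 2)) (hX : ContDiffOn ℝ 1 X U)
    (φ w : EuclideanSpace ℝ (Fin 2) → ℝ) (hφ : ContDiff ℝ 1 φ) (hw : ContDiff ℝ 1 w)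
    (hc : ∀ p ∈ U, φ (X p) + p.2 * w (X p) = 0)
    (hnz : ∀ p ∈ U, gradient φ (X p) + p.2 • gradient w (X p) ≠ 0) :
    ∀ p ∈ U,
      |Matrix.det !![fderiv ℝ X p (1, 0) 0, fderiv ℝ X p (0, 1) 0;
                     fderiv ℝ X p (1, 0) 1, fderiv ℝ X p (0, 1) 1]| =
        |w (X p)| * ‖fderiv ℝ X p (1, 0)‖ /
          ‖gradient φ (X p) + p.2 • gradient w (X p)‖ := by
  intro p hp
  have hUp : U ∈ 𝓝 p := hU.mem_nhds hp
  let e := EuclideanSpace.basisFun (Fin 2) ℝ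
  exact (abs_areaForm_eq_abs_det_repr e.toBasis.orientation e _ _).symm.trans <|
    stmt_11_general _ ((hX.contDiffAt hUp).differentiableAt one_ne_zero)
      (hφ.differentiable one_ne_zero _) (hw.differentiable one_ne_zero _)
      (Filter.eventually_of_mem hUp hc) (hnz p hp) 1
end

section
/- Let U ⊆ ℝ³ be open with coordinates (u,v,τ), let X : U → ℝ³ be continuously differentiable, and let φ, w : ℝ³ → ℝ be continuously differentiable. Assume that φ(X(u,v,τ)) + τ·w(X(u,v,τ)) = 0 for all (u,v,τ) ∈ U, and that ∇φ(X(u,v,τ)) + τ·∇w(X(u,v,τ)) ≠ 0 for all (u,v,τ) ∈ U. Then for every (u,v,τ) ∈ U: |det DX(u,v,τ)| = |w(X(u,v,τ))| · ‖∂_u X × ∂_v X‖ / ‖∇φ(X(u,v,τ)) + τ·∇w(X(u,v,τ))‖, where DX is the 3×3 Jacobian matrix with columns ∂_u X, ∂_v X, ∂_τ X, and × denotes the cross product in ℝ³. -/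
open MeasureTheory RealInnerProductSpace

/-!
At a point of `U` let `g = ∇φ(X) + τ ∇w(X)`, `a = ∂ᵤX`, `b = ∂ᵥX` and `c = ∂_τ X`. Differentiating
the constraint `φ(X) + τ w(X) = 0` in the three coordinate directions gives `⟪g, a⟫ = ⟪g, b⟫ = 0`
and `⟪g, c⟫ = -w(X)`. Since `g` is orthogonal to `a` and `b`, it is parallel to `a × b`, so that
expanding `c × (g × (a × b)) = 0` yields `(c · (a × b)) g = (g · c) (a × b)`. The triple product on
the left is `det DX`, and taking norms gives the identity.
-/

section CrossProduct

open Matrix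

variable {R : Type*} [CommRing R]

lemma det_fin_three_eq_dotProduct_cross (a b c : Fin 3 → R) :
    Matrix.det !![a 0, b 0, c 0; a 1, b 1, c 1; a 2, b 2, c 2] = c ⬝ᵥ a ⨯₃ b := by
  rw [triple_product_permutation, triple_product_eq_det, ← Matrix.det_transpose]
  congr 1
  ext i j
  fin_cases i <;> fin_cases j <;> rfl

lemma cross_cross_eq_zero_of_dotProduct_eq_zero {g a b : Fin 3 → R}
    (ha : g ⬝ᵥ a = 0) (hb : g ⬝ᵥ b = 0) : g ⨯₃ (a ⨯₃ b) = 0 := by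
  rw [cross_cross_eq_smul_sub_smul', hb, dotProduct_comm a g, ha, zero_smul, zero_smul, sub_zero]

lemma triple_product_smul_eq_dotProduct_smul_cross {g a b : Fin 3 → R}
    (ha : g ⬝ᵥ a = 0) (hb : g ⬝ᵥ b = 0) (c : Fin 3 → R) :
    (c ⬝ᵥ a ⨯₃ b) • g = (g ⬝ᵥ c) • a ⨯₃ b := by
  rw [← sub_eq_zero, ← cross_cross_eq_smul_sub_smul',
    cross_cross_eq_zero_of_dotProduct_eq_zero ha hb, map_zero]

end CrossProduct

lemma abs_det_mul_norm_eq_abs_inner_mul_norm_cross {g a b : EuclideanSpace ℝ (Fin 3)}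
    (ha : ⟪g, a⟫ = 0) (hb : ⟪g, b⟫ = 0) (c : EuclideanSpace ℝ (Fin 3)) :
    |Matrix.det !![a 0, b 0, c 0; a 1, b 1, c 1; a 2, b 2, c 2]| * ‖g‖ =
      |⟪g, c⟫| * ‖WithLp.toLp 2 (crossProduct a.ofLp b.ofLp)‖ := by
  have inner_eq_dotProduct (x : EuclideanSpace ℝ (Fin 3)) : ⟪g, x⟫ = g.ofLp ⬝ᵥ x.ofLp := by
    rw [EuclideanSpace.inner_eq_star_dotProduct, star_trivial, dotProduct_comm]
  rw [inner_eq_dotProduct] at ha hb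
  have parallel : (c.ofLp ⬝ᵥ crossProduct a.ofLp b.ofLp) • g =
      ⟪g, c⟫ • WithLp.toLp 2 (crossProduct a.ofLp b.ofLp) := by
    rw [inner_eq_dotProduct c]
    exact congrArg (WithLp.toLp 2) (triple_product_smul_eq_dotProduct_smul_cross ha hb c.ofLp)
  rw [det_fin_three_eq_dotProduct_cross]
  simpa only [norm_smul, Real.norm_eq_abs] using congrArg norm parallel

section LevelSets

open Topology

variable {E F : Type*} [NormedAddCommGroup E] [NormedSpace ℝ E]
  [NormedAddCommGroup F] [InnerProductSpace ℝ F] [CompleteSpace F]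

lemma inner_gradient_add_smul_gradient_of_eventuallyEq_const {X : E → F} {X' : E →L[ℝ] F}
    {t : E → ℝ} {t' : E →L[ℝ] ℝ} {φ w : F → ℝ} {φ' w' : F} {p : E} {k : ℝ}
    (hX : HasFDerivAt X X' p) (ht : HasFDerivAt t t' p)
    (hφ : HasGradientAt φ φ' (X p)) (hw : HasGradientAt w w' (X p))
    (hk : (fun q ↦ φ (X q) + t q * w (X q)) =ᶠ[𝓝 p] fun _ ↦ k) (x : E) :
    ⟪φ' + t p • w', X' x⟫ = -(t' x * w (X p)) := by
  have chain_rule := (hφ.hasFDerivAt.comp p hX).add (ht.mul (hw.hasFDerivAt.comp p hX))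
  have derivative_eq_zero := DFunLike.congr_fun
    (chain_rule.unique ((hasFDerivAt_const k p).congr_of_eventuallyEq hk)) x
  have expanded : ⟪φ', X' x⟫ + (t p * ⟪w', X' x⟫ + w (X p) * t' x) = 0 := derivative_eq_zero
  rw [inner_add_left, real_inner_smul_left]
  linear_combination expanded

end LevelSets

open Topology in
theorem stmt_12_general {X : ℝ × ℝ × ℝ → EuclideanSpace ℝ (Fin 3)}
    {φ w : EuclideanSpace ℝ (Fin 3) → ℝ} {p : ℝ × ℝ × ℝ} (hX : DifferentiableAt ℝ X p)
    (hφ : DifferentiableAt ℝ φ (X p)) (hw : DifferentiableAt ℝ w (X p))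
    (hc : ∀ᶠ q in 𝓝 p, φ (X q) + q.2.2 * w (X q) = 0)
    (hnz : gradient φ (X p) + p.2.2 • gradient w (X p) ≠ 0) :
    |Matrix.det !![fderiv ℝ X p (1, 0, 0) 0, fderiv ℝ X p (0, 1, 0) 0, fderiv ℝ X p (0, 0, 1) 0;
                   fderiv ℝ X p (1, 0, 0) 1, fderiv ℝ X p (0, 1, 0) 1, fderiv ℝ X p (0, 0, 1) 1;
                   fderiv ℝ X p (1, 0, 0) 2, fderiv ℝ X p (0, 1, 0) 2, fderiv ℝ X p (0, 0, 1) 2]| =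
      |w (X p)| *
        ‖(EuclideanSpace.equiv (Fin 3) ℝ).symm
            (crossProduct (EuclideanSpace.equiv (Fin 3) ℝ (fderiv ℝ X p (1, 0, 0)))
              (EuclideanSpace.equiv (Fin 3) ℝ (fderiv ℝ X p (0, 1, 0))))‖ /
        ‖gradient φ (X p) + p.2.2 • gradient w (X p)‖ := by
  let τ : ℝ × ℝ × ℝ →L[ℝ] ℝ := ContinuousLinearMap.snd ℝ ℝ ℝ ∘L ContinuousLinearMap.snd ℝ ℝ (ℝ × ℝ)
  have inner_gradient (x : ℝ × ℝ × ℝ) :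
      ⟪gradient φ (X p) + p.2.2 • gradient w (X p), fderiv ℝ X p x⟫ = -(x.2.2 * w (X p)) :=
    inner_gradient_add_smul_gradient_of_eventuallyEq_const hX.hasFDerivAt τ.hasFDerivAt
      hφ.hasGradientAt hw.hasGradientAt hc x
  have tangent_u := inner_gradient (1, 0, 0)
  have tangent_v := inner_gradient (0, 1, 0)
  simp only [zero_mul, neg_zero] at tangent_u tangent_v
  rw [eq_div_iff (norm_ne_zero_iff.mpr hnz),
    abs_det_mul_norm_eq_abs_inner_mul_norm_cross tangent_u tangent_v, inner_gradient, abs_neg,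
    one_mul]
  rfl

/-- Three-dimensional Jacobian identity (6.19): for a `C¹` parameterization `X(u,v,τ)` of
the level sets `{φ + τw = 0}`, the Jacobian determinant of `X` satisfies
`|det DX| = |w∘X| ‖∂ᵤX × ∂ᵥX‖ / ‖∇φ∘X + τ ∇w∘X‖`. -/
theorem stmt_12 (U : Set (ℝ × ℝ × ℝ)) (hU : IsOpen U)
    (X : ℝ × ℝ × ℝ → EuclideanSpace ℝ (Fin 3)) (hX : ContDiffOn ℝ 1 X U)
    (φ w : EuclideanSpace ℝ (Fin 3) → ℝ) (hφ : ContDiff ℝ 1 φ) (hw : ContDiff ℝ 1 w)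
    (hc : ∀ p ∈ U, φ (X p) + p.2.2 * w (X p) = 0)
    (hnz : ∀ p ∈ U, gradient φ (X p) + p.2.2 • gradient w (X p) ≠ 0) :
    ∀ p ∈ U,
      |Matrix.det !![fderiv ℝ X p (1, 0, 0) 0, fderiv ℝ X p (0, 1, 0) 0, fderiv ℝ X p (0, 0, 1) 0;
                     fderiv ℝ X p (1, 0, 0) 1, fderiv ℝ X p (0, 1, 0) 1, fderiv ℝ X p (0, 0, 1) 1;
                     fderiv ℝ X p (1, 0, 0) 2, fderiv ℝ X p (0, 1, 0) 2, fderiv ℝ X p (0, 0, 1) 2]| =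
        |w (X p)| *
          ‖(EuclideanSpace.equiv (Fin 3) ℝ).symm
              (crossProduct (EuclideanSpace.equiv (Fin 3) ℝ (fderiv ℝ X p (1, 0, 0)))
                (EuclideanSpace.equiv (Fin 3) ℝ (fderiv ℝ X p (0, 1, 0))))‖ /
          ‖gradient φ (X p) + p.2.2 • gradient w (X p)‖ := by
  intro p hp
  exact stmt_12_general ((hX.contDiffAt (hU.mem_nhds hp)).differentiableAt one_ne_zero)
    (hφ.differentiable one_ne_zero _) (hw.differentiable one_ne_zero _)
    (Filter.eventually_of_mem (hU.mem_nhds hp) hc) (hnz p hp)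
end

section
/- Let v₀, v₁, …, v_d ∈ ℝ^d be affinely independent, let K be the interior of their convex hull, let S be the relative interior of the convex hull of v₁, …, v_d (the open facet opposite v₀), and let w : ℝ^d → ℝ be the affine map determined by w(v₀) = 1 and w(vᵢ) = 0 for i = 1, …, d (the barycentric coordinate of v₀). Let φ : ℝ^d → ℝ be affine, let t > 0, and assume φ(v₀) + τ ≠ 0 for all τ ∈ (0, t]. Define Ŝ = { x ∈ S : φ(x)·(φ(v₀) + t) < 0 } and define X̂ : Ŝ × (0,t) → ℝ^d by X̂(x_S, τ) = x_S − [ φ(x_S) / ( φ(v₀) + τ − φ(x_S) ) ]·(v₀ − x_S). Then: (i) for each τ ∈ (0,t), X̂(·,τ) is a bijection from Ŝ onto { x ∈ K : φ(x) + τ·w(x) = 0 }; and (ii) X̂ is a bijection from Ŝ × (0,t) onto E_t = { x ∈ K : φ(x) < 0 < φ(x) + t·w(x) }. -/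
/-!
For fixed `τ` put `f = φ + τ w`. Since `w` vanishes on the facet `S`, the point `X̂(x, τ)` is the
zero of `f` on the line through `x` and `v₀`. In the other direction, `x` is the zero of `w` on the
line through `X̂(x, τ)` and `v₀`, so the two constructions are mutually inverse and it only remains
to follow the signs of the barycentric coordinates. As `φ(v₀) + τ` does not change sign on `(0, t]`,
the set `Ŝ` serves all slices `{f = 0}` at once; because `w > 0` on `K`, these slices are disjoint
and fill the layer.
-/

open Set AffineMap

section LineZero

variable {k V P : Type*} [Field k] [AddCommGroup V] [Module k V] [AddTorsor V P]

/-- The zero of the affine function `f` on the line through `x` and `v`. The division returns the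
junk value `x` when `f x = f v`. -/
def lineZero (f : P →ᵃ[k] k) (v x : P) : P :=
  lineMap x v (f x / (f x - f v))

theorem map_lineZero {f : P →ᵃ[k] k} {v x : P} (h : f x ≠ f v) : f (lineZero f v x) = 0 := by
  have := sub_ne_zero.2 h
  rw [lineZero, apply_lineMap, lineMap_apply_ring']
  field_simp
  ring

theorem map_lineZero_of_map_eq_zero (f : P →ᵃ[k] k) {g : P →ᵃ[k] k} (v : P) {x : P}
    (hx : g x = 0) : g (lineZero f v x) = f x / (f x - f v) * g v := by
  simp [lineZero, lineMap_apply_ring', hx]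

theorem lineZero_lineZero {f g : P →ᵃ[k] k} {v x : P} (hx : g x = 0) (hgv : g v ≠ 0)
    (hfv : f v ≠ 0) (h : f x ≠ f v) : lineZero g v (lineZero f v x) = x := by
  have hsub : f x - f v ≠ 0 := sub_ne_zero.2 h
  set σ := f x / (f x - f v) with hσ
  have hσ_sub : σ - 1 = f v / (f x - f v) := by rw [hσ]; field_simp; ring
  have hσ_ne : σ - 1 ≠ 0 := hσ_sub ▸ div_ne_zero hfv hsub
  have hratio : σ * g v / (σ * g v - g v) = σ / (σ - 1) := by
    rw [← sub_one_mul, mul_div_mul_right _ _ hgv]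
  rw [lineZero, map_lineZero_of_map_eq_zero f v hx, ← hσ, hratio, lineZero, ← hσ,
    lineMap_lineMap_left]
  have : 1 - (1 - σ / (σ - 1)) * (1 - σ) = 0 := by field_simp; ring
  rw [this, lineMap_apply_zero]

theorem lineZero_eq_sub_smul (f : V →ᵃ[k] k) (v x : V) :
    lineZero f v x = x - (f x / (f v - f x)) • (v - x) := by
  rw [lineZero, lineMap_apply, vsub_eq_sub, vadd_eq_add, ← neg_sub (f v), div_neg, neg_smul,
    neg_add_eq_sub]

end LineZero

section Coordinates

variable {ι k V P : Type*} [AddCommGroup V] [AddTorsor V P]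

theorem coord_eq_of_apply [Ring k] [Module k V] (b : AffineBasis ι k P) {i : ι} {w : P →ᵃ[k] k}
    (hi : w (b i) = 1) (hne : ∀ j ≠ i, w (b j) = 0) : b.coord i = w := by
  refine AffineMap.ext_on b.tot ?_
  rintro _ ⟨j, rfl⟩
  obtain rfl | hj := eq_or_ne j i
  · rw [b.coord_apply_eq, hi]
  · rw [b.coord_apply_ne hj.symm, hne j hj]

theorem exists_affineBasis_coord_eq [DivisionRing k] [Module k V] [FiniteDimensional k V]
    [Fintype ι] {v : ι → P} (hv : AffineIndependent k v)
    (hcard : Fintype.card ι = Module.finrank k V + 1) {i : ι} {w : P →ᵃ[k] k}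
    (hi : w (v i) = 1) (hne : ∀ j ≠ i, w (v j) = 0) :
    ∃ b : AffineBasis ι k P, ⇑b = v ∧ b.coord i = w :=
  let b : AffineBasis ι k P := ⟨v, hv, hv.affineSpan_eq_top_iff_card_eq_finrank_add_one.2 hcard⟩
  ⟨b, rfl, coord_eq_of_apply b hi hne⟩

theorem coord_eq_zero_of_mem_affineSpan_image [Ring k] [Module k V] (b : AffineBasis ι k P)
    {s : Set ι} {i : ι} (hi : i ∉ s) {x : P} (hx : x ∈ affineSpan k (b '' s)) :
    b.coord i x = 0 := by
  have hvertices : (b '' s).EqOn (b.coord i) (AffineMap.const k P 0) := by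
    rintro _ ⟨j, hj, rfl⟩
    exact b.coord_apply_ne (ne_of_mem_of_not_mem hj hi).symm
  exact eqOn_affineSpan hvertices hx

theorem coord_lineMap_vertex_of_ne [CommRing k] [Module k V] (b : AffineBasis ι k P) {i j : ι}
    (hj : j ≠ i) (x : P) (c : k) : b.coord j (lineMap x (b i) c) = (1 - c) * b.coord j x := by
  rw [apply_lineMap, lineMap_apply_ring, b.coord_apply_ne hj, mul_zero, add_zero]

theorem coord_lt_one_of_nonneg [Finite ι] [Ring k] [LinearOrder k] [IsOrderedRing k]
    [Module k V] (b : AffineBasis ι k P) {i : ι} {x : P} (h : ∀ j, 0 ≤ b.coord j x)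
    (hx : x ≠ b i) : b.coord i x < 1 := by
  cases nonempty_fintype ι
  classical
  by_contra! hi
  have hsum := b.sum_coord_apply_eq_one x
  rw [← Finset.add_sum_erase _ _ (Finset.mem_univ i)] at hsum
  have hrest : ∑ j ∈ Finset.univ.erase i, b.coord j x = 0 :=
    le_antisymm ((add_le_iff_nonpos_right _).1 (hsum.trans_le hi))
      (Finset.sum_nonneg fun j _ => h j)
  have hzero := (Finset.sum_eq_zero_iff_of_nonneg fun j _ => h j).1 hrest
  refine hx (b.ext_elem fun j => ?_)
  obtain rfl | hj := eq_or_ne j i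
  · rw [b.coord_apply_eq, ← hsum, hrest, add_zero]
  · rw [b.coord_apply_ne hj, hzero j (Finset.mem_erase.2 ⟨hj, Finset.mem_univ j⟩)]

end Coordinates

section OpenFace

variable {ι k V P : Type*} [AddCommGroup V] [AddTorsor V P]

/-- The relatively open face, spanned by the vertices with index in `s`, of the simplex with
vertices `b`. It is described by barycentric coordinates, so that it makes sense over any ordered
ring; see `intrinsicInterior_convexHull_image` for the topological description. -/
def openFace [Ring k] [LinearOrder k] [Module k V] (b : AffineBasis ι k P) (s : Set ι) : Set P :=
  {x | (∀ j ∈ s, 0 < b.coord j x) ∧ ∀ j ∉ s, b.coord j x = 0}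

variable [Field k] [LinearOrder k] [IsStrictOrderedRing k] [Module k V]

theorem div_sub_mem_Ioo_of_mul_neg {x y : k} (h : x * y < 0) : x / (x - y) ∈ Ioo 0 1 := by
  obtain ⟨hx, hy⟩ | ⟨hx, hy⟩ := mul_neg_iff.1 h
  · have hxy : 0 < x - y := by linarith
    exact ⟨div_pos hx hxy, (div_lt_one hxy).2 (by linarith)⟩
  · have hxy : x - y < 0 := by linarith
    exact ⟨div_pos_of_neg_of_neg hx hxy, (div_lt_one_of_neg hxy).2 (by linarith)⟩

theorem lineZero_mem_openFace_univ (b : AffineBasis ι k P) {i : ι} {f : P →ᵃ[k] k} {x : P}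
    (hx : x ∈ openFace b {i}ᶜ) (hfx : f x * f (b i) < 0) :
    lineZero f (b i) x ∈ openFace b univ := by
  obtain ⟨hpos, hzero⟩ := hx
  obtain ⟨hσ_pos, hσ_lt⟩ := div_sub_mem_Ioo_of_mul_neg hfx
  refine ⟨fun j _ => ?_, fun j hj => absurd (mem_univ j) hj⟩
  obtain rfl | hj := eq_or_ne j i
  · rw [map_lineZero_of_map_eq_zero f _ (hzero j (by simp)), b.coord_apply_eq, mul_one]
    exact hσ_pos
  · rw [lineZero, coord_lineMap_vertex_of_ne b hj]
    exact mul_pos (sub_pos.2 hσ_lt) (hpos j hj)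

theorem lineZero_coord_mem_openFace_compl (b : AffineBasis ι k P) {i : ι} {p : P}
    (hp : p ∈ openFace b univ) (hi : b.coord i p < 1) :
    lineZero (b.coord i) (b i) p ∈ openFace b {i}ᶜ := by
  have hparam : b.coord i p / (b.coord i p - b.coord i (b i)) < 0 := by
    rw [b.coord_apply_eq]
    exact div_neg_of_pos_of_neg (hp.1 i (mem_univ i)) (sub_neg.2 hi)
  refine ⟨fun j hj => ?_, fun j hj => ?_⟩
  · rw [lineZero, coord_lineMap_vertex_of_ne b hj]
    exact mul_pos (by linarith) (hp.1 j (mem_univ j))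
  · obtain rfl : j = i := by simpa using hj
    exact map_lineZero (by rw [b.coord_apply_eq]; exact hi.ne)

theorem bijOn_lineZero [Finite ι] (b : AffineBasis ι k P) (i : ι) {f : P →ᵃ[k] k}
    (hf : f (b i) ≠ 0) :
    BijOn (lineZero f (b i)) {x ∈ openFace b {i}ᶜ | f x * f (b i) < 0}
      {p ∈ openFace b univ | f p = 0} := by
  have hne {x : P} (hx : f x * f (b i) < 0) : f x ≠ f (b i) := fun h =>
    (mul_self_nonneg (f (b i))).not_gt (h ▸ hx)
  have hvertex : b.coord i (b i) ≠ 0 := by rw [b.coord_apply_eq]; exact one_ne_zero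
  have hlt {p : P} (hp : p ∈ openFace b univ) (hfp : f p = 0) : b.coord i p < 1 :=
    coord_lt_one_of_nonneg b (fun j => (hp.1 j (mem_univ j)).le) fun h => hf (h ▸ hfp)
  refine InvOn.bijOn (f' := lineZero (b.coord i) (b i)) ⟨?_, ?_⟩ ?_ ?_
  · rintro x ⟨hx, hfx⟩
    exact lineZero_lineZero (hx.2 i (by simp)) hvertex hf (hne hfx)
  · rintro p ⟨hp, hfp⟩
    exact lineZero_lineZero hfp hf hvertex (by rw [b.coord_apply_eq]; exact (hlt hp hfp).ne)
  · rintro x ⟨hx, hfx⟩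
    exact ⟨lineZero_mem_openFace_univ b hx hfx, map_lineZero (hne hfx)⟩
  · rintro p ⟨hp, hfp⟩
    refine ⟨lineZero_coord_mem_openFace_compl b hp (hlt hp hfp), ?_⟩
    rw [map_lineZero_of_map_eq_zero _ _ hfp, b.coord_apply_eq, mul_assoc]
    exact mul_neg_of_neg_of_pos
      (div_neg_of_pos_of_neg (hp.1 i (mem_univ i)) (sub_neg.2 (hlt hp hfp)))
      (mul_self_pos.2 hf)

theorem mem_convexHull_image_of_coord [Finite ι] (b : AffineBasis ι k V) {s : Set ι} {x : V}
    (hnonneg : ∀ j ∈ s, 0 ≤ b.coord j x) (hzero : ∀ j ∉ s, b.coord j x = 0) :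
    x ∈ convexHull k (b '' s) := by
  classical
  cases nonempty_fintype ι
  have hsupport {j : ι} (hj : j ∉ Finset.univ.filter (· ∈ s)) : b.coord j x = 0 :=
    hzero j (by simpa using hj)
  have hsum : ∑ j with j ∈ s, b.coord j x = 1 := by
    rw [← b.sum_coord_apply_eq_one x]
    exact Finset.sum_subset (Finset.subset_univ _) fun j _ hj => hsupport hj
  have hcomb : ∑ j with j ∈ s, b.coord j x • b j = x := by
    conv_rhs => rw [← b.linear_combination_coord_eq_self x]
    exact Finset.sum_subset (Finset.subset_univ _) fun j _ hj => by rw [hsupport hj, zero_smul]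
  rw [← hcomb]
  refine (convex_convexHull k _).sum_mem (fun j hj => hnonneg j (by simpa using hj)) hsum
    fun j hj => subset_convexHull k _ (mem_image_of_mem b (by simpa using hj))

end OpenFace

section IntrinsicInterior

section TopologicalAddTorsor

variable {V P : Type*} [AddCommGroup V] [Module ℝ V] [TopologicalSpace V] [ContinuousSMul ℝ V]
  [TopologicalSpace P] [AddTorsor V P] [IsTopologicalAddTorsor P] {s : Set P} {x y : P}

theorem exists_one_lt_lineMap_mem_of_mem_intrinsicInterior (hx : x ∈ intrinsicInterior ℝ s)
    (hy : y ∈ affineSpan ℝ s) : ∃ c : ℝ, 1 < c ∧ lineMap y x c ∈ s := by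
  obtain ⟨x, hx, rfl⟩ := mem_intrinsicInterior.1 hx
  let γ : ℝ → affineSpan ℝ s := fun c => ⟨lineMap y x c, lineMap_mem c hy x.2⟩
  have hγ : Continuous γ := lineMap_continuous.subtype_mk _
  have hγ_one : γ 1 = x := Subtype.ext (lineMap_apply_one _ _)
  have hnear : ∀ᶠ c in nhds 1, γ c ∈ interior ((↑) ⁻¹' s) :=
    hγ.continuousAt.eventually_mem (isOpen_interior.mem_nhds (by rwa [hγ_one]))
  obtain ⟨c, hc, hc_gt⟩ :=
    ((hnear.filter_mono nhdsWithin_le_nhds).and (self_mem_nhdsWithin (s := Ioi 1))).exists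
  have hmem : γ c ∈ ((↑) ⁻¹' s : Set (affineSpan ℝ s)) := interior_subset hc
  exact ⟨c, hc_gt, hmem⟩

theorem map_pos_of_mem_intrinsicInterior {f : P →ᵃ[ℝ] ℝ} (hf : ∀ z ∈ s, 0 ≤ f z) (hy : y ∈ s)
    (hfy : 0 < f y) (hx : x ∈ intrinsicInterior ℝ s) : 0 < f x := by
  obtain ⟨c, hc, hmem⟩ :=
    exists_one_lt_lineMap_mem_of_mem_intrinsicInterior hx (subset_affineSpan ℝ s hy)
  have hline : 0 ≤ (1 - c) * f y + c * f x := by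
    simpa only [apply_lineMap, lineMap_apply_ring] using hf _ hmem
  nlinarith

end TopologicalAddTorsor

variable {ι E : Type*} [Finite ι] [NormedAddCommGroup E] [NormedSpace ℝ E]

theorem interior_convexHull_range_eq_openFace (b : AffineBasis ι ℝ E) :
    interior (convexHull ℝ (range b)) = openFace b univ := by
  ext x
  simp [b.interior_convexHull, openFace]

theorem intrinsicInterior_convexHull_image (b : AffineBasis ι ℝ E) (s : Set ι) :
    intrinsicInterior ℝ (convexHull ℝ (b '' s)) = openFace b s := by
  have := b.finiteDimensional
  have hzero {x : E} (hx : x ∈ affineSpan ℝ (convexHull ℝ (b '' s))) :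
      ∀ j ∉ s, b.coord j x = 0 := fun j hj =>
    coord_eq_zero_of_mem_affineSpan_image b hj (by rwa [affineSpan_convexHull] at hx)
  have hnonneg {x : E} (hx : x ∈ convexHull ℝ (b '' s)) (j : ι) : 0 ≤ b.coord j x := by
    have hx_simplex := convexHull_mono (image_subset_range b s) hx
    rw [b.convexHull_eq_nonneg_coord] at hx_simplex
    exact hx_simplex j
  refine Subset.antisymm (fun x hx => ⟨fun j hj => ?_, ?_⟩) fun x hx => ?_
  · exact map_pos_of_mem_intrinsicInterior (fun z hz => hnonneg hz j)
      (subset_convexHull ℝ _ (mem_image_of_mem b hj)) (by simp) hx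
  · exact hzero (subset_affineSpan ℝ _ (intrinsicInterior_subset hx))
  · have hx_hull := mem_convexHull_image_of_coord b (fun j hj => (hx.1 j hj).le) hx.2
    refine mem_intrinsicInterior.2 ⟨⟨x, subset_affineSpan ℝ _ hx_hull⟩, ?_, rfl⟩
    refine mem_interior.2 ⟨⋂ j ∈ s, {y | 0 < b.coord j y}, fun y hy => ?_, ?_, ?_⟩
    · exact mem_convexHull_image_of_coord b (fun j hj => le_of_lt (mem_iInter₂.1 hy j hj))
        (hzero y.2)
    · exact s.toFinite.isOpen_biInter fun j _ => isOpen_lt continuous_const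
        ((continuous_barycentric_coord b j).comp continuous_subtype_val)
    · exact mem_iInter₂.2 hx.1

end IntrinsicInterior

section Layer

theorem bijOn_prod_of_bijOn_slices {α β γ : Type*} {f : α → β → γ} {s : Set α} {t : Set β}
    {u : β → Set γ} (h : ∀ y ∈ t, BijOn (fun x => f x y) s (u y)) (hu : t.PairwiseDisjoint u) :
    BijOn (fun q : α × β => f q.1 q.2) (s ×ˢ t) (⋃ y ∈ t, u y) := by
  refine ⟨?_, ?_, ?_⟩
  · rintro ⟨x, y⟩ ⟨hx, hy⟩
    exact mem_biUnion hy ((h y hy).mapsTo hx)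
  · rintro ⟨x, y⟩ ⟨hx, hy⟩ ⟨x', y'⟩ ⟨hx', hy'⟩ (heq : f x y = f x' y')
    obtain rfl : y = y' := hu.elim_set hy hy' (f x y) ((h y hy).mapsTo hx)
      (heq ▸ (h y' hy').mapsTo hx')
    exact congrArg (·, y) ((h y hy).injOn hx hx' heq)
  · intro z hz
    obtain ⟨y, hy, hzy⟩ := mem_iUnion₂.1 hz
    obtain ⟨x, hx, rfl⟩ := (h y hy).surjOn hzy
    exact ⟨(x, y), ⟨hx, hy⟩, rfl⟩

variable {α k : Type*} [Field k] {K : Set α} {φ w : α → k}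

theorem pairwiseDisjoint_slices (hw : ∀ x ∈ K, w x ≠ 0) (T : Set k) :
    T.PairwiseDisjoint fun τ => {x ∈ K | φ x + τ * w x = 0} := by
  intro τ _ τ' _ hne
  refine disjoint_left.2 ?_
  rintro x ⟨hx, h⟩ ⟨_, h'⟩
  exact hne (mul_right_cancel₀ (hw x hx) (add_left_cancel (h.trans h'.symm)))

theorem layer_eq_iUnion_slices [LinearOrder k] [IsStrictOrderedRing k] (hw : ∀ x ∈ K, 0 < w x)
    (t : k) : {x ∈ K | φ x < 0 ∧ 0 < φ x + t * w x} =
      ⋃ τ ∈ Ioo 0 t, {x ∈ K | φ x + τ * w x = 0} := by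
  ext x
  simp only [mem_iUnion₂, mem_ofPred_eq, exists_prop]
  constructor
  · rintro ⟨hx, hneg, hpos⟩
    have hwx := hw x hx
    refine ⟨-φ x / w x, ⟨div_pos (neg_pos.2 hneg) hwx, ?_⟩, hx, ?_⟩
    · rw [div_lt_iff₀ hwx]
      linarith
    · rw [div_mul_cancel₀ _ hwx.ne', add_neg_cancel]
  · rintro ⟨τ, ⟨hτ_pos, hτ_lt⟩, hx, hzero⟩
    have hlow := mul_pos hτ_pos (hw x hx)
    have hhigh := mul_lt_mul_of_pos_right hτ_lt (hw x hx)
    exact ⟨hx, by linarith, by linarith⟩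

theorem add_mul_add_pos_of_forall_ne_zero [LinearOrder k] [IsStrictOrderedRing k] {a τ t : k}
    (hτt : τ ≤ t) (h : ∀ r ∈ Icc τ t, a + r ≠ 0) : 0 < (a + τ) * (a + t) := by
  obtain hτ | hτ := (h τ ⟨le_rfl, hτt⟩).lt_or_gt
  · refine mul_pos_of_neg_of_neg hτ (not_le.1 fun ht => ?_)
    exact h (-a) ⟨by linarith, by linarith⟩ (add_neg_cancel a)
  · exact mul_pos hτ (by linarith)

theorem mul_neg_iff_mul_neg_of_mul_pos [LinearOrder k] [IsStrictOrderedRing k] {x a c : k}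
    (h : 0 < a * c) : x * a < 0 ↔ x * c < 0 := by
  rw [mul_neg_iff, mul_neg_iff, pos_iff_pos_of_mul_pos h, neg_iff_neg_of_mul_pos h]

variable {ι V : Type*} [LinearOrder k] [IsStrictOrderedRing k] [AddCommGroup V] [Module k V]

theorem bijOn_slice [Finite ι] (b : AffineBasis ι k V) (i : ι) (φ : V →ᵃ[k] k) {τ t : k}
    (hτt : τ ≤ t) (h : ∀ r ∈ Icc τ t, φ (b i) + r ≠ 0) :
    BijOn (fun x => x - (φ x / (φ (b i) + τ - φ x)) • (b i - x))
      {x ∈ openFace b {i}ᶜ | φ x * (φ (b i) + t) < 0}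
      {p ∈ openFace b univ | φ p + τ * b.coord i p = 0} := by
  let f := φ + τ • b.coord i
  have hf_vertex : f (b i) = φ (b i) + τ := by simp [f]
  have hf_facet {x : V} (hx : x ∈ openFace b {i}ᶜ) : f x = φ x := by
    simp [f, hx.2 i (by simp)]
  have hsource : {x ∈ openFace b {i}ᶜ | f x * f (b i) < 0} =
      {x ∈ openFace b {i}ᶜ | φ x * (φ (b i) + t) < 0} :=
    sep_ext_iff.2 fun x hx => by
      rw [hf_facet hx, hf_vertex,
        mul_neg_iff_mul_neg_of_mul_pos (add_mul_add_pos_of_forall_ne_zero hτt h)]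
  have hbij := bijOn_lineZero b i (f := f) (hf_vertex ▸ h τ ⟨le_rfl, hτt⟩)
  rw [hsource] at hbij
  refine hbij.congr fun x hx => ?_
  rw [lineZero_eq_sub_smul, hf_facet hx.1, hf_vertex]

end Layer

theorem stmt_14_general {ι E : Type*} [Finite ι] [NormedAddCommGroup E] [NormedSpace ℝ E]
    (b : AffineBasis ι ℝ E) (i : ι) (φ : E →ᵃ[ℝ] ℝ) {t : ℝ}
    (hτ : ∀ τ ∈ Ioc 0 t, φ (b i) + τ ≠ 0) :
    (∀ τ ∈ Ioo 0 t,
      BijOn (fun x => x - (φ x / (φ (b i) + τ - φ x)) • (b i - x))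
        {x ∈ intrinsicInterior ℝ (convexHull ℝ (b '' {i}ᶜ)) | φ x * (φ (b i) + t) < 0}
        {x ∈ interior (convexHull ℝ (range b)) | φ x + τ * b.coord i x = 0}) ∧
    BijOn (fun q : E × ℝ => q.1 - (φ q.1 / (φ (b i) + q.2 - φ q.1)) • (b i - q.1))
      ({x ∈ intrinsicInterior ℝ (convexHull ℝ (b '' {i}ᶜ)) | φ x * (φ (b i) + t) < 0} ×ˢ Ioo 0 t)
      {x ∈ interior (convexHull ℝ (range b)) | φ x < 0 ∧ 0 < φ x + t * b.coord i x} := by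
  have hcoord_pos : ∀ x ∈ openFace b univ, 0 < b.coord i x := fun x hx => hx.1 i (mem_univ i)
  rw [intrinsicInterior_convexHull_image, interior_convexHull_range_eq_openFace,
    layer_eq_iUnion_slices hcoord_pos]
  have hslice (τ : ℝ) (h : τ ∈ Ioo 0 t) :=
    bijOn_slice b i φ h.2.le fun r hr => hτ r ⟨h.1.trans_le hr.1, hr.2⟩
  exact ⟨hslice, bijOn_prod_of_bijOn_slices hslice <|
    pairwiseDisjoint_slices (fun x hx => (hcoord_pos x hx).ne') _⟩

/-- Lemma 6.5 for a single simplicial element: with the level-set perturbation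
`φ_τ = φ + τ w`, where `w` is the barycentric coordinate of the vertex `v₀`, the layer
`E_t = {x ∈ K | φ(x) < 0 < φ(x) + t w(x)}` inside the open simplex `K` is parameterized
by `X̂(x_S, τ) = x_S - [φ(x_S)/(φ(v₀) + τ - φ(x_S))]·(v₀ - x_S)` over the part
`Ŝ = {x ∈ S | φ(x)(φ(v₀)+t) < 0}` of the open facet `S` opposite `v₀`, and each
`X̂(·,τ)` parameterizes the slice `{x ∈ K | φ(x) + τ w(x) = 0}`. -/
theorem stmt_14 (d : ℕ) (v : Fin (d + 1) → EuclideanSpace ℝ (Fin d))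
    (hv : AffineIndependent ℝ v)
    (w φ : EuclideanSpace ℝ (Fin d) →ᵃ[ℝ] ℝ)
    (hw0 : w (v 0) = 1) (hwi : ∀ i : Fin d, w (v i.succ) = 0)
    (t : ℝ) (ht : 0 < t) (hτ : ∀ τ ∈ Set.Ioc (0:ℝ) t, φ (v 0) + τ ≠ 0) :
    (∀ τ ∈ Set.Ioo (0:ℝ) t,
      Set.BijOn (fun xS => xS - (φ xS / (φ (v 0) + τ - φ xS)) • (v 0 - xS))
        {x ∈ intrinsicInterior ℝ (convexHull ℝ (Set.range (v ∘ Fin.succ))) |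
          φ x * (φ (v 0) + t) < 0}
        {x ∈ interior (convexHull ℝ (Set.range v)) | φ x + τ * w x = 0}) ∧
    Set.BijOn (fun q : EuclideanSpace ℝ (Fin d) × ℝ =>
        q.1 - (φ q.1 / (φ (v 0) + q.2 - φ q.1)) • (v 0 - q.1))
      ({x ∈ intrinsicInterior ℝ (convexHull ℝ (Set.range (v ∘ Fin.succ))) |
          φ x * (φ (v 0) + t) < 0} ×ˢ Set.Ioo (0:ℝ) t)
      {x ∈ interior (convexHull ℝ (Set.range v)) | φ x < 0 ∧ 0 < φ x + t * w x} := by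
  obtain ⟨b, rfl, rfl⟩ := exists_affineBasis_coord_eq hv (by simp) hw0
    (Fin.cases (absurd rfl) fun i _ => hwi i)
  simpa only [range_comp, Fin.range_succ] using stmt_14_general b 0 φ hτ
end

section
/- In ℝ², let L = { x : x₁ = 0 }, K₁ = { x : x₁ ≤ 0 }, K₂ = { x : x₁ ≥ 0 }. Let a₁, a₂, b₁, b₂ ∈ ℝ² and c₁, c₂, e₁, e₂ ∈ ℝ define affine maps φᵢ(x) = ⟨aᵢ,x⟩ + cᵢ and wᵢ(x) = ⟨bᵢ,x⟩ + eᵢ (i = 1,2), and assume φ₁ = φ₂ and w₁ = w₂ on L; write α = ⟨a₁, e₂⟩ = ⟨a₂, e₂⟩ for the common tangential slope along L, and assume a₁ ≠ 0, a₂ ≠ 0, and α ≠ 0. Let p be the unique point of L with φ₁(p) = 0. Let n^S = sign(α)·e₂, let m₁ be the unit vector orthogonal to a₁ with positive first component, and let m₂ be the unit vector orthogonal to a₂ with negative first component. Let f₁, f₂ : ℝ² → ℝ be continuously differentiable with compact support, and for t near 0 define J₂(t) = ∫_{{x ∈ K₁ : φ₁(x) + t·w₁(x) = 0}} f₁ dH¹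 + ∫_{{x ∈ K₂ : φ₂(x) + t·w₂(x) = 0}} f₂ dH¹. Then J₂ has derivative at t = 0 equal to −Σ_{i=1,2} ∫_{{x ∈ Kᵢ : φᵢ(x) = 0}} ⟨∇fᵢ(x), aᵢ/‖aᵢ‖⟩ · ( wᵢ(x)/‖aᵢ‖ ) dH¹(x) − ⟨ n^S, f₁(p)·m₁ + f₂(p)·m₂ ⟩ · w₁(p)/|α|. -/
open MeasureTheory RealInnerProductSpace

/-!
Parametrise the perturbed segment in each element by `s ↦ p t + s • m t`, `s ≤ 0`, where `p t` is
its endpoint on the face and `m t` its outward unit co-normal. This is an isometry for every `t`,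
so the `H¹`-integral becomes an integral over a fixed half-line and can be differentiated under
the integral sign. The velocity `p' + s • m'` has normal component `-w / ‖a‖`, because the
point stays on the moving zero line, and its tangential component is the constant `⟪m, p'⟫`,
because `m t` remains a unit vector. The normal component gives the normal-derivative term. The
tangential one integrates, by the fundamental theorem of calculus, to `⟪m, p'⟫ * f p`; since the
endpoint moves along the face with velocity `-(w p / ⟪a, e⟫) • e`, this is the jump term.
-/

open Filter Topology Set Module

section MovingLine

variable {E F : Type*} [NormedAddCommGroup E] [NormedSpace ℝ E]

lemma exists_eventually_forall_lt_abs_comp_line_eq_zero [Zero F] {g : E → F}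
    (hg : HasCompactSupport g) (p : E) {v : E} (hv : v ≠ 0) :
    ∃ ρ : ℝ, ∀ᶠ q : E × E in 𝓝 (p, v), ∀ s : ℝ, ρ < |s| → g (q.1 + s • q.2) = 0 := by
  obtain ⟨R, hR⟩ := hg.isCompact.isBounded.subset_closedBall 0
  have hv' : 0 < ‖v‖ := norm_pos_iff.mpr hv
  have hp : ∀ᶠ q : E × E in 𝓝 (p, v), ‖q.1‖ < ‖p‖ + 1 :=
    continuous_fst.norm.continuousAt.eventually_lt_const (lt_add_one _)
  have hq : ∀ᶠ q : E × E in 𝓝 (p, v), ‖v‖ / 2 < ‖q.2‖ :=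
    continuous_snd.norm.continuousAt.eventually_const_lt (half_lt_self hv')
  refine ⟨(R + ‖p‖ + 1) / (‖v‖ / 2), ?_⟩
  filter_upwards [hp, hq] with q hq₁ hq₂ s hs
  by_contra hne
  have hle : ‖q.1 + s • q.2‖ ≤ R := mem_closedBall_zero_iff.mp (hR (subset_tsupport g hne))
  have htri : |s| * ‖q.2‖ ≤ ‖q.1 + s • q.2‖ + ‖q.1‖ := by
    simpa [norm_smul] using norm_sub_le (q.1 + s • q.2) q.1
  have hfar : R + ‖p‖ + 1 < |s| * (‖v‖ / 2) := (div_lt_iff₀ (half_pos hv')).mp hs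
  have hmono : |s| * (‖v‖ / 2) ≤ |s| * ‖q.2‖ := by gcongr
  linarith

lemma hasCompactSupport_comp_line [Zero F] {g : E → F} (hg : HasCompactSupport g) (p : E) {v : E}
    (hv : v ≠ 0) : HasCompactSupport fun s : ℝ => g (p + s • v) := by
  obtain ⟨ρ, hρ⟩ := exists_eventually_forall_lt_abs_comp_line_eq_zero hg p hv
  exact .intro (isCompact_Icc (a := -ρ) (b := ρ)) fun s hs =>
    hρ.self_of_nhds s (not_le.mp (mt abs_le.mp hs))

variable [NormedAddCommGroup F] [NormedSpace ℝ F]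

lemma hasFDerivAt_comp_line {f : E → F} (hf : Differentiable ℝ f) (s : ℝ) (q : E × E) :
    HasFDerivAt (fun q : E × E => f (q.1 + s • q.2))
      ((fderiv ℝ f (q.1 + s • q.2)).comp (.fst ℝ E E + s • .snd ℝ E E)) q :=
  (hf _).hasFDerivAt.comp q (hasFDerivAt_fst.add (hasFDerivAt_snd.const_smul s))

lemma norm_fst_add_smul_snd_le (s : ℝ) :
    ‖ContinuousLinearMap.fst ℝ E E + s • ContinuousLinearMap.snd ℝ E E‖ ≤ 1 + |s| := by
  refine (norm_add_le _ _).trans (add_le_add (ContinuousLinearMap.norm_fst_le ℝ E E) ?_)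
  rw [norm_smul, Real.norm_eq_abs]
  exact mul_le_of_le_one_right (abs_nonneg s) (ContinuousLinearMap.norm_snd_le ℝ E E)

variable {f : E → F} (hf : ContDiff ℝ 1 f) (hfs : HasCompactSupport f)
  (μ : Measure ℝ) [IsFiniteMeasureOnCompacts μ]

include hf hfs

lemma exists_integrable_bound_fderiv_comp_line (p : E) {v : E} (hv : v ≠ 0) :
    ∃ bound : ℝ → ℝ, Integrable bound μ ∧ ∀ᶠ q : E × E in 𝓝 (p, v), ∀ s : ℝ,
      ‖(fderiv ℝ f (q.1 + s • q.2)).comp (.fst ℝ E E + s • .snd ℝ E E)‖ ≤ bound s := by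
  obtain ⟨C, hC⟩ := (hfs.fderiv ℝ).exists_bound_of_continuous (hf.continuous_fderiv one_ne_zero)
  obtain ⟨ρ, hρ⟩ := exists_eventually_forall_lt_abs_comp_line_eq_zero (hfs.fderiv ℝ) p hv
  have hC₀ : 0 ≤ C := (norm_nonneg _).trans (hC 0)
  refine ⟨(Icc (-ρ) ρ).indicator fun s => C * (1 + |s|), ?_, ?_⟩
  · exact (integrable_indicator_iff measurableSet_Icc).mpr
      (Continuous.continuousOn (by fun_prop)).integrableOn_Icc
  filter_upwards [hρ] with q hq s
  by_cases hs : s ∈ Icc (-ρ) ρ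
  · rw [indicator_of_mem hs]
    exact (ContinuousLinearMap.opNorm_comp_le _ _).trans
      (mul_le_mul (hC _) (norm_fst_add_smul_snd_le s) (norm_nonneg _) hC₀)
  · rw [indicator_of_notMem hs, hq s (not_le.mp (mt abs_le.mp hs)), ContinuousLinearMap.zero_comp,
      norm_zero]

lemma integrable_fderiv_comp_line (p : E) {v : E} (hv : v ≠ 0) :
    Integrable (fun s : ℝ => (fderiv ℝ f (p + s • v)).comp
      (ContinuousLinearMap.fst ℝ E E + s • ContinuousLinearMap.snd ℝ E E)) μ := by
  refine Continuous.integrable_of_hasCompactSupport ?_ ?_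
  · have := hf.continuous_fderiv one_ne_zero
    fun_prop
  · exact (hasCompactSupport_comp_line (hfs.fderiv ℝ) p hv).mono fun s hs h₀ =>
      hs (by simp only [h₀, ContinuousLinearMap.zero_comp])

lemma hasFDerivAt_integral_line (p : E) {v : E} (hv : v ≠ 0) :
    HasFDerivAt (fun q : E × E => ∫ s, f (q.1 + s • q.2) ∂μ)
      (∫ s, (fderiv ℝ f (p + s • v)).comp (.fst ℝ E E + s • .snd ℝ E E) ∂μ) (p, v) := by
  obtain ⟨bound, hbound, hle⟩ := exists_integrable_bound_fderiv_comp_line hf hfs μ p hv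
  have hcont (q : E × E) : Continuous fun s : ℝ => f (q.1 + s • q.2) :=
    hf.continuous.comp (by fun_prop)
  exact hasFDerivAt_integral_of_dominated_of_fderiv_le hle
    (.of_forall fun q => (hcont q).aestronglyMeasurable)
    ((hcont (p, v)).integrable_of_hasCompactSupport (hasCompactSupport_comp_line hfs p hv))
    (integrable_fderiv_comp_line hf hfs μ p hv).aestronglyMeasurable
    (.of_forall fun s q hq => hq s) hbound
    (.of_forall fun s q _ => hasFDerivAt_comp_line (hf.differentiable one_ne_zero) s q)

lemma hasDerivAt_integral_line {p v : ℝ → E} {p' v' : E} {t : ℝ}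
    (hp : HasDerivAt p p' t) (hv : HasDerivAt v v' t) (hv₀ : v t ≠ 0) :
    HasDerivAt (fun t => ∫ s, f (p t + s • v t) ∂μ)
      (∫ s, fderiv ℝ f (p t + s • v t) (p' + s • v') ∂μ) t := by
  have h := (hasFDerivAt_integral_line hf hfs μ (p t) hv₀).comp_hasDerivAt t (hp.prodMk hv)
  rwa [ContinuousLinearMap.integral_apply (integrable_fderiv_comp_line hf hfs μ (p t) hv₀)] at h

lemma integrable_smul_fderiv_comp_line (p : E) {v : E} (hv : v ≠ 0) {φ : ℝ → ℝ}
    (hφ : Continuous φ) (u : E) : Integrable (fun s => φ s • fderiv ℝ f (p + s • v) u) μ := by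
  refine Continuous.integrable_of_hasCompactSupport ?_ ?_
  · have := hf.continuous_fderiv one_ne_zero
    fun_prop
  · exact (hasCompactSupport_comp_line (hfs.fderiv_apply ℝ u) p hv).smul_left

omit μ [IsFiniteMeasureOnCompacts μ] in
lemma integral_Iic_fderiv_comp_line [CompleteSpace F] (p : E) {v : E} (hv : v ≠ 0) (r : ℝ) :
    ∫ s in Iic r, fderiv ℝ f (p + s • v) v = f (p + r • v) := by
  have hderiv (s : ℝ) : deriv (fun s : ℝ => f (p + s • v)) s = fderiv ℝ f (p + s • v) v := by
    have hline : HasDerivAt (fun s : ℝ => p + s • v) v s := by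
      simpa using ((hasDerivAt_id s).smul_const v).const_add p
    exact ((hf.differentiable one_ne_zero _).hasFDerivAt.comp_hasDerivAt s hline).deriv
  have hftc := (hasCompactSupport_comp_line hfs p hv).integral_Iic_deriv_eq
    (hf.comp (by fun_prop)) r
  simpa only [Function.comp_def, hderiv] using hftc

end MovingLine

lemma setIntegral_image_hausdorffMeasure_of_isometry {X F : Type*} [MetricSpace X]
    [MeasurableSpace X] [BorelSpace X] [NormedAddCommGroup F] [NormedSpace ℝ F] {γ : ℝ → X}
    (hγ : Isometry γ) (T : Set ℝ) (g : X → F) :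
    ∫ x in γ '' T, g x ∂(μH[(1 : ℝ)]) = ∫ s in T, g (γ s) := by
  rw [← Measure.restrict_restrict_of_subset (image_subset_range γ T),
    ← hγ.map_hausdorffMeasure (Or.inl zero_le_one),
    hγ.isClosedEmbedding.measurableEmbedding.setIntegral_map, hausdorffMeasure_real,
    hγ.injective.preimage_image]

section InnerProduct

variable {E : Type*} [NormedAddCommGroup E] [InnerProductSpace ℝ E]

lemma isometry_line_of_norm_eq_one (p : E) {m : E} (hm : ‖m‖ = 1) :
    Isometry fun s : ℝ => p + s • m :=
  .of_dist_eq fun s t => by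
    rw [dist_add_left, dist_eq_norm, ← sub_smul, norm_smul, hm, mul_one, dist_eq_norm]

lemma inner_eq_zero_of_hasDerivAt_of_norm_eq_one {m : ℝ → E} {m' : E} {t : ℝ}
    (hm : HasDerivAt m m' t) (hnorm : ∀ᶠ τ in 𝓝 t, ‖m τ‖ = 1) : ⟪m t, m'⟫ = 0 := by
  have hconst : (fun τ => ‖m τ‖ ^ 2) =ᶠ[𝓝 t] fun _ => 1 := by
    filter_upwards [hnorm] with τ hτ
    rw [hτ, one_pow]
  have h := hm.norm_sq.unique ((hasDerivAt_const t (1 : ℝ)).congr_of_eventuallyEq hconst)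
  linarith

lemma hasDerivAt_inner_add_smul {a b x' : E} {x : ℝ → E} (hx : HasDerivAt x x' 0) :
    HasDerivAt (fun t => ⟪a + t • b, x t⟫) (⟪a, x'⟫ + ⟪b, x 0⟫) 0 := by
  have hab : HasDerivAt (fun t : ℝ => a + t • b) b 0 := by
    simpa using ((hasDerivAt_id (0 : ℝ)).smul_const b).const_add a
  simpa using hab.inner ℝ hx

section Plane

variable [Fact (finrank ℝ E = 2)]

lemma eq_inner_smul_of_inner_eq_zero {a m x : E} (ha : a ≠ 0) (hm : ‖m‖ = 1) (ham : ⟪a, m⟫ = 0)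
    (hax : ⟪a, x⟫ = 0) : x = ⟪m, x⟫ • m := by
  have hfin : finrank ℝ (ℝ ∙ a)ᗮ = 1 :=
    haveI : Fact (finrank ℝ E = 1 + 1) := ‹_›
    Submodule.finrank_orthogonal_span_singleton ha
  let m₀ : (ℝ ∙ a)ᗮ := ⟨m, Submodule.mem_orthogonal_singleton_iff_inner_right.mpr ham⟩
  have hm₀ : m₀ ≠ 0 := fun h => by
    have : m = 0 := congrArg Subtype.val h
    simp [this] at hm
  obtain ⟨s, hs⟩ := exists_smul_eq_of_finrank_eq_one hfin hm₀
    ⟨x, Submodule.mem_orthogonal_singleton_iff_inner_right.mpr hax⟩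
  obtain rfl : s • m = x := congrArg Subtype.val hs
  rw [real_inner_smul_right, real_inner_self_eq_norm_sq, hm, one_pow, mul_one]

lemma eq_normal_add_tangential {a m : E} (ha : a ≠ 0) (hm : ‖m‖ = 1) (ham : ⟪a, m⟫ = 0) (x : E) :
    x = (⟪a, x⟫ / ‖a‖) • ‖a‖⁻¹ • a + ⟪m, x⟫ • m := by
  have ha' : ‖a‖ ≠ 0 := norm_ne_zero_iff.mpr ha
  have h := eq_inner_smul_of_inner_eq_zero (x := x - (⟪a, x⟫ / ‖a‖) • ‖a‖⁻¹ • a) ha hm ham (by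
    simp only [inner_sub_right, real_inner_smul_right, real_inner_self_eq_norm_sq]
    field_simp
    ring)
  rw [inner_sub_right, real_inner_smul_right, real_inner_smul_right, real_inner_comm a m,
    ham, mul_zero, mul_zero, sub_zero] at h
  exact sub_eq_iff_eq_add'.mp h

end Plane

/-- The part of the line `⟪a, x⟫ + c = 0` lying in the half-plane `⟪ν, x⟫ ≤ r`; this is the
segment `∂Ω ∩ K` cut out of one mesh element `K`. -/
def levelRay (ν : E) (r : ℝ) (a : E) (c : ℝ) : Set E :=
  {x | ⟪ν, x⟫ ≤ r ∧ ⟪a, x⟫ + c = 0}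

lemma setOf_perturbed_eq_levelRay (ν : E) (r : ℝ) (a b : E) (c d t : ℝ) :
    {x : E | ⟪ν, x⟫ ≤ r ∧ (⟪a, x⟫ + c) + t * (⟪b, x⟫ + d) = 0} =
      levelRay ν r (a + t • b) (c + t * d) := by
  ext x
  refine and_congr_right fun _ => ?_
  rw [inner_add_left, real_inner_smul_left]
  ring_nf

/-- `p` is the endpoint of `levelRay ν r a c` on the face `⟪ν, x⟫ = r`, and `m` is the unit
co-normal there: it is tangent to the ray and points out of the half-plane. -/
structure IsRayFrame (ν : E) (r : ℝ) (a : E) (c : ℝ) (p m : E) : Prop where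
  inner_endpoint : ⟪ν, p⟫ = r
  endpoint_mem_line : ⟪a, p⟫ + c = 0
  norm_conormal : ‖m‖ = 1
  inner_conormal : ⟪a, m⟫ = 0
  conormal_outward : 0 < ⟪ν, m⟫

namespace IsRayFrame

variable {ν a p m : E} {r c : ℝ}

lemma conormal_ne_zero (h : IsRayFrame ν r a c p m) : m ≠ 0 :=
  norm_ne_zero_iff.mp (by rw [h.norm_conormal]; exact one_ne_zero)

lemma levelRay_eq_image [Fact (finrank ℝ E = 2)] (h : IsRayFrame ν r a c p m) (ha : a ≠ 0) :
    levelRay ν r a c = (fun s : ℝ => p + s • m) '' Iic 0 := by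
  ext x
  constructor
  · rintro ⟨hν, hax⟩
    have hpx : x - p = ⟪m, x - p⟫ • m :=
      eq_inner_smul_of_inner_eq_zero ha h.norm_conormal h.inner_conormal
        (by linarith [inner_sub_right (𝕜 := ℝ) a x p, h.endpoint_mem_line])
    have hνs : ⟪ν, x - p⟫ ≤ 0 := by linarith [inner_sub_right (𝕜 := ℝ) ν x p, h.inner_endpoint]
    rw [hpx, real_inner_smul_right] at hνs
    exact ⟨⟪m, x - p⟫, nonpos_of_mul_nonpos_left hνs h.conormal_outward,
      (congrArg (p + ·) hpx).symm.trans (add_sub_cancel p x)⟩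
  · rintro ⟨s, hs, rfl⟩
    have hνs := mul_nonpos_of_nonpos_of_nonneg hs h.conormal_outward.le
    constructor
    · rw [inner_add_right, real_inner_smul_right, h.inner_endpoint]
      linarith
    · rw [inner_add_right, real_inner_smul_right, h.inner_conormal, mul_zero, add_zero,
        h.endpoint_mem_line]

lemma setIntegral_levelRay [Fact (finrank ℝ E = 2)] [MeasurableSpace E] [BorelSpace E]
    {F : Type*} [NormedAddCommGroup F] [NormedSpace ℝ F] (h : IsRayFrame ν r a c p m) (ha : a ≠ 0)
    (g : E → F) :
    ∫ x in levelRay ν r a c, g x ∂(μH[(1 : ℝ)]) = ∫ s in Iic (0 : ℝ), g (p + s • m) := by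
  rw [h.levelRay_eq_image ha, setIntegral_image_hausdorffMeasure_of_isometry
    (isometry_line_of_norm_eq_one p h.norm_conormal)]

end IsRayFrame

section Perturbation

variable {ν a b e : E} {r c d : ℝ}

/-- The motion `x - (t * ρ / ⟪a + t • b, e⟫) • e` of a point `x` along the direction `e`,
which lowers the value of `⟪a + t • b, ·⟫` by `t * ρ`. It is used both for the endpoint of a
perturbed ray and, before normalisation, for its co-normal. -/
noncomputable def slideAlong (a b e : E) (ρ : ℝ) (x : E) (t : ℝ) : E :=
  x - (t * ρ / ⟪a + t • b, e⟫) • e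

lemma slideAlong_zero (a b e : E) (ρ : ℝ) (x : E) : slideAlong a b e ρ x 0 = x := by
  simp [slideAlong]

lemma inner_slideAlong_of_inner_eq_zero (hνe : ⟪ν, e⟫ = 0) (ρ : ℝ) (x : E) (t : ℝ) :
    ⟪ν, slideAlong a b e ρ x t⟫ = ⟪ν, x⟫ := by
  rw [slideAlong, inner_sub_right, real_inner_smul_right, hνe, mul_zero, sub_zero]

lemma inner_slideAlong (ρ : ℝ) (x : E) {t : ℝ} (ht : ⟪a + t • b, e⟫ ≠ 0) :
    ⟪a + t • b, slideAlong a b e ρ x t⟫ = ⟪a + t • b, x⟫ - t * ρ := by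
  rw [slideAlong, inner_sub_right, real_inner_smul_right, div_mul_cancel₀ _ ht]

lemma hasDerivAt_slideAlong (hae : ⟪a, e⟫ ≠ 0) (ρ : ℝ) (x : E) :
    HasDerivAt (slideAlong a b e ρ x) (-(ρ / ⟪a, e⟫) • e) 0 := by
  have hnum : HasDerivAt (fun t : ℝ => t * ρ) ρ 0 := by
    simpa using (hasDerivAt_id (0 : ℝ)).mul_const ρ
  have hden := hasDerivAt_inner_add_smul (a := a) (b := b) (hasDerivAt_const (0 : ℝ) e)
  have hquot := hnum.div hden (by simpa using hae)
  refine ((hquot.smul_const e).const_sub x).congr_deriv ?_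
  simp only [zero_smul, add_zero, zero_mul, sub_zero, sq, mul_div_mul_right _ _ hae, neg_smul]

lemma eventually_inner_add_smul_ne_zero (b : E) (hae : ⟪a, e⟫ ≠ 0) :
    ∀ᶠ t : ℝ in 𝓝 0, ⟪a + t • b, e⟫ ≠ 0 :=
  (hasDerivAt_inner_add_smul (hasDerivAt_const (0 : ℝ) e)).continuousAt.eventually_ne
    (by simpa using hae)

namespace IsRayFrame

lemma exists_perturbed {p₀ m₀ : E} (h : IsRayFrame ν r a c p₀ m₀) (b : E) (d : ℝ)
    (hνe : ⟪ν, e⟫ = 0) (hae : ⟪a, e⟫ ≠ 0) :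
    ∃ (p m : ℝ → E) (m' : E), p 0 = p₀ ∧ m 0 = m₀ ∧
      HasDerivAt p (-((⟪b, p₀⟫ + d) / ⟪a, e⟫) • e) 0 ∧ HasDerivAt m m' 0 ∧
      ∀ᶠ t in 𝓝 0, IsRayFrame ν r (a + t • b) (c + t * d) (p t) (m t) := by
  set u : ℝ → E := slideAlong a b e ⟪b, m₀⟫ m₀
  have hu₀ : u 0 = m₀ := slideAlong_zero ..
  have hνu (t : ℝ) : ⟪ν, u t⟫ = ⟪ν, m₀⟫ := inner_slideAlong_of_inner_eq_zero hνe _ _ t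
  have hu (t : ℝ) : 0 < ‖u t‖ := norm_pos_iff.mpr fun hut =>
    h.conormal_outward.ne' (by rw [← hνu t, hut, inner_zero_right])
  have hdiff : DifferentiableAt ℝ u 0 := (hasDerivAt_slideAlong hae _ _).differentiableAt
  refine ⟨slideAlong a b e (⟪b, p₀⟫ + d) p₀, fun t => ‖u t‖⁻¹ • u t, _, slideAlong_zero ..,
    by simp only [hu₀, h.norm_conormal, inv_one, one_smul], hasDerivAt_slideAlong hae _ _,
    ((hdiff.norm ℝ (norm_pos_iff.mp (hu 0))).inv (hu 0).ne' |>.smul hdiff).hasDerivAt, ?_⟩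
  filter_upwards [eventually_inner_add_smul_ne_zero b hae] with t ht
  refine ⟨?_, ?_, norm_smul_inv_norm (norm_pos_iff.mp (hu t)), ?_, ?_⟩
  · rw [inner_slideAlong_of_inner_eq_zero hνe, h.inner_endpoint]
  · rw [inner_slideAlong _ _ ht, inner_add_left, real_inner_smul_left]
    linear_combination h.endpoint_mem_line
  · rw [real_inner_smul_right, inner_slideAlong _ _ ht, inner_add_left, real_inner_smul_left,
      h.inner_conormal]
    ring
  · rw [real_inner_smul_right, hνu]
    exact mul_pos (inv_pos.mpr (hu t)) h.conormal_outward

variable {p m : ℝ → E} {p' m' : E}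
  (h : ∀ᶠ t in 𝓝 0, IsRayFrame ν r (a + t • b) (c + t * d) (p t) (m t))
  (hp : HasDerivAt p p' 0) (hm : HasDerivAt m m' 0)

include h

lemma of_eventually : IsRayFrame ν r a c (p 0) (m 0) := by
  simpa using h.self_of_nhds

include hp in
lemma inner_deriv_endpoint : ⟪a, p'⟫ = -(⟪b, p 0⟫ + d) := by
  have hlin : HasDerivAt (fun t : ℝ => c + t * d) d 0 := by
    simpa using ((hasDerivAt_id (0 : ℝ)).mul_const d).const_add c
  have hzero := (hasDerivAt_const (0 : ℝ) (0 : ℝ)).congr_of_eventuallyEq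
    (h.mono fun t ht => ht.endpoint_mem_line)
  linarith [((hasDerivAt_inner_add_smul hp).add hlin).unique hzero]

include hm in
lemma inner_deriv_conormal : ⟪a, m'⟫ = -⟪b, m 0⟫ := by
  have hzero := (hasDerivAt_const (0 : ℝ) (0 : ℝ)).congr_of_eventuallyEq
    (h.mono fun t ht => ht.inner_conormal)
  linarith [(hasDerivAt_inner_add_smul hm).unique hzero]

variable [Fact (finrank ℝ E = 2)]

include hp hm in
lemma velocity_eq (ha : a ≠ 0) (s : ℝ) :
    p' + s • m' = -((⟪b, p 0 + s • m 0⟫ + d) / ‖a‖) • ‖a‖⁻¹ • a + ⟪m 0, p'⟫ • m 0 := by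
  have h₀ := of_eventually h
  have hnormal : ⟪a, p' + s • m'⟫ = -(⟪b, p 0 + s • m 0⟫ + d) := by
    simp only [inner_add_right, real_inner_smul_right, inner_deriv_endpoint h hp,
      inner_deriv_conormal h hm]
    ring
  have htangent : ⟪m 0, p' + s • m'⟫ = ⟪m 0, p'⟫ := by
    rw [inner_add_right, real_inner_smul_right, inner_eq_zero_of_hasDerivAt_of_norm_eq_one hm
      (h.mono fun t ht => ht.norm_conormal), mul_zero, add_zero]
  rw [eq_normal_add_tangential ha h₀.norm_conormal h₀.inner_conormal (p' + s • m'), hnormal,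
    htangent, neg_div]

variable [MeasurableSpace E] [BorelSpace E] {F : Type*} [NormedAddCommGroup F] [NormedSpace ℝ F]
  [CompleteSpace F] {f : E → F}

include hp hm in
lemma hasDerivAt_setIntegral_levelRay (ha : a ≠ 0) (hf : ContDiff ℝ 1 f)
    (hfs : HasCompactSupport f) :
    HasDerivAt (fun t => ∫ x in levelRay ν r (a + t • b) (c + t * d), f x ∂(μH[(1 : ℝ)]))
      (-(∫ x in levelRay ν r a c,
          ((⟪b, x⟫ + d) / ‖a‖) • fderiv ℝ f x (‖a‖⁻¹ • a) ∂(μH[(1 : ℝ)])) +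
        ⟪m 0, p'⟫ • f (p 0)) 0 := by
  have h₀ := of_eventually h
  have hm₀ := h₀.conormal_ne_zero
  have hne : ∀ᶠ t : ℝ in 𝓝 0, a + t • b ≠ 0 :=
    ContinuousAt.eventually_ne (by fun_prop) (by simpa using ha)
  have hparam : (fun t => ∫ x in levelRay ν r (a + t • b) (c + t * d), f x ∂(μH[(1 : ℝ)])) =ᶠ[𝓝 0]
      fun t => ∫ s in Iic (0 : ℝ), f (p t + s • m t) := by
    filter_upwards [h, hne] with t ht hat
    exact ht.setIntegral_levelRay hat f
  refine ((hasDerivAt_integral_line hf hfs _ hp hm hm₀).congr_of_eventuallyEq hparam).congr_deriv ?_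
  have hw : Continuous fun s : ℝ => -((⟪b, p 0 + s • m 0⟫ + d) / ‖a‖) := by fun_prop
  simp only [velocity_eq h hp hm ha, map_add, map_smul _ _ (‖a‖⁻¹ • a), map_smul _ _ (m 0)]
  rw [integral_add (integrable_smul_fderiv_comp_line hf hfs _ _ hm₀ hw _)
      (integrable_smul_fderiv_comp_line hf hfs _ _ hm₀ continuous_const _),
    integral_smul, integral_Iic_fderiv_comp_line hf hfs _ hm₀, zero_smul, add_zero,
    h₀.setIntegral_levelRay ha]
  simp only [neg_smul, integral_neg]

end IsRayFrame

end Perturbation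

variable [Fact (finrank ℝ E = 2)] [MeasurableSpace E] [BorelSpace E]

theorem hasDerivAt_setIntegral_perturbed_line {F : Type*} [NormedAddCommGroup F] [NormedSpace ℝ F]
    [CompleteSpace F] {ν a p m e : E} {r c : ℝ} (h : IsRayFrame ν r a c p m) (hνe : ⟪ν, e⟫ = 0)
    (hae : ⟪a, e⟫ ≠ 0) (b : E) (d : ℝ) {f : E → F} (hf : ContDiff ℝ 1 f)
    (hfs : HasCompactSupport f) :
    HasDerivAt
      (fun t : ℝ => ∫ x in {x | ⟪ν, x⟫ ≤ r ∧ (⟪a, x⟫ + c) + t * (⟪b, x⟫ + d) = 0},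
        f x ∂(μH[(1 : ℝ)]))
      (-(∫ x in {x | ⟪ν, x⟫ ≤ r ∧ ⟪a, x⟫ + c = 0},
          ((⟪b, x⟫ + d) / ‖a‖) • fderiv ℝ f x (‖a‖⁻¹ • a) ∂(μH[(1 : ℝ)])) -
        (⟪e, m⟫ * ((⟪b, p⟫ + d) / ⟪a, e⟫)) • f p) 0 := by
  have ha : a ≠ 0 := fun h₀ => hae (by rw [h₀, inner_zero_left])
  obtain ⟨q, n, n', rfl, rfl, hq, hn, hframe⟩ := h.exists_perturbed b d hνe hae
  simp only [setOf_perturbed_eq_levelRay]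
  refine (IsRayFrame.hasDerivAt_setIntegral_levelRay hframe hq hn ha hf hfs).congr_deriv ?_
  rw [real_inner_smul_right, real_inner_comm e (n 0), neg_mul, neg_smul, ← sub_eq_add_neg,
    mul_comm ⟪e, _⟫]
  rfl

lemma sign_mul_div_abs (x y : ℝ) : x.sign * (y / |x|) = y / x := by
  rcases lt_trichotomy x 0 with hx | rfl | hx
  · rw [Real.sign_of_neg hx, abs_of_neg hx, div_neg, neg_one_mul, neg_neg]
  · simp
  · rw [Real.sign_of_pos hx, abs_of_pos hx, one_mul]

-- `e` may have any length, since `sign ⟪a₁, e⟫ • e / |⟪a₁, e⟫|` is invariant under scaling of `e`.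
theorem stmt_15_general [CompleteSpace E] (ν e : E) (r : ℝ) (hνe : ⟪ν, e⟫ = 0)
    (a₁ a₂ b₁ b₂ : E) (c₁ c₂ d₁ d₂ : ℝ)
    (hφL : ∀ x : E, ⟪ν, x⟫ = r → ⟪a₁, x⟫ + c₁ = ⟪a₂, x⟫ + c₂)
    (hwL : ∀ x : E, ⟪ν, x⟫ = r → ⟪b₁, x⟫ + d₁ = ⟪b₂, x⟫ + d₂)
    (hα0 : ⟪a₁, e⟫ ≠ 0) (p : E) (hpL : ⟪ν, p⟫ = r) (hpφ : ⟪a₁, p⟫ + c₁ = 0)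
    (m₁ m₂ : E)
    (hm₁ : ‖m₁‖ = 1 ∧ ⟪a₁, m₁⟫ = 0 ∧ 0 < ⟪ν, m₁⟫)
    (hm₂ : ‖m₂‖ = 1 ∧ ⟪a₂, m₂⟫ = 0 ∧ ⟪ν, m₂⟫ < 0)
    (f₁ f₂ : E → ℝ)
    (hf₁ : ContDiff ℝ 1 f₁) (hf₁s : HasCompactSupport f₁)
    (hf₂ : ContDiff ℝ 1 f₂) (hf₂s : HasCompactSupport f₂) :
    HasDerivAt
      (fun t : ℝ =>
        (∫ x in {x : E | ⟪ν, x⟫ ≤ r ∧ (⟪a₁, x⟫ + c₁) + t * (⟪b₁, x⟫ + d₁) = 0},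
            f₁ x ∂(μH[(1 : ℝ)])) +
          ∫ x in {x : E | r ≤ ⟪ν, x⟫ ∧ (⟪a₂, x⟫ + c₂) + t * (⟪b₂, x⟫ + d₂) = 0},
            f₂ x ∂(μH[(1 : ℝ)]))
      (-(∫ x in {x : E | ⟪ν, x⟫ ≤ r ∧ ⟪a₁, x⟫ + c₁ = 0},
            ⟪gradient f₁ x, ‖a₁‖⁻¹ • a₁⟫ * ((⟪b₁, x⟫ + d₁) / ‖a₁‖) ∂(μH[(1 : ℝ)]))
        - (∫ x in {x : E | r ≤ ⟪ν, x⟫ ∧ ⟪a₂, x⟫ + c₂ = 0},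
            ⟪gradient f₂ x, ‖a₂‖⁻¹ • a₂⟫ * ((⟪b₂, x⟫ + d₂) / ‖a₂‖) ∂(μH[(1 : ℝ)]))
        - ⟪(Real.sign ⟪a₁, e⟫) • e, f₁ p • m₁ + f₂ p • m₂⟫ *
            ((⟪b₁, p⟫ + d₁) / |⟪a₁, e⟫|))
      0 := by
  have hpφ₂ : ⟪a₂, p⟫ + c₂ = 0 := (hφL p hpL).symm.trans hpφ
  have hα : ⟪a₁, e⟫ = ⟪a₂, e⟫ := by
    have hpe := hφL (p + e) (by rw [inner_add_right, hpL, hνe, add_zero])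
    rw [inner_add_right, inner_add_right] at hpe
    linarith
  have frame₁ : IsRayFrame ν r a₁ c₁ p m₁ := ⟨hpL, hpφ, hm₁.1, hm₁.2.1, hm₁.2.2⟩
  have frame₂ : IsRayFrame (-ν) (-r) a₂ c₂ p m₂ :=
    ⟨by rw [inner_neg_left, hpL], hpφ₂, hm₂.1, hm₂.2.1,
      (inner_neg_left (𝕜 := ℝ) ν m₂).symm ▸ neg_pos.mpr hm₂.2.2⟩
  have hderiv₁ := hasDerivAt_setIntegral_perturbed_line frame₁ hνe hα0 b₁ d₁ hf₁ hf₁s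
  have hderiv₂ := hasDerivAt_setIntegral_perturbed_line frame₂
    (by rw [inner_neg_left, hνe, neg_zero]) (hα ▸ hα0) b₂ d₂ hf₂ hf₂s
  simp only [inner_neg_left, neg_le_neg_iff] at hderiv₂
  refine (hderiv₁.add hderiv₂).congr_deriv ?_
  simp only [inner_gradient_left, smul_eq_mul, mul_comm (fderiv ℝ _ _ _)]
  rw [← hα, ← hwL p hpL, ← sign_mul_div_abs, real_inner_smul_left, inner_add_right,
    real_inner_smul_right, real_inner_smul_right]
  ring

end InnerProduct

/-- Two-element planar instance of Theorem 5.2/6.11 (formula (5.16)): the plane is split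
by the mesh face `L = {x₁ = 0}` into `K₁ = {x₁ ≤ 0}`, `K₂ = {x₁ ≥ 0}`; the level-set
function equals the affine `φᵢ(x) = ⟨aᵢ,x⟩ + cᵢ` on `Kᵢ` and the weight equals
`wᵢ(x) = ⟨bᵢ,x⟩ + eᵢ` on `Kᵢ`, continuous across `L`. The derivative at `t = 0` of the
surface integral `J₂(t)` consists of the normal-derivative terms
`-∫ ⟨∇fᵢ, nᵢ⟩ wᵢ/‖aᵢ‖` and the jump term `-⟨n^S, f₁(p)m₁ + f₂(p)m₂⟩ w(p)/|α|` at the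
crossing point `p = ∂Ω ∩ L`. -/
theorem stmt_15
    (a₁ a₂ b₁ b₂ : EuclideanSpace ℝ (Fin 2)) (c₁ c₂ ce₁ ce₂ : ℝ)
    (hφL : ∀ x : EuclideanSpace ℝ (Fin 2), x 0 = 0 → ⟪a₁, x⟫ + c₁ = ⟪a₂, x⟫ + c₂)
    (hwL : ∀ x : EuclideanSpace ℝ (Fin 2), x 0 = 0 → ⟪b₁, x⟫ + ce₁ = ⟪b₂, x⟫ + ce₂)
    (ha₁ : a₁ ≠ 0) (ha₂ : a₂ ≠ 0)
    (hα : ⟪a₁, EuclideanSpace.single 1 (1:ℝ)⟫ = ⟪a₂, EuclideanSpace.single 1 (1:ℝ)⟫)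
    (hα0 : ⟪a₁, EuclideanSpace.single 1 (1:ℝ)⟫ ≠ 0)
    (p : EuclideanSpace ℝ (Fin 2)) (hpL : p 0 = 0) (hpφ : ⟪a₁, p⟫ + c₁ = 0)
    (m₁ m₂ : EuclideanSpace ℝ (Fin 2))
    (hm₁ : ‖m₁‖ = 1 ∧ ⟪a₁, m₁⟫ = 0 ∧ 0 < m₁ 0)
    (hm₂ : ‖m₂‖ = 1 ∧ ⟪a₂, m₂⟫ = 0 ∧ m₂ 0 < 0)
    (f₁ f₂ : EuclideanSpace ℝ (Fin 2) → ℝ)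
    (hf₁ : ContDiff ℝ 1 f₁) (hf₁s : HasCompactSupport f₁)
    (hf₂ : ContDiff ℝ 1 f₂) (hf₂s : HasCompactSupport f₂) :
    HasDerivAt
      (fun t : ℝ =>
        (∫ x in {x : EuclideanSpace ℝ (Fin 2) |
              x 0 ≤ 0 ∧ (⟪a₁, x⟫ + c₁) + t * (⟪b₁, x⟫ + ce₁) = 0},
            f₁ x ∂(μH[(1 : ℝ)])) +
          ∫ x in {x : EuclideanSpace ℝ (Fin 2) |
              0 ≤ x 0 ∧ (⟪a₂, x⟫ + c₂) + t * (⟪b₂, x⟫ + ce₂) = 0},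
            f₂ x ∂(μH[(1 : ℝ)]))
      (-(∫ x in {x : EuclideanSpace ℝ (Fin 2) | x 0 ≤ 0 ∧ ⟪a₁, x⟫ + c₁ = 0},
            ⟪gradient f₁ x, ‖a₁‖⁻¹ • a₁⟫ * ((⟪b₁, x⟫ + ce₁) / ‖a₁‖) ∂(μH[(1 : ℝ)]))
        - (∫ x in {x : EuclideanSpace ℝ (Fin 2) | 0 ≤ x 0 ∧ ⟪a₂, x⟫ + c₂ = 0},
            ⟪gradient f₂ x, ‖a₂‖⁻¹ • a₂⟫ * ((⟪b₂, x⟫ + ce₂) / ‖a₂‖) ∂(μH[(1 : ℝ)]))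
        - ⟪(Real.sign ⟪a₁, EuclideanSpace.single 1 (1:ℝ)⟫) •
              EuclideanSpace.single 1 (1:ℝ),
            f₁ p • m₁ + f₂ p • m₂⟫ *
            ((⟪b₁, p⟫ + ce₁) / |⟪a₁, EuclideanSpace.single 1 (1:ℝ)⟫|))
      0 := by
  have hν (x : EuclideanSpace ℝ (Fin 2)) : ⟪EuclideanSpace.single 0 (1 : ℝ), x⟫ = x 0 := by
    simp [EuclideanSpace.inner_single_left]
  have : Fact (finrank ℝ (EuclideanSpace ℝ (Fin 2)) = 2) := ⟨finrank_euclideanSpace_fin⟩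
  have hνe : ⟪EuclideanSpace.single 0 (1 : ℝ), EuclideanSpace.single (1 : Fin 2) (1 : ℝ)⟫ = 0 :=
    (hν _).trans (by simp)
  simp only [← hν] at hφL hwL hpL hm₁ hm₂ ⊢
  exact stmt_15_general _ _ 0 hνe a₁ a₂ b₁ b₂ c₁ c₂ ce₁ ce₂ hφL hwL hα0 p hpL hpφ m₁ m₂ hm₁ hm₂
    f₁ f₂ hf₁ hf₁s hf₂ hf₂s
end
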